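/- Let d ≥ 2, let Ω ⊂ ℝ^d be a bounded Lipschitz domain, let 1 < p < ∞ and 1/p + 1/q = 1. Suppose that for each x ∈ Ω there exists a function W^x, biharmonic in Ω, with (∇²W^x)* ∈ L^p(∂Ω, σ) and with D^α W^x = D^α Γ^x nontangentially σ-a.e. on ∂Ω for every |α| ≤ 1 (i.e., a solution of the L^p regularity problem with boundary data D^α Γ^x). Then any solution of the L^q Dirichlet problem is unique: if u is biharmonic in Ω, (∇u)* ∈ L^q(∂Ω, σ), and u and ∇u have nontangential limit 0 σ-a.e. on ∂Ω, then u ≡ 0 in Ω. -/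

import Mathlib

open MeasureTheory Metric Filter Set
open scoped ENNReal NNReal Topology RealInnerProductSpace

noncomputable section

/-- Euclidean space `ℝ^d`. -/
abbrev Euc (d : ℕ) := EuclideanSpace ℝ (Fin d)

variable {d : ℕ}

/-- The partial derivative `D_i u` in the `i`-th coordinate direction. -/
def pder (i : Fin d) (u : Euc d → ℝ) : Euc d → ℝ :=
  fun x => fderiv ℝ u x (EuclideanSpace.single i 1)

/-- The Laplacian `Δu = ∑ i, D_i D_i u`. -/
def lap (u : Euc d → ℝ) : Euc d → ℝ := fun x => ∑ i, pder i (pder i u) x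

/-- The bilaplacian `Δ²u`. -/
def bilap (u : Euc d → ℝ) : Euc d → ℝ := lap (lap u)

/-- `u` is biharmonic in the open set `Ω` : it is smooth there and `Δ²u = 0`. -/
def Biharmonic (Ω : Set (Euc d)) (u : Euc d → ℝ) : Prop :=
  ContDiffOn ℝ (⊤ : ℕ∞) u Ω ∧ ∀ x ∈ Ω, bilap u x = 0

/-- `|∇u|`. -/
def gnorm1 (u : Euc d → ℝ) : Euc d → ℝ :=
  fun x => Real.sqrt (∑ i, (pder i u x) ^ 2)

/-- `|∇²u|`. -/
def gnorm2 (u : Euc d → ℝ) : Euc d → ℝ :=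
  fun x => Real.sqrt (∑ i, ∑ j, (pder i (pder j u) x) ^ 2)

/-- `|∇³u|`. -/
def gnorm3 (u : Euc d → ℝ) : Euc d → ℝ :=
  fun x => Real.sqrt (∑ i, ∑ j, ∑ k, (pder i (pder j (pder k u)) x) ^ 2)

/-- The last ("vertical") coordinate `x_d` of a point of `ℝ^d`. -/
def vertCoord (d : ℕ) (x : Euc d) : ℝ :=
  if h : 0 < d then x ⟨d - 1, Nat.sub_lt h one_pos⟩ else 0

/-- The vertical unit vector `e_d`. -/
def vertDir (d : ℕ) : Euc d :=
  if h : 0 < d then EuclideanSpace.single ⟨d - 1, Nat.sub_lt h one_pos⟩ 1 else 0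

/-- The horizontal coordinates `x′` of a point of `ℝ^d`. -/
def graphCoord (d : ℕ) (x : Euc d) : Euc (d - 1) :=
  WithLp.toLp 2 fun i => x (Fin.castLE (Nat.sub_le d 1) i)

/-- The partial derivative `D_d u` in the vertical direction. -/
def pdLast (u : Euc d → ℝ) : Euc d → ℝ := fun x => fderiv ℝ u x (vertDir d)

/-- A bounded Lipschitz domain: a bounded connected open set whose boundary is covered by
finitely many open sets, in each of which, after a rigid motion, the boundary is the graph of
a Lipschitz function and the domain lies above the graph. -/
def IsLipschitzDomain (Ω : Set (Euc d)) : Prop :=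
  IsOpen Ω ∧ Bornology.IsBounded Ω ∧ IsConnected Ω ∧
  ∃ (N : ℕ) (U : Fin N → Set (Euc d)),
    (∀ i, IsOpen (U i)) ∧ (frontier Ω ⊆ ⋃ i, U i) ∧
    ∀ i, ∃ (R : Euc d ≃ᵢ Euc d) (M : ℝ≥0) (η : Euc (d - 1) → ℝ),
      LipschitzWith M η ∧
      U i ∩ Ω = U i ∩ (R ⁻¹' {x | η (graphCoord d x) < vertCoord d x}) ∧
      U i ∩ frontier Ω = U i ∩ (R ⁻¹' {x | vertCoord d x = η (graphCoord d x)})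

/-- The nontangential approach cone (aperture 1) with vertex `Q ∈ ∂Ω`. -/
def ntCone (Ω : Set (Euc d)) (Q : Euc d) : Set (Euc d) :=
  {x | x ∈ Ω ∧ dist x Q < 2 * Metric.infDist x (frontier Ω)}

/-- The nontangential maximal function `(w)*`. -/
def ntMax (Ω : Set (Euc d)) (w : Euc d → ℝ) (Q : Euc d) : ℝ≥0∞ :=
  ⨆ x ∈ ntCone Ω Q, (‖w x‖₊ : ℝ≥0∞)

/-- `w` has nontangential limit `L` at the boundary point `Q`. -/
def NTLim (Ω : Set (Euc d)) (w : Euc d → ℝ) (Q : Euc d) (L : ℝ) : Prop :=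
  Filter.Tendsto w (nhdsWithin Q (ntCone Ω Q)) (nhds L)

/-- The surface measure on `∂Ω`: the `(d-1)`-dimensional Hausdorff measure restricted
to the boundary. -/
def sMeasure (Ω : Set (Euc d)) : Measure (Euc d) :=
  (μH[(d : ℝ) - 1]).restrict (frontier Ω)

/-- The `L^p(∂Ω)` norm of the nontangential maximal function of `w`. -/
def ntMaxLp (Ω : Set (Euc d)) (w : Euc d → ℝ) (p : ℝ) : ℝ≥0∞ :=
  (∫⁻ Q, (ntMax Ω w Q) ^ p ∂(sMeasure Ω)) ^ (1 / p)

/-- The `L^p(∂Ω, σ)` norm of a function. -/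
def bLp (Ω : Set (Euc d)) (f : Euc d → ℝ) (p : ℝ) : ℝ≥0∞ :=
  eLpNorm f (ENNReal.ofReal p) (sMeasure Ω)

/-- A test function: smooth with compact support in `ℝ^d`. -/
def TestFun (f : Euc d → ℝ) : Prop := ContDiff ℝ (⊤ : ℕ∞) f ∧ HasCompactSupport f

/-- `u` has boundary data `(D^α f)_{|α| ≤ 1}` in the sense of nontangential convergence
`σ`-a.e. on `∂Ω`. -/
def HasBVals1 (Ω : Set (Euc d)) (u f : Euc d → ℝ) : Prop :=
  ∀ᵐ Q ∂(sMeasure Ω), NTLim Ω u Q (f Q) ∧ ∀ i, NTLim Ω (pder i u) Q (pder i f Q)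

/-- `n` is the (σ-a.e. defined) outward unit normal of `Ω`, characterized by the
Gauss–Green formula. -/
def IsOutwardNormal (Ω : Set (Euc d)) (n : Euc d → Euc d) : Prop :=
  (∀ᵐ Q ∂(sMeasure Ω), ‖n Q‖ = 1) ∧
  ∀ φ : Euc d → Euc d, ContDiff ℝ (⊤ : ℕ∞) φ → HasCompactSupport φ →
    ∫ x in Ω, (∑ i, pder i (fun y => φ y i) x) = ∫ Q, (inner ℝ (φ Q) (n Q) : ℝ) ∂(sMeasure Ω)

/-- `|∇_t h|`, the norm of the tangential gradient `∇h − (∇h·n)n` of `h` on `∂Ω`. -/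
def tgradNorm (n : Euc d → Euc d) (h : Euc d → ℝ) (Q : Euc d) : ℝ :=
  Real.sqrt (∑ i, (pder i h Q - (∑ j, n Q j * pder j h Q) * n Q i) ^ 2)

/-- `|∇_t ∇f|`, the norm of the tangential gradient of the full gradient of `f`. -/
def tgrad2Norm (n : Euc d → Euc d) (f : Euc d → ℝ) (Q : Euc d) : ℝ :=
  Real.sqrt (∑ k, (tgradNorm n (pder k f) Q) ^ 2)

/-- Unique solvability of the `L^q` Dirichlet problem `(D)_q` for `Δ²u = 0` in `Ω`:
existence, with uniform estimate, of solutions with Whitney-array boundary data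
`(D^α f)_{|α|≤1}`, together with uniqueness. -/
def DirichletSolvable (Ω : Set (Euc d)) (q : ℝ) : Prop :=
  (∃ C : ℝ≥0, ∀ f : Euc d → ℝ, TestFun f →
    ∃ u : Euc d → ℝ, Biharmonic Ω u ∧ ntMaxLp Ω (gnorm1 u) q < ⊤ ∧ HasBVals1 Ω u f ∧
      ntMaxLp Ω (gnorm1 u) q + ntMaxLp Ω u q ≤
        C * (bLp Ω f q + ∑ i : Fin d, bLp Ω (pder i f) q)) ∧
  (∀ u : Euc d → ℝ, Biharmonic Ω u → ntMaxLp Ω (gnorm1 u) q < ⊤ →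
    HasBVals1 Ω u (fun _ => 0) → ∀ x ∈ Ω, u x = 0)

/-- Unique solvability of the `L^p` regularity problem `(R)_p` for `Δ²u = 0` in `Ω`:
existence, with uniform estimate, of solutions with Whitney-array boundary data
`(D^α g)_{|α|≤2}`, together with uniqueness. -/
def RegularitySolvable (Ω : Set (Euc d)) (p : ℝ) : Prop :=
  (∃ (n : Euc d → Euc d) (C : ℝ≥0), IsOutwardNormal Ω n ∧
    ∀ g : Euc d → ℝ, TestFun g →
    ∃ u : Euc d → ℝ, Biharmonic Ω u ∧ ntMaxLp Ω (gnorm2 u) p < ⊤ ∧ HasBVals1 Ω u g ∧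
      ntMaxLp Ω (gnorm2 u) p ≤
        C * ((∑ i : Fin d, bLp Ω (tgradNorm n (pder i g)) p) + bLp Ω g p +
          ∑ i : Fin d, bLp Ω (pder i g) p)) ∧
  (∀ u : Euc d → ℝ, Biharmonic Ω u → ntMaxLp Ω (gnorm2 u) p < ⊤ →
    HasBVals1 Ω u (fun _ => 0) → ∀ x ∈ Ω, u x = 0)

/-- `u` is the solution of the `L²` regularity problem in `Ω` with boundary data
`(D^α f)_{|α|≤1}`. -/
def IsL2Sol (Ω : Set (Euc d)) (f u : Euc d → ℝ) : Prop :=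
  Biharmonic Ω u ∧ ntMaxLp Ω (gnorm2 u) 2 < ⊤ ∧ HasBVals1 Ω u f

open Classical in
/-- The solution of the `L²` regularity problem with data `f` (junk value if none exists). -/
def L2Sol (Ω : Set (Euc d)) (f : Euc d → ℝ) : Euc d → ℝ :=
  if h : ∃ u, IsL2Sol Ω f u then h.choose else 0

/-- The bilinear form `Λ[f,g] = −∫_Ω Δu·Δv`, where `u, v` solve the `L²` regularity
problem with data `f, g`. -/
def biForm (Ω : Set (Euc d)) (f g : Euc d → ℝ) : ℝ :=
  - ∫ x in Ω, lap (L2Sol Ω f) x * lap (L2Sol Ω g) x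

/-- The bilinear estimate `|Λ[f,g]| ≤ C (‖∇_t∇f‖_p + ‖∇f‖_p + ‖f‖_p)(‖∇g‖_q + ‖g‖_q)`
for all test functions `f, g`. -/
def BilinearEstimate (Ω : Set (Euc d)) (p q : ℝ) : Prop :=
  ∃ (n : Euc d → Euc d) (C : ℝ≥0), IsOutwardNormal Ω n ∧
    ∀ f g : Euc d → ℝ, TestFun f → TestFun g →
      (‖biForm Ω f g‖₊ : ℝ≥0∞) ≤
        C * (bLp Ω (tgrad2Norm n f) p + bLp Ω (gnorm1 f) p + bLp Ω f p) *
          (bLp Ω (gnorm1 g) q + bLp Ω g q)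

/-- The fundamental solution of `Δ²` in `ℝ^d` with pole at the origin (with a dimensional
normalizing constant `c ≠ 0`). -/
def fundSol (d : ℕ) (c : ℝ) (x : Euc d) : ℝ :=
  if d = 2 ∨ d = 4 then c * ‖x‖ ^ ((4 : ℝ) - d) * Real.log ‖x‖
  else c * ‖x‖ ^ ((4 : ℝ) - d)

/-! ### Calculus of partial derivatives -/

theorem contDiff_pder {f : Euc d → ℝ} (hf : ContDiff ℝ (⊤ : ℕ∞) f) (i : Fin d) :
    ContDiff ℝ (⊤ : ℕ∞) (pder i f) :=
  (hf.fderiv_right (m := (⊤ : ℕ∞)) (by simp)).clm_apply contDiff_const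

theorem contDiffOn_pder {Ω : Set (Euc d)} (hΩ : IsOpen Ω) {f : Euc d → ℝ}
    (hf : ContDiffOn ℝ (⊤ : ℕ∞) f Ω) (i : Fin d) : ContDiffOn ℝ (⊤ : ℕ∞) (pder i f) Ω :=
  (hf.fderiv_of_isOpen hΩ (m := (⊤ : ℕ∞)) (by simp)).clm_apply contDiffOn_const

theorem differentiable_of_smooth {f : Euc d → ℝ} (hf : ContDiff ℝ (⊤ : ℕ∞) f) :
    Differentiable ℝ f := hf.differentiable (by simp)

theorem contDiff_lap {f : Euc d → ℝ} (hf : ContDiff ℝ (⊤ : ℕ∞) f) :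
    ContDiff ℝ (⊤ : ℕ∞) (lap f) :=
  ContDiff.sum fun i _ => contDiff_pder (contDiff_pder hf i) i

theorem hasCompactSupport_pder {f : Euc d → ℝ} (hf : HasCompactSupport f) (i : Fin d) :
    HasCompactSupport (pder i f) :=
  hf.fderiv_apply ℝ _

theorem Filter.EventuallyEq.pder {f g : Euc d → ℝ} {x : Euc d} (h : f =ᶠ[𝓝 x] g) (i : Fin d) :
    pder i f =ᶠ[𝓝 x] pder i g := by
  filter_upwards [h.fderiv (𝕜 := ℝ)] with y hy
  simp only [_root_.pder, hy]

theorem Filter.EventuallyEq.lap {f g : Euc d → ℝ} {x : Euc d} (h : f =ᶠ[𝓝 x] g) :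
    lap f =ᶠ[𝓝 x] lap g := by
  have : ∀ᶠ y in 𝓝 x, ∀ i, _root_.pder i (_root_.pder i f) y = _root_.pder i (_root_.pder i g) y :=
    eventually_all.2 fun i => (h.pder i).pder i
  filter_upwards [this] with y hy
  simp only [_root_.lap, hy]

theorem Filter.EventuallyEq.bilap {f g : Euc d → ℝ} {x : Euc d} (h : f =ᶠ[𝓝 x] g) :
    bilap f =ᶠ[𝓝 x] bilap g := h.lap.lap

theorem pder_const (i : Fin d) (a : ℝ) : pder i (fun _ => a) = fun _ => 0 := by
  funext x; simp [pder]

theorem lap_const (a : ℝ) : lap (fun _ : Euc d => a) = fun _ => 0 := by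
  funext x; simp [lap, pder_const]

theorem pder_mul {f g : Euc d → ℝ} {x : Euc d} (hf : DifferentiableAt ℝ f x)
    (hg : DifferentiableAt ℝ g x) (i : Fin d) :
    pder i (fun y => f y * g y) x = pder i f x * g x + f x * pder i g x := by
  simp only [pder]
  rw [fderiv_fun_mul hf hg]
  simp only [add_apply, smul_apply, smul_eq_mul]
  ring

theorem pder_add {f g : Euc d → ℝ} {x : Euc d} (hf : DifferentiableAt ℝ f x)
    (hg : DifferentiableAt ℝ g x) (i : Fin d) :
    pder i (fun y => f y + g y) x = pder i f x + pder i g x := by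
  simp only [pder]
  rw [fderiv_fun_add hf hg]; rfl

theorem pder_sub {f g : Euc d → ℝ} {x : Euc d} (hf : DifferentiableAt ℝ f x)
    (hg : DifferentiableAt ℝ g x) (i : Fin d) :
    pder i (fun y => f y - g y) x = pder i f x - pder i g x := by
  simp only [pder]
  rw [fderiv_fun_sub hf hg]; rfl

theorem pder_const_mul {f : Euc d → ℝ} {x : Euc d} (hf : DifferentiableAt ℝ f x) (a : ℝ)
    (i : Fin d) : pder i (fun y => a * f y) x = a * pder i f x := by
  rw [pder_mul (differentiableAt_const a) hf, pder_const]; simp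

theorem pder_sum {ι : Type*} (s : Finset ι) {f : ι → Euc d → ℝ} {x : Euc d}
    (hf : ∀ j ∈ s, DifferentiableAt ℝ (f j) x) (i : Fin d) :
    pder i (fun y => ∑ j ∈ s, f j y) x = ∑ j ∈ s, pder i (f j) x := by
  simp only [pder]
  rw [fderiv_fun_sum hf]; simp

theorem lap_mul {f g : Euc d → ℝ} (hf : ContDiff ℝ (⊤ : ℕ∞) f) (hg : ContDiff ℝ (⊤ : ℕ∞) g)
    (x : Euc d) : lap (fun y => f y * g y) x =
      lap f x * g x + 2 * ∑ i, pder i f x * pder i g x + f x * lap g x := by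
  have h1 : ∀ i, pder i (fun y => f y * g y) = fun y => pder i f y * g y + f y * pder i g y :=
    fun i => funext fun y => pder_mul (differentiable_of_smooth hf y)
      (differentiable_of_smooth hg y) i
  have h2 : ∀ i, pder i (pder i (fun y => f y * g y)) x =
      pder i (pder i f) x * g x + 2 * (pder i f x * pder i g x) + f x * pder i (pder i g) x := by
    intro i
    have hf' := differentiable_of_smooth (contDiff_pder hf i) x
    have hg' := differentiable_of_smooth (contDiff_pder hg i) x
    have hfx := differentiable_of_smooth hf x
    have hgx := differentiable_of_smooth hg x
    rw [h1, pder_add (hf'.fun_mul hgx) (hfx.fun_mul hg'), pder_mul hf' hgx, pder_mul hfx hg']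
    ring
  simp only [lap, h2, Finset.sum_add_distrib, Finset.mul_sum, Finset.sum_mul]

theorem integrable_of_smooth {f : Euc d → ℝ} (hf : ContDiff ℝ (⊤ : ℕ∞) f)
    (h : HasCompactSupport f) : Integrable f :=
  hf.continuous.integrable_of_hasCompactSupport h

/-- Integration by parts, one factor being compactly supported. -/
theorem integral_mul_pder {f g : Euc d → ℝ} (hf : ContDiff ℝ (⊤ : ℕ∞) f)
    (hg : ContDiff ℝ (⊤ : ℕ∞) g) (hcg : HasCompactSupport g) (i : Fin d) :
    ∫ x, f x * pder i g x = - ∫ x, pder i f x * g x := by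
  refine integral_mul_fderiv_eq_neg_fderiv_mul_of_integrable ?_ ?_ ?_ ?_ ?_
  · exact integrable_of_smooth ((contDiff_pder hf i).mul hg) hcg.mul_left
  · exact integrable_of_smooth (hf.mul (contDiff_pder hg i))
      (hasCompactSupport_pder hcg i).mul_left
  · exact integrable_of_smooth (hf.mul hg) hcg.mul_left
  · exact fun x _ => differentiable_of_smooth hf x
  · exact fun x _ => differentiable_of_smooth hg x

theorem hasCompactSupport_lap {f : Euc d → ℝ} (hf : HasCompactSupport f) :
    HasCompactSupport (lap f) := by
  refine HasCompactSupport.of_support_subset_isCompact hf ?_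
  intro x hx
  by_contra hxf
  apply hx
  have : f =ᶠ[𝓝 x] fun _ => 0 := notMem_tsupport_iff_eventuallyEq.1 hxf
  rw [this.lap.eq_of_nhds, lap_const]

/-- Green's first identity. -/
theorem integral_mul_lap_eq_neg {f g : Euc d → ℝ} (hf : ContDiff ℝ (⊤ : ℕ∞) f)
    (hg : ContDiff ℝ (⊤ : ℕ∞) g) (hcg : HasCompactSupport g) :
    ∫ x, f x * lap g x = - ∫ x, ∑ i, pder i f x * pder i g x := by
  have hI : ∀ i, Integrable (fun x => f x * pder i (pder i g) x) := fun i =>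
    integrable_of_smooth (hf.mul (contDiff_pder (contDiff_pder hg i) i))
      (hasCompactSupport_pder (hasCompactSupport_pder hcg i) i).mul_left
  have hJ : ∀ i, Integrable (fun x => pder i f x * pder i g x) := fun i =>
    integrable_of_smooth ((contDiff_pder hf i).mul (contDiff_pder hg i))
      (hasCompactSupport_pder hcg i).mul_left
  simp only [lap, Finset.mul_sum]
  rw [integral_finsetSum _ fun i _ => hI i, integral_finsetSum _ fun i _ => hJ i,
    ← Finset.sum_neg_distrib]
  exact Finset.sum_congr rfl fun i _ =>
    integral_mul_pder hf (contDiff_pder hg i) (hasCompactSupport_pder hcg i) i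

/-- Green's second identity. -/
theorem integral_mul_lap {f g : Euc d → ℝ} (hf : ContDiff ℝ (⊤ : ℕ∞) f)
    (hg : ContDiff ℝ (⊤ : ℕ∞) g) (hcg : HasCompactSupport g) :
    ∫ x, f x * lap g x = ∫ x, lap f x * g x := by
  have hI : ∀ i, Integrable (fun x => pder i (pder i f) x * g x) := fun i =>
    integrable_of_smooth ((contDiff_pder (contDiff_pder hf i) i).mul hg) hcg.mul_left
  have hJ : ∀ i, Integrable (fun x => pder i f x * pder i g x) := fun i =>
    integrable_of_smooth ((contDiff_pder hf i).mul (contDiff_pder hg i))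
      (hasCompactSupport_pder hcg i).mul_left
  rw [integral_mul_lap_eq_neg hf hg hcg]
  simp only [lap, Finset.sum_mul]
  rw [integral_finsetSum _ fun i _ => hI i, integral_finsetSum _ fun i _ => hJ i,
    ← Finset.sum_neg_distrib]
  refine Finset.sum_congr rfl fun i _ => ?_
  rw [integral_mul_pder (contDiff_pder hf i) hg hcg i, neg_neg]

theorem integral_mul_bilap {f g : Euc d → ℝ} (hf : ContDiff ℝ (⊤ : ℕ∞) f)
    (hg : ContDiff ℝ (⊤ : ℕ∞) g) (hcg : HasCompactSupport g) :
    ∫ x, f x * bilap g x = ∫ x, bilap f x * g x := by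
  rw [bilap, integral_mul_lap hf (contDiff_lap hg) (hasCompactSupport_lap hcg),
    integral_mul_lap (contDiff_lap hf) hg hcg]; rfl

/-- Commuting a cutoff `φ` with the bilaplacian: only first derivatives of `u` and second
derivatives of `G` remain after integration by parts. -/
theorem integral_mul_bilap_cutoff {G u φ : Euc d → ℝ} (hG : ContDiff ℝ (⊤ : ℕ∞) G)
    (hu : ContDiff ℝ (⊤ : ℕ∞) u) (hφ : ContDiff ℝ (⊤ : ℕ∞) φ) (hcφ : HasCompactSupport φ)
    (hcu : HasCompactSupport u)
    (h0 : ∀ x, G x * φ x * bilap u x = 0) :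
    ∫ x, G x * bilap (fun y => u y * φ y) x =
      ∫ x, (lap G x * (2 * (∑ i, pder i u x * pder i φ x) + u x * lap φ x) +
        ∑ i, pder i (fun y => 2 * (∑ j, pder j G y * pder j φ y) + G y * lap φ y) x *
          pder i u x) := by
  have huφ : ContDiff ℝ (⊤ : ℕ∞) (fun y => u y * φ y) := hu.mul hφ
  have hcuφ : HasCompactSupport (fun y => u y * φ y) := hcφ.mul_left
  have e1 : ∫ x, G x * bilap (fun y => u y * φ y) x =
      ∫ x, lap G x * (lap u x * φ x + 2 * (∑ i, pder i u x * pder i φ x) + u x * lap φ x) := by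
    rw [bilap, integral_mul_lap hG (contDiff_lap huφ) (hasCompactSupport_lap hcuφ)]
    simp only [lap_mul hu hφ]
  have e2 : ∫ x, (lap G x * φ x + 2 * (∑ i, pder i G x * pder i φ x) + G x * lap φ x) * lap u x
      = 0 := by
    have := integral_mul_lap (hG.mul hφ) (contDiff_lap hu) (hasCompactSupport_lap hcu)
    simp only [lap_mul hG hφ] at this
    rw [← this]
    exact integral_eq_zero_of_ae (Eventually.of_forall h0)
  set H : Euc d → ℝ := fun y => 2 * (∑ j, pder j G y * pder j φ y) + G y * lap φ y with hH
  have hHs : ContDiff ℝ (⊤ : ℕ∞) H :=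
    (contDiff_const.mul (ContDiff.sum fun j _ => (contDiff_pder hG j).mul
      (contDiff_pder hφ j))).add (hG.mul (contDiff_lap hφ))
  have e3 : ∫ x, H x * lap u x = - ∫ x, ∑ i, pder i H x * pder i u x :=
    integral_mul_lap_eq_neg hHs hu hcu
  have hA : ContDiff ℝ (⊤ : ℕ∞)
      (fun x => lap G x * (2 * (∑ i, pder i u x * pder i φ x) + u x * lap φ x)) :=
    (contDiff_lap hG).mul ((contDiff_const.mul (ContDiff.sum fun j _ => (contDiff_pder hu j).mul
      (contDiff_pder hφ j))).add (hu.mul (contDiff_lap hφ)))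
  have hcA : HasCompactSupport
      (fun x => lap G x * (2 * (∑ i, pder i u x * pder i φ x) + u x * lap φ x)) := by
    refine HasCompactSupport.of_support_subset_isCompact hcφ ?_
    intro x hx
    by_contra hxf
    apply hx
    have : φ =ᶠ[𝓝 x] fun _ => 0 := notMem_tsupport_iff_eventuallyEq.1 hxf
    have h1 : ∀ i, pder i φ x = 0 := fun i => by rw [(this.pder i).eq_of_nhds, pder_const]
    have h2 : lap φ x = 0 := by rw [this.lap.eq_of_nhds, lap_const]
    simp [h1, h2]
  have iA := integrable_of_smooth hA hcA
  have iB : Integrable (fun x => lap G x * φ x * lap u x) :=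
    integrable_of_smooth (((contDiff_lap hG).mul hφ).mul (contDiff_lap hu))
      (hasCompactSupport_lap hcu).mul_left
  have iC : Integrable (fun x => H x * lap u x) :=
    integrable_of_smooth (hHs.mul (contDiff_lap hu)) (hasCompactSupport_lap hcu).mul_left
  have iD : Integrable (fun x => ∑ i, pder i H x * pder i u x) :=
    integrable_finsetSum _ fun i _ => integrable_of_smooth
      ((contDiff_pder hHs i).mul (contDiff_pder hu i)) (hasCompactSupport_pder hcu i).mul_left
  have e1' : ∫ x, G x * bilap (fun y => u y * φ y) x = (∫ x, lap G x * φ x * lap u x) +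
      ∫ x, lap G x * (2 * (∑ i, pder i u x * pder i φ x) + u x * lap φ x) := by
    rw [e1, ← integral_add iB iA]
    congr 1; funext x; ring
  have e2' : (∫ x, lap G x * φ x * lap u x) + ∫ x, H x * lap u x = 0 := by
    rw [← integral_add iB iC, ← e2]
    congr 1; funext x; simp only [hH]; ring
  rw [integral_add iA iD, e1']
  linarith

/-! ### Distance to the boundary and cutoff functions -/

theorem mem_of_dist_lt_infDist_frontier {Ω : Set (Euc d)} (hΩ : IsOpen Ω) {a y : Euc d}
    (ha : a ∈ Ω) (h : dist y a < infDist a (frontier Ω)) : y ∈ Ω := by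
  have hpre : IsPreconnected (ball a (infDist a (frontier Ω))) :=
    (convex_ball _ _).isPreconnected
  have hdisj : Disjoint (ball a (infDist a (frontier Ω))) (frontier Ω) := disjoint_ball_infDist
  refine hpre.subset_left_of_subset_union hΩ isClosed_closure.isOpen_compl
    (disjoint_compl_right.mono_left subset_closure) ?_ ⟨a, ?_, ha⟩ (mem_ball.2 h)
  · intro z hz
    by_cases hzΩ : z ∈ Ω
    · exact Or.inl hzΩ
    · refine Or.inr fun hzc => ?_
      exact hdisj.le_bot ⟨hz, hΩ.frontier_eq ▸ ⟨hzc, hzΩ⟩⟩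
  · exact mem_ball_self (dist_nonneg.trans_lt h)

theorem isClosed_le_infDist_frontier {Ω : Set (Euc d)} (hΩ : IsOpen Ω) {ε : ℝ} (hε : 0 < ε) :
    IsClosed {y | y ∈ Ω ∧ ε ≤ infDist y (frontier Ω)} := by
  have : {y | y ∈ Ω ∧ ε ≤ infDist y (frontier Ω)} =
      closure Ω ∩ {y | ε ≤ infDist y (frontier Ω)} := by
    ext y
    refine ⟨fun h => ⟨subset_closure h.1, h.2⟩, fun h => ⟨?_, h.2⟩⟩
    by_contra hy
    have hyf : y ∈ frontier Ω := hΩ.frontier_eq ▸ ⟨h.1, hy⟩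
    have := h.2
    rw [mem_ofPred_eq, infDist_zero_of_mem hyf] at this
    linarith
  rw [this]
  exact isClosed_closure.inter (isClosed_le continuous_const (continuous_infDist_pt _))

open scoped Convolution in
theorem pder_convolution {f g : Euc d → ℝ} (hf : LocallyIntegrable f)
    (hg : ContDiff ℝ (⊤ : ℕ∞) g) (hcg : HasCompactSupport g) (i : Fin d) :
    pder i (f ⋆[ContinuousLinearMap.mul ℝ ℝ, volume] g) =
      f ⋆[ContinuousLinearMap.mul ℝ ℝ, volume] (pder i g) := by
  funext x
  have hg1 : ContDiff ℝ 1 g := hg.of_le (by simp)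
  rw [pder, (hcg.hasFDerivAt_convolution_right (ContinuousLinearMap.mul ℝ ℝ) hf hg1 x).fderiv,
    convolution_precompR_apply _ hf (hcg.fderiv ℝ) (hg1.continuous_fderiv one_ne_zero)]
  rfl

open scoped Convolution in
theorem abs_indicator_convolution_le (S : Set (Euc d)) {g : Euc d → ℝ}
    (hg : Integrable g) (x : Euc d) :
    |((S.indicator fun _ => (1 : ℝ)) ⋆[ContinuousLinearMap.mul ℝ ℝ, volume] g) x| ≤
      ∫ t, |g t| := by
  rw [convolution_mul, ← Real.norm_eq_abs]
  calc ‖∫ t, S.indicator (fun _ => (1 : ℝ)) t * g (x - t)‖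
      ≤ ∫ t, |g (x - t)| := by
        refine norm_integral_le_of_norm_le (hg.comp_sub_left x).abs (Eventually.of_forall fun t => ?_)
        by_cases ht : t ∈ S <;> simp [ht]
    _ = ∫ t, |g t| := integral_sub_left_eq_self (fun t => |g t|) _ x

theorem pder_comp_smul {f : Euc d → ℝ} (hf : ContDiff ℝ (⊤ : ℕ∞) f) (a : ℝ) (i : Fin d) :
    pder i (fun y => f (a • y)) = fun y => a * pder i f (a • y) := by
  funext y
  have h := ((differentiable_of_smooth hf (a • y)).hasFDerivAt).comp y
    ((hasFDerivAt_id y).const_smul a)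
  have h' : fderiv ℝ (fun y => f (a • y)) y = _ := h.fderiv
  simp [pder, h']

theorem pder_const_mul' {f : Euc d → ℝ} (hf : ContDiff ℝ (⊤ : ℕ∞) f) (a : ℝ) (i : Fin d) :
    pder i (fun y => a * f y) = fun y => a * pder i f y :=
  funext fun y => pder_const_mul (differentiable_of_smooth hf y) a i

open scoped Convolution in
/-- Cutoff functions at distance `ε` from the boundary, with the natural derivative bounds. -/
theorem exists_cutoff (d : ℕ) : ∃ C : ℝ, 0 ≤ C ∧ ∀ Ω : Set (Euc d), IsOpen Ω →
    Bornology.IsBounded Ω → ∀ ε : ℝ, 0 < ε → ∃ φ : Euc d → ℝ, ContDiff ℝ (⊤ : ℕ∞) φ ∧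
      HasCompactSupport φ ∧ tsupport φ ⊆ {y | y ∈ Ω ∧ ε ≤ infDist y (frontier Ω)} ∧
      (∀ y ∈ Ω, 2 * ε ≤ infDist y (frontier Ω) → φ =ᶠ[𝓝 y] fun _ => 1) ∧
      (∀ i y, |pder i φ y| ≤ C * ε⁻¹) ∧
      (∀ i j y, |pder i (pder j φ) y| ≤ C * ε⁻¹ ^ 2) ∧
      (∀ i j k y, |pder i (pder j (pder k φ)) y| ≤ C * ε⁻¹ ^ 3) := by
  let b : ContDiffBump (0 : Euc d) := ⟨1 / 16, 1 / 8, by norm_num, by norm_num⟩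
  set g : Euc d → ℝ := b.normed volume with hgdef
  have hg : ContDiff ℝ (⊤ : ℕ∞) g := b.contDiff_normed
  have hcg : HasCompactSupport g := b.hasCompactSupport_normed
  set C1 := ∑ i, ∫ t, |pder i g t|
  set C2 := ∑ i, ∑ j, ∫ t, |pder i (pder j g) t|
  set C3 := ∑ i, ∑ j, ∑ k, ∫ t, |pder i (pder j (pder k g)) t|
  have hn : ∀ f : Euc d → ℝ, 0 ≤ ∫ t, |f t| := fun f => integral_nonneg fun t => abs_nonneg _
  have p1 : 0 ≤ C1 := Finset.sum_nonneg fun i _ => hn _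
  have p2 : 0 ≤ C2 := Finset.sum_nonneg fun i _ => Finset.sum_nonneg fun j _ => hn _
  have p3 : 0 ≤ C3 := Finset.sum_nonneg fun i _ => Finset.sum_nonneg fun j _ =>
    Finset.sum_nonneg fun k _ => hn _
  have b1 : ∀ i, ∫ t, |pder i g t| ≤ C1 := fun i =>
    Finset.single_le_sum (f := fun i => ∫ t, |pder i g t|) (fun _ _ => hn _) (Finset.mem_univ i)
  have b2 : ∀ i j, ∫ t, |pder i (pder j g) t| ≤ C2 := fun i j =>
    (Finset.single_le_sum (f := fun j => ∫ t, |pder i (pder j g) t|) (fun _ _ => hn _)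
      (Finset.mem_univ j)).trans
    (Finset.single_le_sum (f := fun i => ∑ j, ∫ t, |pder i (pder j g) t|)
      (fun _ _ => Finset.sum_nonneg fun _ _ => hn _) (Finset.mem_univ i))
  have b3 : ∀ i j k, ∫ t, |pder i (pder j (pder k g)) t| ≤ C3 := fun i j k =>
    ((Finset.single_le_sum (f := fun k => ∫ t, |pder i (pder j (pder k g)) t|)
      (fun _ _ => hn _) (Finset.mem_univ k)).trans
    (Finset.single_le_sum (f := fun j => ∑ k, ∫ t, |pder i (pder j (pder k g)) t|)
      (fun _ _ => Finset.sum_nonneg fun _ _ => hn _) (Finset.mem_univ j))).trans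
    (Finset.single_le_sum (f := fun i => ∑ j, ∑ k, ∫ t, |pder i (pder j (pder k g)) t|)
      (fun _ _ => Finset.sum_nonneg fun _ _ => Finset.sum_nonneg fun _ _ => hn _)
      (Finset.mem_univ i))
  refine ⟨C1 + C2 + C3, by positivity, fun Ω hΩ hbd ε hε => ?_⟩
  set S : Set (Euc d) := {z | ε • z ∈ Ω ∧ 3 / 2 * ε ≤ infDist (ε • z) (frontier Ω)} with hS
  have hSm : MeasurableSet S := by
    have h1 : IsClosed S := (isClosed_le_infDist_frontier hΩ (by positivity : 0 < 3 / 2 * ε)).preimage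
      (continuous_const_smul ε)
    exact h1.measurableSet
  set f : Euc d → ℝ := S.indicator fun _ => (1 : ℝ) with hf
  have hfl : LocallyIntegrable f :=
    (locallyIntegrable_const (1 : ℝ)).indicator hSm
  set Φ : Euc d → ℝ := f ⋆[ContinuousLinearMap.mul ℝ ℝ, volume] g with hΦ
  have hΦs : ContDiff ℝ (⊤ : ℕ∞) Φ := hcg.contDiff_convolution_right _ hfl hg
  have e1 : ∀ i, pder i Φ = f ⋆[ContinuousLinearMap.mul ℝ ℝ, volume] (pder i g) :=
    fun i => pder_convolution hfl hg hcg i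
  have e2 : ∀ i j, pder i (pder j Φ) =
      f ⋆[ContinuousLinearMap.mul ℝ ℝ, volume] (pder i (pder j g)) := fun i j => by
    rw [e1, pder_convolution hfl (contDiff_pder hg j) (hasCompactSupport_pder hcg j) i]
  have e3 : ∀ i j k, pder i (pder j (pder k Φ)) =
      f ⋆[ContinuousLinearMap.mul ℝ ℝ, volume] (pder i (pder j (pder k g))) := fun i j k => by
    rw [e2, pder_convolution hfl (contDiff_pder (contDiff_pder hg k) j)
      (hasCompactSupport_pder (hasCompactSupport_pder hcg k) j) i]
  set φ : Euc d → ℝ := fun y => Φ (ε⁻¹ • y) with hφ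
  have hφs : ContDiff ℝ (⊤ : ℕ∞) φ := hΦs.comp (contDiff_const_smul ε⁻¹)
  have q1 : ∀ i, pder i φ = fun y => ε⁻¹ * pder i Φ (ε⁻¹ • y) := fun i => pder_comp_smul hΦs _ i
  have q2 : ∀ i j, pder i (pder j φ) = fun y => ε⁻¹ ^ 2 * pder i (pder j Φ) (ε⁻¹ • y) := by
    intro i j
    rw [q1, pder_const_mul' (f := fun y => pder j Φ (ε⁻¹ • y)) ((contDiff_pder hΦs j).comp (contDiff_const_smul ε⁻¹)),
      pder_comp_smul (contDiff_pder hΦs j)]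
    funext y; ring
  have q3 : ∀ i j k, pder i (pder j (pder k φ)) =
      fun y => ε⁻¹ ^ 3 * pder i (pder j (pder k Φ)) (ε⁻¹ • y) := by
    intro i j k
    have hs := contDiff_pder (contDiff_pder hΦs k) j
    rw [q2, pder_const_mul' (f := fun y => pder j (pder k Φ) (ε⁻¹ • y)) (hs.comp (contDiff_const_smul ε⁻¹)), pder_comp_smul hs]
    funext y; ring
  have hgsupp : ∀ z, g z ≠ 0 → ‖z‖ < 1 / 8 := by
    intro z hz
    have : z ∈ Function.support g := hz
    rw [hgdef, b.support_normed_eq] at this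
    exact mem_ball_zero_iff.1 this
  have hsub : Function.support φ ⊆ {y | y ∈ Ω ∧ ε ≤ infDist y (frontier Ω)} := by
    intro y hy
    have : ∃ t, f t * g (ε⁻¹ • y - t) ≠ 0 := by
      by_contra hcon
      push Not at hcon
      apply hy
      simp only [hφ, hΦ, convolution_mul, hcon, integral_zero]
    obtain ⟨t, ht⟩ := this
    have htS : t ∈ S := by
      by_contra htS
      simp [hf, htS] at ht
    have hg0 := hgsupp _ (right_ne_zero_of_mul ht)
    have hdist : dist y (ε • t) < 1 / 8 * ε := by
      have : y - ε • t = ε • (ε⁻¹ • y - t) := by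
        rw [smul_sub, smul_inv_smul₀ hε.ne']
      rw [dist_eq_norm, this, norm_smul, Real.norm_of_nonneg hε.le]
      nlinarith
    refine ⟨mem_of_dist_lt_infDist_frontier hΩ htS.1 (by linarith [htS.2]), ?_⟩
    have := infDist_le_infDist_add_dist (s := frontier Ω) (x := ε • t) (y := y)
    rw [dist_comm] at this
    linarith [htS.2]
  have hts : tsupport φ ⊆ {y | y ∈ Ω ∧ ε ≤ infDist y (frontier Ω)} :=
    closure_minimal hsub (isClosed_le_infDist_frontier hΩ hε)
  refine ⟨φ, hφs, ?_, hts, ?_, ?_, ?_, ?_⟩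
  · exact (Metric.isCompact_of_isClosed_isBounded (isClosed_tsupport φ)
      (hbd.subset fun y hy => (hts hy).1))
  · intro y hy hδ
    filter_upwards [ball_mem_nhds y (show 0 < ε / 8 by positivity)] with y' hy'
    rw [mem_ball] at hy'
    simp only [hφ, hΦ, convolution_mul]
    have : ∀ t, f t * g (ε⁻¹ • y' - t) = g (ε⁻¹ • y' - t) := by
      intro t
      by_cases h0 : g (ε⁻¹ • y' - t) = 0
      · simp [h0]
      · have hg0 := hgsupp _ h0
        have hdist : dist y' (ε • t) < 1 / 8 * ε := by
          have : y' - ε • t = ε • (ε⁻¹ • y' - t) := by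
            rw [smul_sub, smul_inv_smul₀ hε.ne']
          rw [dist_eq_norm, this, norm_smul, Real.norm_of_nonneg hε.le]
          nlinarith
        have hd2 : dist (ε • t) y < ε / 4 := by
          have := dist_triangle_left (ε • t) y y'
          linarith
        have htS : t ∈ S := by
          refine ⟨mem_of_dist_lt_infDist_frontier hΩ hy (by linarith), ?_⟩
          have := infDist_le_infDist_add_dist (s := frontier Ω) (x := y) (y := ε • t)
          rw [dist_comm] at this
          linarith
        simp [hf, htS]
    simp only [this]
    rw [integral_sub_left_eq_self g _ (ε⁻¹ • y')]
    exact b.integral_normed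
  · intro i y
    rw [q1, abs_mul, abs_of_pos (inv_pos.2 hε), mul_comm]
    gcongr
    rw [e1]
    linarith [abs_indicator_convolution_le S (integrable_of_smooth (contDiff_pder hg i)
      (hasCompactSupport_pder hcg i)) (ε⁻¹ • y), b1 i]
  · intro i j y
    rw [q2, abs_mul, abs_of_pos (by positivity), mul_comm]
    gcongr
    rw [e2]
    linarith [abs_indicator_convolution_le S (integrable_of_smooth
      (contDiff_pder (contDiff_pder hg j) i)
      (hasCompactSupport_pder (hasCompactSupport_pder hcg j) i)) (ε⁻¹ • y), b2 i j]
  · intro i j k y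
    rw [q3, abs_mul, abs_of_pos (by positivity), mul_comm]
    gcongr
    rw [e3]
    linarith [abs_indicator_convolution_le S (integrable_of_smooth
      (contDiff_pder (contDiff_pder (contDiff_pder hg k) j) i)
      (hasCompactSupport_pder (hasCompactSupport_pder (hasCompactSupport_pder hcg k) j) i))
      (ε⁻¹ • y), b3 i j k]

/-! ### The fundamental solution -/

/-- The functions `ρ ^ r * (A + B * log ρ)`, a class closed under differentiation. -/
def powLog (r A B ρ : ℝ) : ℝ := ρ ^ r * (A + B * Real.log ρ)

theorem hasDerivAt_powLog (r A B : ℝ) {ρ : ℝ} (hρ : 0 < ρ) :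
    HasDerivAt (powLog r A B) (powLog (r - 1) (r * A + B) (r * B) ρ) ρ := by
  have h1 := Real.hasDerivAt_rpow_const (x := ρ) (p := r) (Or.inl hρ.ne')
  have h2 := ((Real.hasDerivAt_log hρ.ne').const_mul B).const_add A
  refine (h1.mul h2).congr_deriv ?_
  have : ρ ^ r = ρ ^ (r - 1) * ρ := by
    rw [Real.rpow_sub_one hρ.ne']; field_simp
  simp only [powLog]
  rw [this]
  field_simp
  ring

theorem hasFDerivAt_normSq_sub (x y : Euc d) (a : ℝ) :
    HasFDerivAt (fun z : Euc d => ‖z - x‖ ^ 2 + a) ((2 : ℝ) • innerSL ℝ (y - x)) y := by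
  have h := ((hasFDerivAt_id y).sub_const x).norm_sq
  refine (h.add_const a).congr_fderiv ?_
  ext v
  simp

theorem lap_radial {F F₁ F₂ : ℝ → ℝ} (h₁ : ∀ ρ, 0 < ρ → HasDerivAt F (F₁ ρ) ρ)
    (h₂ : ∀ ρ, 0 < ρ → HasDerivAt F₁ (F₂ ρ) ρ) {a : ℝ} (ha : 0 < a) (x y : Euc d) :
    lap (fun z => F (‖z - x‖ ^ 2 + a)) y =
      4 * ‖y - x‖ ^ 2 * F₂ (‖y - x‖ ^ 2 + a) + 2 * d * F₁ (‖y - x‖ ^ 2 + a) := by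
  have hpos : ∀ z : Euc d, 0 < ‖z - x‖ ^ 2 + a := fun z => by positivity
  have hi : ∀ (i : Fin d) (z : Euc d),
      innerSL ℝ (z - x) (EuclideanSpace.single i (1 : ℝ)) = (z - x) i := by
    intro i z
    simp [EuclideanSpace.inner_single_right]
  have e1 : ∀ i, pder i (fun z => F (‖z - x‖ ^ 2 + a)) =
      fun z => F₁ (‖z - x‖ ^ 2 + a) * (2 * (z - x) i) := by
    intro i; funext z
    have h := (h₁ _ (hpos z)).comp_hasFDerivAt z (hasFDerivAt_normSq_sub x z a)
    rw [pder, show fderiv ℝ (fun z => F (‖z - x‖ ^ 2 + a)) z = _ from h.fderiv]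
    simp only [smul_apply, smul_eq_mul, hi]
  have e2 : ∀ i, pder i (pder i (fun z => F (‖z - x‖ ^ 2 + a))) y =
      4 * ((y - x) i) ^ 2 * F₂ (‖y - x‖ ^ 2 + a) + 2 * F₁ (‖y - x‖ ^ 2 + a) := by
    intro i
    rw [e1]
    have hA := (h₂ _ (hpos y)).comp_hasFDerivAt y (hasFDerivAt_normSq_sub x y a)
    have hB : HasFDerivAt (fun z : Euc d => 2 * (z - x) i)
        ((2 : ℝ) • (EuclideanSpace.proj i : Euc d →L[ℝ] ℝ)) y := by
      have := ((EuclideanSpace.proj i : Euc d →L[ℝ] ℝ).hasFDerivAt.comp y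
        ((hasFDerivAt_id y).sub_const x)).const_mul 2
      exact this
    rw [pder_mul (f := fun z => F₁ (‖z - x‖ ^ 2 + a)) hA.differentiableAt hB.differentiableAt,
      pder, pder, show fderiv ℝ (fun z => F₁ (‖z - x‖ ^ 2 + a)) y = _ from hA.fderiv, hB.fderiv]
    simp only [smul_apply, smul_eq_mul, hi]
    simp
    ring
  simp only [lap, e2, Finset.sum_add_distrib, ← Finset.sum_mul, ← Finset.mul_sum]
  have hn : ‖y - x‖ ^ 2 = ∑ i, ((y - x) i) ^ 2 := by simp [EuclideanSpace.norm_sq_eq]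
  rw [← hn]
  simp only [Finset.sum_const, Finset.card_univ, Fintype.card_fin, nsmul_eq_mul]
  ring

theorem bilap_powLog {s A B : ℝ} (hs : (d : ℝ) = 4 - 2 * s) (hB : s * (s - 1) * B = 0)
    {a : ℝ} (ha : 0 < a) (x y : Euc d) :
    bilap (fun z => powLog s A B (‖z - x‖ ^ 2 + a)) y =
      a ^ 2 * powLog (s - 4)
        (16 * (s * (s - 1) * (s - 2) * (s - 3) * A +
          (4 * s ^ 3 - 18 * s ^ 2 + 22 * s - 6) * B))
        (16 * (s * (s - 1) * (s - 2) * (s - 3)) * B) (‖y - x‖ ^ 2 + a) := by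
  have hpos : ∀ z : Euc d, 0 < ‖z - x‖ ^ 2 + a := fun z => by positivity
  set A1 := s * A + B
  set B1 := s * B
  set A2 := (s - 1) * A1 + B1
  set B2 := (s - 1) * B1
  have e1 : lap (fun z => powLog s A B (‖z - x‖ ^ 2 + a)) = fun z =>
      (fun ρ => powLog (s - 1) (4 * A2 + 2 * d * A1) (4 * B2 + 2 * d * B1) ρ +
        powLog (s - 1 - 1) (-4 * a * A2) (-4 * a * B2) ρ) (‖z - x‖ ^ 2 + a) := by
    funext z
    rw [lap_radial (fun ρ hρ => hasDerivAt_powLog s A B hρ)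
      (fun ρ hρ => hasDerivAt_powLog (s - 1) A1 B1 hρ) ha]
    have hρ := hpos z
    have hz : ‖z - x‖ ^ 2 = (‖z - x‖ ^ 2 + a) - a := by ring
    rw [hz, sub_add_cancel]
    generalize ‖z - x‖ ^ 2 + a = ρ at hρ
    simp only [powLog]
    rw [Real.rpow_sub_one hρ.ne' (s - 1)]
    field_simp
    ring
  rw [bilap, e1, lap_radial
    (fun ρ hρ => (hasDerivAt_powLog _ _ _ hρ).fun_add (hasDerivAt_powLog _ _ _ hρ))
    (fun ρ hρ => (hasDerivAt_powLog _ _ _ hρ).fun_add (hasDerivAt_powLog _ _ _ hρ)) ha]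
  have hρ := hpos y
  have hz : ‖y - x‖ ^ 2 = (‖y - x‖ ^ 2 + a) - a := by ring
  rw [hz, sub_add_cancel]
  generalize ‖y - x‖ ^ 2 + a = ρ at hρ
  have r4 : s - 1 - 1 - 1 - 1 = s - 4 := by ring
  have r3 : ρ ^ (s - 1 - 1 - 1) = ρ ^ (s - 4) * ρ := by
    rw [← r4, Real.rpow_sub_one hρ.ne' (s - 1 - 1 - 1)]; field_simp
  have r2 : ρ ^ (s - 1 - 1) = ρ ^ (s - 4) * ρ * ρ := by
    rw [← r3, Real.rpow_sub_one hρ.ne' (s - 1 - 1)]; field_simp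
  simp only [powLog, r4, r3, r2, hs, A2, B2, A1, B1]
  linear_combination
    (16 * ρ ^ (s - 4) * ρ ^ 2 - 32 * ρ * a * ρ ^ (s - 4) * (s - 2)) * hB

theorem contDiff_powLog_radial (s A B : ℝ) {a : ℝ} (ha : 0 < a) (x : Euc d) :
    ContDiff ℝ (⊤ : ℕ∞) (fun z : Euc d => powLog s A B (‖z - x‖ ^ 2 + a)) := by
  have h : ContDiff ℝ (⊤ : ℕ∞) (fun z : Euc d => ‖z - x‖ ^ 2 + a) :=
    ((contDiff_id.sub contDiff_const).norm_sq ℝ).add contDiff_const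
  have hpos : ∀ z : Euc d, ‖z - x‖ ^ 2 + a ≠ 0 := fun z => by positivity
  exact (h.rpow_const_of_ne hpos).mul
    (contDiff_const.add (contDiff_const.mul (h.log hpos)))

theorem continuousOn_powLog (s A B : ℝ) : ContinuousOn (powLog s A B) (Ioi 0) :=
  fun _ hρ => (hasDerivAt_powLog s A B hρ).continuousAt.continuousWithinAt

theorem fundSol_eq_powLog (hd : 2 ≤ d) {c : ℝ} (hc : c ≠ 0) : ∃ s A B κ : ℝ,
    (d : ℝ) = 4 - 2 * s ∧ κ ≠ 0 ∧
    16 * (s * (s - 1) * (s - 2) * (s - 3) * A + (4 * s ^ 3 - 18 * s ^ 2 + 22 * s - 6) * B) = κ ∧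
    s * (s - 1) * B = 0 ∧
    ∀ y : Euc d, y ≠ 0 → fundSol d c y = powLog s A B (‖y‖ ^ 2) := by
  have hpow : ∀ y : Euc d, (‖y‖ ^ 2) ^ ((4 - (d : ℝ)) / 2) = ‖y‖ ^ (4 - (d : ℝ)) := by
    intro y
    rw [← Real.rpow_natCast, ← Real.rpow_mul (norm_nonneg y)]
    congr 1
    push_cast; ring
  by_cases h : d = 2 ∨ d = 4
  · refine ⟨(4 - (d : ℝ)) / 2, 0, c / 2, _, by ring, ?_, rfl, ?_, ?_⟩
    · rcases h with rfl | rfl <;> norm_num <;> exact hc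
    · rcases h with rfl | rfl <;> norm_num
    · intro y hy
      rw [fundSol, if_pos h, powLog, hpow, Real.log_pow]
      push_cast; ring
  · refine ⟨(4 - (d : ℝ)) / 2, c, 0, _, by ring, ?_, rfl, by ring, ?_⟩
    · push Not at h
      have h2 : (d : ℝ) ≠ 2 := by exact_mod_cast h.1
      have h4 : (d : ℝ) ≠ 4 := by exact_mod_cast h.2
      have h0 : (2 : ℝ) ≤ d := by exact_mod_cast hd
      have a1 : (4 - (d : ℝ)) / 2 ≠ 0 := fun h => h4 (by linarith)
      have a2 : (4 - (d : ℝ)) / 2 - 1 ≠ 0 := fun h => h2 (by linarith)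
      have a3 : (4 - (d : ℝ)) / 2 - 2 ≠ 0 := by linarith
      have a4 : (4 - (d : ℝ)) / 2 - 3 ≠ 0 := by linarith
      simp only [mul_zero, add_zero]
      positivity
    · intro y hy
      rw [fundSol, if_neg h, powLog, hpow]
      ring

theorem integrable_japanese (d : ℕ) :
    Integrable (fun z : Euc d => (1 + ‖z‖ ^ 2) ^ (-((d : ℝ) + 4) / 2)) :=
  integrable_rpow_neg_one_add_norm_sq (by simp)

theorem integral_japanese_pos (d : ℕ) :
    0 < ∫ z : Euc d, (1 + ‖z‖ ^ 2) ^ (-((d : ℝ) + 4) / 2) := by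
  rw [integral_pos_iff_support_of_nonneg (fun z => by positivity) (integrable_japanese d)]
  have : Function.support (fun z : Euc d => (1 + ‖z‖ ^ 2) ^ (-((d : ℝ) + 4) / 2)) = univ := by
    ext z
    simp only [Function.mem_support, mem_univ, iff_true]
    positivity
  rw [this]
  exact isOpen_univ.measure_pos _ univ_nonempty

/-- `fundSol` is, up to a non-zero constant, a fundamental solution: tested against functions
that are biharmonic near the pole. -/
theorem integral_fundSol_mul_bilap (hd : 2 ≤ d) {c : ℝ} (hc : c ≠ 0) : ∃ c₀ : ℝ, c₀ ≠ 0 ∧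
    ∀ (x : Euc d) (v : Euc d → ℝ), ContDiff ℝ (⊤ : ℕ∞) v → HasCompactSupport v →
      (bilap v =ᶠ[𝓝 x] fun _ => 0) →
      ∫ y, fundSol d c (y - x) * bilap v y = c₀ * v x := by
  obtain ⟨s, A, B, κ, hs, hκ, hκ', hB, hfs⟩ := fundSol_eq_powLog hd hc
  refine ⟨κ * ∫ z : Euc d, (1 + ‖z‖ ^ 2) ^ (-((d : ℝ) + 4) / 2),
    mul_ne_zero hκ (integral_japanese_pos d).ne', fun x v hv hcv hx => ?_⟩
  have hbv : ContDiff ℝ (⊤ : ℕ∞) (bilap v) := contDiff_lap (contDiff_lap hv)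
  have hcbv : HasCompactSupport (bilap v) := hasCompactSupport_lap (hasCompactSupport_lap hcv)
  obtain ⟨r, hr, hball⟩ := Metric.eventually_nhds_iff.1 hx
  obtain ⟨R, hR⟩ := hcbv.isCompact.isBounded.subset_closedBall x
  have hl : Tendsto (fun ε : ℝ => ∫ y, powLog s A B (‖y - x‖ ^ 2 + ε ^ 2) * bilap v y)
      (𝓝[>] 0) (𝓝 (∫ y, fundSol d c (y - x) * bilap v y)) := by
    obtain ⟨M, hM⟩ := (isCompact_Icc (a := r ^ 2) (b := R ^ 2 + 1)).exists_bound_of_continuousOn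
      ((continuousOn_powLog s A B).mono fun _ hρ => (by positivity : 0 < r ^ 2).trans_le hρ.1)
    refine tendsto_integral_filter_of_dominated_convergence (fun y => M * ‖bilap v y‖) ?_ ?_ ?_ ?_
    · filter_upwards [self_mem_nhdsWithin] with ε hε
      have hε : 0 < ε := hε
      exact ((contDiff_powLog_radial s A B (by positivity : 0 < ε ^ 2) x).continuous.mul
        hbv.continuous).aestronglyMeasurable
    · filter_upwards [Ioo_mem_nhdsGT (zero_lt_one' ℝ)] with ε hε
      refine Eventually.of_forall fun y => ?_
      rw [norm_mul]
      by_cases hy : bilap v y = 0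
      · simp [hy]
      gcongr
      have h1 : r ≤ ‖y - x‖ := by
        by_contra hlt
        exact hy (hball (by rwa [dist_eq_norm, ← not_le]))
      have h2 : ‖y - x‖ ≤ R := by
        have := hR (subset_tsupport _ hy)
        rwa [mem_closedBall, dist_eq_norm] at this
      refine hM _ ⟨?_, ?_⟩
      · nlinarith [sq_nonneg ε]
      · nlinarith [hε.1, hε.2, norm_nonneg (y - x)]
    · exact (integrable_of_smooth hbv hcbv).norm.const_mul M
    · refine Eventually.of_forall fun y => ?_
      by_cases hy : y = x
      · subst hy
        have : bilap v y = 0 := hball (by simpa using hr)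
        simp [this]
      · refine Tendsto.mul_const _ ?_
        have hyx : y - x ≠ 0 := sub_ne_zero.2 hy
        rw [hfs _ hyx]
        have hc1 : ContinuousAt (powLog s A B) (‖y - x‖ ^ 2) :=
          (hasDerivAt_powLog s A B (by positivity)).continuousAt
        have hc2 : Tendsto (fun ε : ℝ => ‖y - x‖ ^ 2 + ε ^ 2) (𝓝[>] 0) (𝓝 (‖y - x‖ ^ 2)) := by
          have : Tendsto (fun ε : ℝ => ‖y - x‖ ^ 2 + ε ^ 2) (𝓝 0) (𝓝 (‖y - x‖ ^ 2 + 0 ^ 2)) :=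
            (Continuous.tendsto (by fun_prop) 0)
          simpa using this.mono_left nhdsWithin_le_nhds
        exact hc1.tendsto.comp hc2
  have hr' : ∀ ε : ℝ, 0 < ε → ∫ y, powLog s A B (‖y - x‖ ^ 2 + ε ^ 2) * bilap v y =
      κ * ∫ z : Euc d, (1 + ‖z‖ ^ 2) ^ (-((d : ℝ) + 4) / 2) * v (x + ε • z) := by
    intro ε hε
    have hε2 : 0 < ε ^ 2 := by positivity
    rw [integral_mul_bilap (contDiff_powLog_radial s A B hε2 x) hv hcv]
    have h1 : ∀ y, bilap (fun z => powLog s A B (‖z - x‖ ^ 2 + ε ^ 2)) y * v y =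
        (fun w => κ * ε ^ 4 * (‖w‖ ^ 2 + ε ^ 2) ^ (s - 4) * v (x + w)) (y - x) := by
      intro y
      rw [bilap_powLog hs hB hε2, hκ', show 16 * (s * (s - 1) * (s - 2) * (s - 3)) * B = 0 by
        linear_combination 16 * (s - 2) * (s - 3) * hB]
      simp only [powLog, add_sub_cancel]
      ring
    simp only [h1]
    rw [integral_sub_right_eq_self
      (fun w => κ * ε ^ 4 * (‖w‖ ^ 2 + ε ^ 2) ^ (s - 4) * v (x + w)) x]
    have h2 := Measure.integral_comp_smul (volume : Measure (Euc d))
      (fun w => κ * ε ^ 4 * (‖w‖ ^ 2 + ε ^ 2) ^ (s - 4) * v (x + w)) ε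
    have h3 : ∫ w, κ * ε ^ 4 * (‖w‖ ^ 2 + ε ^ 2) ^ (s - 4) * v (x + w) =
        ε ^ d * ∫ z : Euc d, κ * ε ^ 4 * (‖ε • z‖ ^ 2 + ε ^ 2) ^ (s - 4) * v (x + ε • z) := by
      rw [h2, finrank_euclideanSpace_fin, abs_of_pos (by positivity), smul_eq_mul, ← mul_assoc,
        mul_inv_cancel₀ (by positivity), one_mul]
    rw [h3, ← integral_const_mul, ← integral_const_mul]
    congr 1; funext z
    have h4 : ‖ε • z‖ ^ 2 + ε ^ 2 = ε ^ 2 * (1 + ‖z‖ ^ 2) := by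
      rw [norm_smul, Real.norm_of_nonneg hε.le]; ring
    have h5 : s - 4 = -((d : ℝ) + 4) / 2 := by rw [hs]; ring
    have h6 : (ε ^ 2) ^ (-((d : ℝ) + 4) / 2) = (ε ^ d * ε ^ 4)⁻¹ := by
      rw [← pow_add, ← Real.rpow_natCast ε 2, ← Real.rpow_natCast ε (d + 4), ← Real.rpow_neg hε.le,
        ← Real.rpow_mul hε.le]
      congr 1
      push_cast; ring
    rw [h4, Real.mul_rpow hε2.le (by positivity), h5, h6]
    field_simp
  have hrl : Tendsto (fun ε : ℝ => κ * ∫ z : Euc d,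
      (1 + ‖z‖ ^ 2) ^ (-((d : ℝ) + 4) / 2) * v (x + ε • z)) (𝓝[>] 0)
      (𝓝 (κ * ∫ z : Euc d, (1 + ‖z‖ ^ 2) ^ (-((d : ℝ) + 4) / 2) * v x)) := by
    refine Tendsto.const_mul _ ?_
    obtain ⟨M, hM⟩ := hv.continuous.bounded_above_of_compact_support hcv
    have hcont : Continuous fun z : Euc d => (1 + ‖z‖ ^ 2) ^ (-((d : ℝ) + 4) / 2) := by
      refine Continuous.rpow_const (by fun_prop) fun z => Or.inl ?_
      positivity
    refine tendsto_integral_filter_of_dominated_convergence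
      (fun z => (1 + ‖z‖ ^ 2) ^ (-((d : ℝ) + 4) / 2) * M) ?_ ?_ ?_ ?_
    · refine Eventually.of_forall fun ε => (hcont.mul ?_).aestronglyMeasurable
      exact hv.continuous.comp (by fun_prop)
    · refine Eventually.of_forall fun ε => Eventually.of_forall fun z => ?_
      rw [norm_mul, Real.norm_of_nonneg (by positivity)]
      gcongr
      exact hM _
    · exact (integrable_japanese d).mul_const M
    · refine Eventually.of_forall fun z => Tendsto.const_mul _ ?_
      have : Tendsto (fun ε : ℝ => v (x + ε • z)) (𝓝 0) (𝓝 (v (x + (0 : ℝ) • z))) :=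
        (hv.continuous.comp (by fun_prop : Continuous fun ε : ℝ => x + ε • z)).tendsto 0
      simpa using this.mono_left nhdsWithin_le_nhds
  have heq := tendsto_nhds_unique hl (hrl.congr' (by
    filter_upwards [self_mem_nhdsWithin] with ε hε using (hr' ε hε).symm))
  rw [heq, integral_mul_const, mul_assoc]

/-! ### Graph coordinates -/

/-- Global coordinates `(x, t)` on `ℝ^(n+1)` flattening the graph of a Lipschitz function: `psi`
is the parametrization, `proj` and `ht` are the coordinates, and the graph is `ht = 0`. -/
structure GraphChart (n : ℕ) where
  /-- the parametrization -/
  psi : Euc n → ℝ → Euc (n + 1)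
  /-- the horizontal coordinates -/
  proj : Euc (n + 1) → Euc n
  /-- the height above the graph -/
  ht : Euc (n + 1) → ℝ
  /-- the vertical direction -/
  v : Euc (n + 1)
  /-- the linear part of `proj` -/
  L : Euc (n + 1) → Euc n
  /-- the Lipschitz constant -/
  K : ℝ≥0
  one_le_K : 1 ≤ K
  psi_proj_ht : ∀ y, psi (proj y) (ht y) = y
  proj_psi : ∀ x t, proj (psi x t) = x
  ht_psi : ∀ x t, ht (psi x t) = t
  psi_eq : ∀ x t, psi x t = psi x 0 + t • v
  norm_v : ‖v‖ = 1
  proj_add : ∀ y w, proj (y + w) = proj y + L w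
  norm_L : ∀ w, ‖L w‖ ≤ ‖w‖
  lip_ht : LipschitzWith K ht
  lip_psi : LipschitzWith K fun x => psi x 0
  measurePreserving_psi :
    MeasurePreserving (fun z : Euc n × ℝ => psi z.1 z.2) (volume.prod volume) volume
  ae_differentiableAt : ∀ᵐ x, DifferentiableAt ℝ ht (psi x 0)

/-- The point with horizontal coordinates `x` and vertical coordinate `s`. -/
def graphPoint {n : ℕ} (x : Euc n) (s : ℝ) : Euc (n + 1) :=
  WithLp.toLp 2 (Fin.insertNth (α := fun _ => ℝ) (Fin.last n) s x.ofLp)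

theorem graphPoint_castSucc {n : ℕ} (x : Euc n) (s : ℝ) (i : Fin n) :
    graphPoint x s i.castSucc = x i := by
  have := Fin.insertNth_apply_succAbove (α := fun _ => ℝ) (Fin.last n) s x.ofLp i
  rwa [Fin.succAbove_last] at this

theorem graphPoint_last {n : ℕ} (x : Euc n) (s : ℝ) : graphPoint x s (Fin.last n) = s :=
  Fin.insertNth_apply_same (α := fun _ => ℝ) (Fin.last n) s x.ofLp

theorem vertCoord_succ {n : ℕ} (y : Euc (n + 1)) : vertCoord (n + 1) y = y (Fin.last n) := by
  simp only [vertCoord, Nat.succ_pos, dite_true]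
  rfl

theorem graphPoint_graphCoord {n : ℕ} (y : Euc (n + 1)) :
    graphPoint (graphCoord (n + 1) y) (vertCoord (n + 1) y) = y := by
  ext i
  refine Fin.lastCases ?_ (fun j => ?_) i
  · rw [graphPoint_last, vertCoord_succ]
    rfl
  · exact graphPoint_castSucc _ _ j

theorem graphCoord_graphPoint {n : ℕ} (x : Euc n) (s : ℝ) :
    graphCoord (n + 1) (graphPoint x s) = x := by
  ext i
  exact graphPoint_castSucc x s i

theorem norm_sq_graphPoint {n : ℕ} (x : Euc n) (s : ℝ) :
    ‖graphPoint x s‖ ^ 2 = ‖x‖ ^ 2 + s ^ 2 := by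
  simp [EuclideanSpace.norm_sq_eq, Fin.sum_univ_castSucc, graphPoint_castSucc, graphPoint_last]

theorem graphPoint_add {n : ℕ} (x x' : Euc n) (s s' : ℝ) :
    graphPoint (x + x') (s + s') = graphPoint x s + graphPoint x' s' := by
  ext i
  refine Fin.lastCases ?_ (fun j => ?_) i
  · simp [graphPoint_last]
  · simp [graphPoint_castSucc]

theorem graphPoint_sub {n : ℕ} (x x' : Euc n) (s s' : ℝ) :
    graphPoint x s - graphPoint x' s' = graphPoint (x - x') (s - s') := by
  rw [sub_eq_iff_eq_add, ← graphPoint_add, sub_add_cancel, sub_add_cancel]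

theorem norm_graphCoord_le {n : ℕ} (y : Euc (n + 1)) : ‖graphCoord (n + 1) y‖ ≤ ‖y‖ := by
  have := norm_sq_graphPoint (graphCoord (n + 1) y) (vertCoord (n + 1) y)
  rw [graphPoint_graphCoord] at this
  refine le_of_sq_le_sq ?_ (norm_nonneg y)
  have h2 := sq_nonneg (vertCoord (n + 1) y)
  linarith

theorem measurePreserving_graphPoint (n : ℕ) :
    MeasurePreserving (fun z : Euc n × ℝ => graphPoint z.1 z.2) (volume.prod volume) volume := by
  have h1 := (volume_preserving_piFinSuccAbove (fun _ : Fin (n + 1) => ℝ) (Fin.last n)).symm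
  have h2 := PiLp.volume_preserving_toLp (Fin (n + 1))
  have h3 := PiLp.volume_preserving_ofLp (Fin n)
  have h4 : MeasurePreserving (Prod.swap : Euc n × ℝ → ℝ × Euc n)
    (volume.prod volume) (volume.prod volume) := Measure.measurePreserving_swap
  have h5 : MeasurePreserving (Prod.map id (WithLp.ofLp : Euc n → (Fin n → ℝ)))
    ((volume : Measure ℝ).prod volume) (volume.prod volume) := (MeasurePreserving.id _).prod h3
  exact h2.comp (h1.comp (h5.comp h4))

theorem measurePreserving_shear {n : ℕ} {η : Euc n → ℝ} (hη : Continuous η) :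
    MeasurePreserving (fun z : Euc n × ℝ => (z.1, η z.1 + z.2)) (volume.prod volume)
      (volume.prod volume) := by
  refine MeasurePreserving.skew_product (MeasurePreserving.id _) (g := fun x t => η x + t) ?_ ?_
  · exact (by fun_prop : Continuous fun z : Euc n × ℝ => η z.1 + z.2).measurable
  · exact Eventually.of_forall fun x => (measurePreserving_add_left volume (η x)).map_eq

theorem differentiable_graphCoord (n : ℕ) : Differentiable ℝ (graphCoord (n + 1)) := by
  intro y
  rw [differentiableAt_euclidean]
  intro i
  exact (EuclideanSpace.proj (𝕜 := ℝ) (i : Fin n).castSucc).differentiableAt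

theorem differentiable_vertCoord (n : ℕ) : Differentiable ℝ (vertCoord (n + 1)) := by
  rw [funext vertCoord_succ]
  exact (EuclideanSpace.proj (𝕜 := ℝ) (Fin.last n)).differentiable

/-- The chart given by a rigid motion and a Lipschitz function. -/
theorem exists_graphChart {n : ℕ} (R : Euc (n + 1) ≃ᵢ Euc (n + 1)) {M : ℝ≥0} {η : Euc n → ℝ}
    (hη : LipschitzWith M η) : ∃ c : GraphChart n, ∀ y,
      c.ht y = vertCoord (n + 1) (R y) - η (graphCoord (n + 1) (R y)) := by
  set A := R.toRealAffineIsometryEquiv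
  have hA : ∀ y w, R (y + w) = A.linearIsometryEquiv w + R y := by
    intro y w
    have := A.map_vadd y w
    simp only [vadd_eq_add] at this
    rw [add_comm y w]
    exact this
  have hAs : ∀ y w, R.symm (y + w) = A.linearIsometryEquiv.symm w + R.symm y := by
    intro y w
    apply R.injective
    rw [add_comm (A.linearIsometryEquiv.symm w), hA]
    simp [add_comm]
  have hgl : ∀ y w : Euc (n + 1),
      graphCoord (n + 1) (y + w) = graphCoord (n + 1) y + graphCoord (n + 1) w :=
    fun y w => by ext i; rfl
  have hvl : ∀ y w : Euc (n + 1),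
      vertCoord (n + 1) (y - w) = vertCoord (n + 1) y - vertCoord (n + 1) w :=
    fun y w => by simp [vertCoord_succ]
  have hgs : ∀ y w : Euc (n + 1),
      graphCoord (n + 1) (y - w) = graphCoord (n + 1) y - graphCoord (n + 1) w :=
    fun y w => by ext i; rfl
  have hdR : Differentiable ℝ R := by
    have : (R : Euc (n + 1) → Euc (n + 1)) = fun y => A.linearIsometryEquiv y + R 0 := by
      funext y
      rw [← hA, zero_add]
    rw [this]
    exact A.linearIsometryEquiv.differentiable.add_const _
  refine ⟨{
    psi := fun x t => R.symm (graphPoint x (η x + t))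
    proj := fun y => graphCoord (n + 1) (R y)
    ht := fun y => vertCoord (n + 1) (R y) - η (graphCoord (n + 1) (R y))
    v := A.linearIsometryEquiv.symm (graphPoint 0 1)
    L := fun w => graphCoord (n + 1) (A.linearIsometryEquiv w)
    K := 1 + M
    one_le_K := by simp
    psi_proj_ht := ?_
    proj_psi := ?_
    ht_psi := ?_
    psi_eq := ?_
    norm_v := ?_
    proj_add := ?_
    norm_L := ?_
    lip_ht := ?_
    lip_psi := ?_
    measurePreserving_psi := ?_
    ae_differentiableAt := ?_ }, fun y => rfl⟩
  · intro y
    rw [add_sub_cancel, graphPoint_graphCoord, R.symm_apply_apply]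
  · intro x t
    rw [R.apply_symm_apply, graphCoord_graphPoint]
  · intro x t
    rw [R.apply_symm_apply, graphCoord_graphPoint, vertCoord_succ, graphPoint_last]
    ring
  · intro x t
    rw [← A.linearIsometryEquiv.symm.map_smul, add_comm (R.symm _), ← hAs]
    congr 1
    ext i
    refine Fin.lastCases ?_ (fun j => ?_) i
    · simp [graphPoint_last]
    · simp [graphPoint_castSucc]
  · rw [LinearIsometryEquiv.norm_map]
    have := norm_sq_graphPoint (0 : Euc n) 1
    simp only [norm_zero] at this
    have h0 := norm_nonneg (graphPoint (0 : Euc n) 1)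
    nlinarith
  · intro y w
    rw [hA, hgl, add_comm]
  · intro w
    exact (norm_graphCoord_le _).trans (LinearIsometryEquiv.norm_map _ _).le
  · refine LipschitzWith.of_dist_le_mul fun y z => ?_
    have h1 : dist (R y) (R z) = dist y z := R.dist_eq y z
    have h2 : |vertCoord (n + 1) (R y) - vertCoord (n + 1) (R z)| ≤ dist y z := by
      rw [← hvl, ← h1, dist_eq_norm, vertCoord_succ]
      exact PiLp.norm_apply_le (R y - R z) (Fin.last n)
    have h3 := hη.dist_le_mul (graphCoord (n + 1) (R y)) (graphCoord (n + 1) (R z))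
    have h4 : dist (graphCoord (n + 1) (R y)) (graphCoord (n + 1) (R z)) ≤ dist y z := by
      rw [dist_eq_norm, ← hgs, ← h1, dist_eq_norm]
      exact norm_graphCoord_le _
    have h5 := mul_le_mul_of_nonneg_left h4 M.coe_nonneg
    rw [Real.dist_eq] at h3 ⊢
    push_cast
    rw [abs_le] at h2 h3 ⊢
    constructor <;> linarith [h2.1, h2.2, h3.1, h3.2]
  · refine LipschitzWith.of_dist_le_mul fun x z => ?_
    rw [R.symm.dist_eq, dist_eq_norm, graphPoint_sub]
    have h3 := hη.dist_le_mul x z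
    rw [Real.dist_eq, dist_eq_norm] at h3
    have h1 := norm_sq_graphPoint (x - z) (η x + 0 - (η z + 0))
    rw [dist_eq_norm]
    push_cast
    simp only [add_zero] at h1 ⊢
    refine le_of_sq_le_sq ?_ (by positivity)
    rw [h1, ← sq_abs (η x - η z)]
    have := norm_nonneg (x - z)
    have hM := M.coe_nonneg
    have h6 := pow_le_pow_left₀ (abs_nonneg _) h3 2
    nlinarith [mul_nonneg hM (sq_nonneg ‖x - z‖)]
  · have hR : MeasurePreserving R.symm (volume : Measure (Euc (n + 1))) volume := by
      have : (R.symm : Euc (n + 1) → Euc (n + 1)) =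
          (fun y => y + R.symm 0) ∘ A.linearIsometryEquiv.symm := by
        funext y
        simp only [Function.comp_apply]
        rw [← hAs, zero_add]
      rw [this]
      exact (measurePreserving_add_right volume _).comp
        A.linearIsometryEquiv.symm.measurePreserving
    exact hR.comp ((measurePreserving_graphPoint n).comp (measurePreserving_shear hη.continuous))
  · filter_upwards [hη.ae_differentiableAt (μ := volume)] with x hx
    have h1 : DifferentiableAt ℝ (fun y => graphCoord (n + 1) (R y))
        (R.symm (graphPoint x (η x + 0))) := ((differentiable_graphCoord n).comp hdR) _
    have h2 : DifferentiableAt ℝ (fun y => vertCoord (n + 1) (R y))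
        (R.symm (graphPoint x (η x + 0))) := ((differentiable_vertCoord n).comp hdR) _
    refine h2.fun_sub (DifferentiableAt.comp (g := η) _ ?_ h1)
    rwa [R.apply_symm_apply, graphCoord_graphPoint]

/-! ### Charts adapted to a Lipschitz domain -/

/-- The chart `c` flattens the boundary of `Ω` in a ball about `Q₀`; `r` is the scale of the
coordinate box in which the chart is used. -/
structure GraphChart.Fits {n : ℕ} (c : GraphChart n) (Ω : Set (Euc (n + 1))) (Q₀ : Euc (n + 1))
    (r : ℝ) : Prop where
  r_pos : 0 < r
  mem_frontier : Q₀ ∈ frontier Ω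
  mem_iff : ∀ y ∈ ball Q₀ (4 * c.K * (c.K + 1) * r), (y ∈ Ω ↔ 0 < c.ht y)
  mem_frontier_iff : ∀ y ∈ ball Q₀ (4 * c.K * (c.K + 1) * r), (y ∈ frontier Ω ↔ c.ht y = 0)

theorem IsLipschitzDomain.exists_fits {n : ℕ} {Ω : Set (Euc (n + 1))} (hΩ : IsLipschitzDomain Ω)
    {Q₀ : Euc (n + 1)} (hQ : Q₀ ∈ frontier Ω) :
    ∃ (c : GraphChart n) (r : ℝ), c.Fits Ω Q₀ r := by
  obtain ⟨-, -, -, N, U, hU, hcov, hloc⟩ := hΩ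
  obtain ⟨i, hi⟩ := mem_iUnion.1 (hcov hQ)
  obtain ⟨R, M, η, hη, hin, hbd⟩ := hloc i
  obtain ⟨c, hc⟩ := exists_graphChart R hη
  obtain ⟨ε, hε, hball⟩ := Metric.isOpen_iff.1 (hU i) Q₀ hi
  have hK : (1 : ℝ) ≤ c.K := c.one_le_K
  have hm : 4 * (c.K : ℝ) * (c.K + 1) * (ε / (4 * c.K * (c.K + 1))) = ε := by
    field_simp
  refine ⟨c, ε / (4 * c.K * (c.K + 1)), by positivity, hQ, fun y hy => ?_, fun y hy => ?_⟩
  · rw [hm] at hy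
    have h := Set.ext_iff.1 hin y
    simp only [mem_inter_iff, hball hy, true_and, mem_preimage, mem_ofPred_eq] at h
    rw [h, hc, sub_pos]
  · rw [hm] at hy
    have h := Set.ext_iff.1 hbd y
    simp only [mem_inter_iff, hball hy, true_and, mem_preimage, mem_ofPred_eq] at h
    rw [h, hc, sub_eq_zero]

namespace GraphChart

variable {n : ℕ} (c : GraphChart n)

theorem one_le_K_real : (1 : ℝ) ≤ c.K := c.one_le_K

theorem continuous_psi : Continuous fun z : Euc n × ℝ => c.psi z.1 z.2 := by
  have h : (fun z : Euc n × ℝ => c.psi z.1 z.2) = fun z => c.psi z.1 0 + z.2 • c.v :=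
    funext fun z => c.psi_eq z.1 z.2
  rw [h]
  exact (c.lip_psi.continuous.comp continuous_fst).add (continuous_snd.smul continuous_const)

theorem dist_proj_le (y z : Euc (n + 1)) : dist (c.proj y) (c.proj z) ≤ dist y z := by
  have := c.proj_add z (y - z)
  rw [add_sub_cancel] at this
  rw [this, dist_eq_norm, add_sub_cancel_left, dist_eq_norm]
  exact c.norm_L _

theorem lipschitzWith_proj : LipschitzWith 1 c.proj :=
  LipschitzWith.of_dist_le_mul fun y z => by simpa using c.dist_proj_le y z

theorem abs_ht_sub_le (y z : Euc (n + 1)) : |c.ht y - c.ht z| ≤ c.K * dist y z :=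
  c.lip_ht.dist_le_mul y z

theorem dist_psi_le (x z : Euc n) (t s : ℝ) :
    dist (c.psi x t) (c.psi z s) ≤ c.K * dist x z + |t - s| := by
  rw [c.psi_eq x t, c.psi_eq z s]
  have h1 := c.lip_psi.dist_le_mul x z
  have h2 : dist (t • c.v) (s • c.v) = |t - s| := by
    rw [dist_eq_norm, ← sub_smul, norm_smul, c.norm_v, mul_one, Real.norm_eq_abs]
  exact (dist_add_add_le _ _ _ _).trans (by rw [h2]; gcongr)

/-- The part of the coordinate box of height `τ` lying over the ball `B(x₀, r)`. -/
def box (x₀ : Euc n) (r τ : ℝ) : Set (Euc (n + 1)) :=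
  {y | c.proj y ∈ ball x₀ r ∧ c.ht y ∈ Ioo 0 τ}

theorem isOpen_box (x₀ : Euc n) (r τ : ℝ) : IsOpen (c.box x₀ r τ) :=
  (isOpen_ball.preimage c.lipschitzWith_proj.continuous).inter
    (isOpen_Ioo.preimage c.lip_ht.continuous)

theorem setLIntegral_box {F : Euc (n + 1) → ℝ≥0∞} (hF : Measurable F) (x₀ : Euc n) (r τ : ℝ) :
    ∫⁻ y in c.box x₀ r τ, F y = ∫⁻ t in Ioo 0 τ, ∫⁻ x in ball x₀ r, F (c.psi x t) := by
  rw [← c.measurePreserving_psi.setLIntegral_comp_preimage (c.isOpen_box x₀ r τ).measurableSet hF]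
  have h : (fun z : Euc n × ℝ => c.psi z.1 z.2) ⁻¹' c.box x₀ r τ = ball x₀ r ×ˢ Ioo 0 τ := by
    ext z
    simp [box, c.proj_psi, c.ht_psi]
  rw [h, ← Measure.prod_restrict, lintegral_prod_symm]
  exact (hF.comp c.continuous_psi.measurable).aemeasurable

namespace Fits

variable {c} {Ω : Set (Euc (n + 1))} {Q₀ : Euc (n + 1)} {r : ℝ}

theorem mem_ball_of_le (h : c.Fits Ω Q₀ r) {y : Euc (n + 1)} {a : ℝ} (hy : dist y Q₀ < a * r)
    (ha : a ≤ 4 * c.K * (c.K + 1)) : y ∈ ball Q₀ (4 * c.K * (c.K + 1) * r) :=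
  mem_ball.2 (hy.trans_le (mul_le_mul_of_nonneg_right ha h.r_pos.le))

theorem psi_center (h : c.Fits Ω Q₀ r) : c.psi (c.proj Q₀) 0 = Q₀ := by
  have hK := c.one_le_K_real
  have hr := h.r_pos
  have h0 : c.ht Q₀ = 0 :=
    (h.mem_frontier_iff Q₀ (mem_ball_self (by positivity))).1 h.mem_frontier
  conv_lhs => rw [← h0]
  exact c.psi_proj_ht Q₀

theorem dist_psi_center_le (h : c.Fits Ω Q₀ r) (x : Euc n) (t : ℝ) :
    dist (c.psi x t) Q₀ ≤ c.K * dist x (c.proj Q₀) + |t| := by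
  have := c.dist_psi_le x (c.proj Q₀) t 0
  rwa [h.psi_center, sub_zero] at this

theorem psi_mem_frontier (h : c.Fits Ω Q₀ r) {z : Euc n}
    (hz : z ∈ ball (c.proj Q₀) (3 * r)) : c.psi z 0 ∈ frontier Ω := by
  have hK := c.one_le_K_real
  rw [h.mem_frontier_iff _ (h.mem_ball_of_le (a := 4 * c.K) _ _), c.ht_psi]
  · have := h.dist_psi_center_le z 0
    rw [mem_ball] at hz
    rw [abs_zero, add_zero] at this
    nlinarith [h.r_pos]
  · nlinarith

theorem dist_lt_of_mem_box (h : c.Fits Ω Q₀ r) {y : Euc (n + 1)}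
    (hy : y ∈ c.box (c.proj Q₀) r r) : dist y Q₀ < (c.K + 1) * r := by
  have hK := c.one_le_K_real
  have h1 := h.dist_psi_center_le (c.proj y) (c.ht y)
  rw [c.psi_proj_ht, abs_of_pos hy.2.1] at h1
  have h2 := mem_ball.1 hy.1
  nlinarith [hy.2.2]

theorem mem_of_mem_box (h : c.Fits Ω Q₀ r) {y : Euc (n + 1)}
    (hy : y ∈ c.box (c.proj Q₀) r r) : y ∈ Ω := by
  have hK := c.one_le_K_real
  rw [h.mem_iff y (h.mem_ball_of_le (h.dist_lt_of_mem_box hy) (by nlinarith))]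
  exact hy.2.1

theorem ht_le (h : c.Fits Ω Q₀ r) {y : Euc (n + 1)} (hy : dist y Q₀ < (c.K + 1) * r) :
    |c.ht y| ≤ c.K * infDist y (frontier Ω) ∧ ∃ P ∈ frontier Ω,
      infDist y (frontier Ω) = dist y P ∧ c.ht P = 0 := by
  have hK := c.one_le_K_real
  obtain ⟨P, hP, hd⟩ := isClosed_frontier.exists_infDist_eq_dist ⟨Q₀, h.mem_frontier⟩ y
  have h1 : infDist y (frontier Ω) ≤ dist y Q₀ := infDist_le_dist_of_mem h.mem_frontier
  have h2 : c.ht P = 0 := by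
    rw [← h.mem_frontier_iff P (h.mem_ball_of_le (a := 2 * (c.K + 1)) _ (by nlinarith))]
    · exact hP
    · have := dist_triangle_left P Q₀ y
      linarith
  refine ⟨?_, P, hP, hd, h2⟩
  have := c.abs_ht_sub_le y P
  rwa [h2, sub_zero, ← hd] at this

theorem infDist_le_ht (h : c.Fits Ω Q₀ r) {y : Euc (n + 1)}
    (hy : y ∈ c.box (c.proj Q₀) r r) : infDist y (frontier Ω) ≤ c.ht y := by
  have h1 : c.psi (c.proj y) 0 ∈ frontier Ω :=
    h.psi_mem_frontier (ball_subset_ball (by linarith [h.r_pos]) hy.1)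
  refine (infDist_le_dist_of_mem h1).trans ?_
  conv_lhs => rw [← c.psi_proj_ht y]
  rw [c.proj_psi]
  refine (c.dist_psi_le _ _ _ _).trans ?_
  rw [dist_self, mul_zero, zero_add, sub_zero, abs_of_pos hy.2.1]

/-- The shadow of a point of the box: a ball in the horizontal coordinates, of radius comparable
to the height, consisting of vertices of nontangential cones containing the point. -/
theorem exists_shadow (h : c.Fits Ω Q₀ r) {x : Euc n} (hx : x ∈ ball (c.proj Q₀) r) {t : ℝ}
    (ht : t ∈ Ioo 0 r) : ∃ z₀ : Euc n, ball z₀ (t / c.K ^ 2) ⊆ ball x (2 * t) ∧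
      ∀ z ∈ ball z₀ (t / c.K ^ 2), c.psi z 0 ∈ frontier Ω ∧
        dist (c.psi x t) (c.psi z 0) < 2 * infDist (c.psi x t) (frontier Ω) := by
  have hK := c.one_le_K_real
  have hbox : c.psi x t ∈ c.box (c.proj Q₀) r r := by
    simp only [box, mem_ofPred_eq, c.proj_psi, c.ht_psi]
    exact ⟨hx, ht⟩
  obtain ⟨h1, P, hP, hd, hP0⟩ := h.ht_le (h.dist_lt_of_mem_box hbox)
  rw [c.ht_psi, abs_of_pos ht.1] at h1
  have h2 := h.infDist_le_ht hbox
  rw [c.ht_psi] at h2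
  set δ := infDist (c.psi x t) (frontier Ω)
  have hPP : c.psi (c.proj P) 0 = P := by
    conv_lhs => rw [← hP0]
    exact c.psi_proj_ht P
  have h3 : dist (c.proj P) x ≤ t := by
    have := c.dist_proj_le P (c.psi x t)
    rw [c.proj_psi, dist_comm P, ← hd] at this
    exact this.trans h2
  have hsub : ball (c.proj P) (t / c.K ^ 2) ⊆ ball x (2 * t) := by
    refine ball_subset_ball' ?_
    have : t / c.K ^ 2 ≤ t := div_le_self ht.1.le (one_le_pow₀ hK)
    linarith
  refine ⟨c.proj P, hsub, fun z hz => ⟨?_, ?_⟩⟩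
  · refine h.psi_mem_frontier (mem_ball.2 ?_)
    have := dist_triangle z x (c.proj Q₀)
    linarith [mem_ball.1 (hsub hz), mem_ball.1 hx, ht.2]
  · have h4 := c.dist_psi_le (c.proj P) z 0 0
    rw [hPP, sub_zero, abs_zero, add_zero] at h4
    have h5 : dist (c.proj P) z < t / c.K ^ 2 := by rw [dist_comm]; exact hz
    have h6 : (c.K : ℝ) * (t / c.K ^ 2) ≤ δ := by
      rw [show (c.K : ℝ) * (t / c.K ^ 2) = t / c.K by field_simp, div_le_iff₀ (by positivity)]
      linarith
    have h7 := dist_triangle (c.psi x t) P (c.psi z 0)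
    have h8 : (c.K : ℝ) * dist (c.proj P) z < c.K * (t / c.K ^ 2) := by gcongr
    linarith

end Fits

end GraphChart

/-! ### Integrals over boundary layers -/

namespace GraphChart

variable {n : ℕ} {c : GraphChart n} {Ω : Set (Euc (n + 1))} {Q₀ : Euc (n + 1)} {r : ℝ}

namespace Fits

theorem setLIntegral_slice_le (h : c.Fits Ω Q₀ r) {F N : Euc (n + 1) → ℝ≥0∞} (hN : Measurable N)
    {t : ℝ} (ht : t ∈ Ioo 0 r)
    (hFN : ∀ y ∈ Ω, infDist y (frontier Ω) ≤ t → ∀ Q ∈ frontier Ω,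
      dist y Q < 2 * infDist y (frontier Ω) → F y ≤ N Q) :
    ∫⁻ x in ball (c.proj Q₀) r, F (c.psi x t) ≤
      ENNReal.ofReal ((2 * c.K ^ 2) ^ n) * ∫⁻ z in ball (c.proj Q₀) (3 * r), N (c.psi z 0) := by
  have hK := c.one_le_K_real
  have ht0 := ht.1
  set V : ℝ≥0∞ := ENNReal.ofReal ((t / c.K ^ 2) ^ n) * volume (ball (0 : Euc n) 1)
  have hvol : ∀ (x : Euc n) {s : ℝ}, 0 < s →
      volume (ball x s) = ENNReal.ofReal (s ^ n) * volume (ball (0 : Euc n) 1) := by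
    intro x s hs
    have := Measure.addHaar_ball_of_pos (volume : Measure (Euc n)) x hs
    rwa [finrank_euclideanSpace_fin] at this
  have hV0 : V ≠ 0 := by
    refine mul_ne_zero ?_ (measure_ball_pos volume _ one_pos).ne'
    simp only [ne_eq, ENNReal.ofReal_eq_zero, not_le]
    positivity
  have hVt : V ≠ ⊤ := ENNReal.mul_ne_top ENNReal.ofReal_ne_top measure_ball_lt_top.ne
  have hV2 : ∀ z : Euc n, volume (ball z (2 * t)) = ENNReal.ofReal ((2 * c.K ^ 2) ^ n) * V := by
    intro z
    rw [hvol z (by positivity), ← mul_assoc, ← ENNReal.ofReal_mul (by positivity), ← mul_pow]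
    congr 3
    field_simp
  set k : Euc n → Euc n → ℝ≥0∞ := fun x z =>
    {p : Euc n × Euc n | dist p.1 p.2 < 2 * t}.indicator (fun p => N (c.psi p.2 0)) (x, z)
  have hkm : Measurable (Function.uncurry k) := by
    refine Measurable.indicator ?_ ?_
    · exact hN.comp (c.lip_psi.continuous.measurable.comp measurable_snd)
    · exact measurableSet_lt (measurable_fst.dist measurable_snd) measurable_const
  have hpt : ∀ x ∈ ball (c.proj Q₀) r,
      V * F (c.psi x t) ≤ ∫⁻ z in ball (c.proj Q₀) (3 * r), k x z := by
    intro x hx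
    obtain ⟨z₀, hsub, hz⟩ := h.exists_shadow hx ht
    have hbox : c.psi x t ∈ c.box (c.proj Q₀) r r := by
      simp only [box, mem_ofPred_eq, c.proj_psi, c.ht_psi]
      exact ⟨hx, ht⟩
    have hδ := h.infDist_le_ht hbox
    rw [c.ht_psi] at hδ
    have hsub' : ball z₀ (t / c.K ^ 2) ⊆ ball (c.proj Q₀) (3 * r) := by
      refine hsub.trans (ball_subset_ball' ?_)
      linarith [mem_ball.1 hx, ht.2]
    calc V * F (c.psi x t) = ∫⁻ _ in ball z₀ (t / c.K ^ 2), F (c.psi x t) := by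
          rw [setLIntegral_const, hvol z₀ (by positivity), mul_comm]
      _ ≤ ∫⁻ z in ball z₀ (t / c.K ^ 2), k x z := by
          refine setLIntegral_mono' measurableSet_ball fun z hzb => ?_
          have hm : (x, z) ∈ {p : Euc n × Euc n | dist p.1 p.2 < 2 * t} := by
            have := hsub hzb
            rwa [mem_ball, dist_comm] at this
          simp only [k, indicator_of_mem hm]
          exact hFN _ (h.mem_of_mem_box hbox) hδ _ (hz z hzb).1 (hz z hzb).2
      _ ≤ _ := lintegral_mono_set hsub'
  have hmain : V * ∫⁻ x in ball (c.proj Q₀) r, F (c.psi x t) ≤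
      V * (ENNReal.ofReal ((2 * c.K ^ 2) ^ n) *
        ∫⁻ z in ball (c.proj Q₀) (3 * r), N (c.psi z 0)) := by
    calc V * ∫⁻ x in ball (c.proj Q₀) r, F (c.psi x t)
        = ∫⁻ x in ball (c.proj Q₀) r, V * F (c.psi x t) := (lintegral_const_mul' _ _ hVt).symm
      _ ≤ ∫⁻ x in ball (c.proj Q₀) r, ∫⁻ z in ball (c.proj Q₀) (3 * r), k x z :=
          setLIntegral_mono' measurableSet_ball hpt
      _ = ∫⁻ z in ball (c.proj Q₀) (3 * r), ∫⁻ x in ball (c.proj Q₀) r, k x z :=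
          lintegral_lintegral_swap hkm.aemeasurable
      _ ≤ ∫⁻ z in ball (c.proj Q₀) (3 * r),
            (ENNReal.ofReal ((2 * c.K ^ 2) ^ n) * V) * N (c.psi z 0) := by
          refine lintegral_mono fun z => ?_
          have hk : ∀ x, k x z = (ball z (2 * t)).indicator (fun _ => N (c.psi z 0)) x := by
            intro x
            by_cases hx : dist x z < 2 * t
            · simp [k, indicator, hx]
            · simp [k, indicator, hx]
          simp only [hk]
          refine (setLIntegral_le_lintegral _ _).trans ?_
          rw [lintegral_indicator_const measurableSet_ball, hV2, mul_comm]
      _ = _ := by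
          rw [lintegral_const_mul' _ _ (ENNReal.mul_ne_top ENNReal.ofReal_ne_top hVt)]
          ring
  exact (ENNReal.mul_le_mul_iff_right hV0 hVt).1 hmain

theorem setLIntegral_box_le (h : c.Fits Ω Q₀ r) {F N : Euc (n + 1) → ℝ≥0∞} (hF : Measurable F)
    (hN : Measurable N) {τ : ℝ} (hτ : τ ≤ r)
    (hFN : ∀ y ∈ Ω, infDist y (frontier Ω) < τ → ∀ Q ∈ frontier Ω,
      dist y Q < 2 * infDist y (frontier Ω) → F y ≤ N Q) :
    ∫⁻ y in c.box (c.proj Q₀) r τ, F y ≤ ENNReal.ofReal τ * (ENNReal.ofReal ((2 * c.K ^ 2) ^ n) *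
      ∫⁻ z in ball (c.proj Q₀) (3 * r), N (c.psi z 0)) := by
  rw [c.setLIntegral_box hF]
  calc ∫⁻ t in Ioo 0 τ, ∫⁻ x in ball (c.proj Q₀) r, F (c.psi x t)
      ≤ ∫⁻ _ in Ioo 0 τ, ENNReal.ofReal ((2 * c.K ^ 2) ^ n) *
          ∫⁻ z in ball (c.proj Q₀) (3 * r), N (c.psi z 0) := by
        refine setLIntegral_mono' measurableSet_Ioo fun t ht => ?_
        exact h.setLIntegral_slice_le hN ⟨ht.1, ht.2.trans_le hτ⟩
          fun y hy hδ => hFN y hy (hδ.trans_lt ht.2)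
    _ = _ := by
        rw [setLIntegral_const, Real.volume_Ioo, sub_zero, mul_comm]

/-- The image of Lebesgue measure under the graph parametrization. -/
def _root_.GraphChart.graphMeasure (c : GraphChart n) (x₀ : Euc n) (r : ℝ) :
    Measure (Euc (n + 1)) :=
  (volume.restrict (ball x₀ r)).map fun x => c.psi x 0

instance (x₀ : Euc n) (r : ℝ) : IsFiniteMeasure (c.graphMeasure x₀ r) := by
  have : IsFiniteMeasure ((volume : Measure (Euc n)).restrict (ball x₀ r)) :=
    isFiniteMeasure_restrict.2 measure_ball_lt_top.ne
  exact Measure.isFiniteMeasure_map _ _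

theorem graphMeasure_le (h : c.Fits Ω Q₀ r) : ∃ C : ℝ≥0∞, C ≠ ⊤ ∧
    c.graphMeasure (c.proj Q₀) (3 * r) ≤ C • sMeasure Ω := by
  have hH : (μH[(n : ℝ)] : Measure (Euc n)).IsAddHaarMeasure := by
    simpa using MeasureTheory.isAddHaarMeasure_hausdorffMeasure (E := EuclideanSpace ℝ (Fin n))
  set C := Measure.addHaarScalarFactor (volume : Measure (Euc n)) μH[(n : ℝ)]
  have hvol : (volume : Measure (Euc n)) = C • μH[(n : ℝ)] :=
    Measure.isAddLeftInvariant_eq_smul _ _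
  refine ⟨C, ENNReal.coe_ne_top, Measure.le_iff.2 fun s hs => ?_⟩
  have hpsi := c.lip_psi.continuous.measurable
  rw [graphMeasure, Measure.map_apply hpsi hs, Measure.restrict_apply (hpsi hs), hvol]
  simp only [Measure.smul_apply, smul_eq_mul, sMeasure, Measure.restrict_apply hs]
  rw [show ((n + 1 : ℕ) : ℝ) - 1 = n by push_cast; ring]
  have hsub : (fun x => c.psi x 0) ⁻¹' s ∩ ball (c.proj Q₀) (3 * r) ⊆
      c.proj '' (s ∩ frontier Ω) := by
    rintro x ⟨hx1, hx2⟩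
    exact ⟨c.psi x 0, ⟨hx1, h.psi_mem_frontier hx2⟩, c.proj_psi x 0⟩
  have h1 := c.lipschitzWith_proj.hausdorffMeasure_image_le (d := n) (Nat.cast_nonneg n)
    (s ∩ frontier Ω)
  rw [ENNReal.coe_one, ENNReal.one_rpow, one_mul] at h1
  exact mul_le_mul_right ((measure_mono hsub).trans h1) _

theorem lintegral_graphMeasure {N : Euc (n + 1) → ℝ≥0∞} (hN : Measurable N) (x₀ : Euc n) (r : ℝ) :
    ∫⁻ Q, N Q ∂(c.graphMeasure x₀ r) = ∫⁻ x in ball x₀ r, N (c.psi x 0) :=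
  lintegral_map hN c.lip_psi.continuous.measurable

end Fits

end GraphChart

/-! ### Hardy's inequality from nontangential boundary values -/

/-- Jensen's inequality on a set of finite measure. -/
theorem rpow_setLIntegral_le {α : Type*} [MeasurableSpace α] {μ : Measure α} {p q : ℝ}
    (hpq : p.HolderConjugate q) {f : α → ℝ≥0∞} (hf : Measurable f) (s : Set α) :
    (∫⁻ a in s, f a ∂μ) ^ p ≤ μ s ^ (p - 1) * ∫⁻ a in s, f a ^ p ∂μ := by
  have h := ENNReal.lintegral_mul_le_Lp_mul_Lq (μ.restrict s) hpq hf.aemeasurable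
    (aemeasurable_const (b := (1 : ℝ≥0∞)))
  simp only [Pi.mul_apply, mul_one, ENNReal.one_rpow, setLIntegral_one] at h
  refine (ENNReal.rpow_le_rpow h hpq.nonneg).trans_eq ?_
  rw [ENNReal.mul_rpow_of_nonneg _ _ hpq.nonneg, ← ENNReal.rpow_mul, ← ENNReal.rpow_mul,
    one_div_mul_cancel hpq.ne_zero, ENNReal.rpow_one, mul_comm, one_div_mul_eq_div,
    hpq.div_conj_eq_sub_one]

theorem measurable_indicator_of_continuousOn {α : Type*} [TopologicalSpace α] [MeasurableSpace α]
    [OpensMeasurableSpace α] {Ω : Set α} (hΩ : IsOpen Ω) {f : α → ℝ≥0∞}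
    (hf : ContinuousOn f Ω) : Measurable (Ω.indicator f) := by
  classical
  rw [← piecewise_eq_indicator]
  exact hf.measurable_piecewise continuousOn_const hΩ.measurableSet

namespace GraphChart.Fits

variable {n : ℕ} {c : GraphChart n} {Ω : Set (Euc (n + 1))} {Q₀ : Euc (n + 1)} {r : ℝ}

/-- At a point where the boundary has a tangent plane the nontangential cone contains
a cone about the normal direction. -/
theorem exists_cone (h : c.Fits Ω Q₀ r) {x : Euc n} (hx : x ∈ ball (c.proj Q₀) r)
    (hd : DifferentiableAt ℝ c.ht (c.psi x 0)) : ∃ e : Euc (n + 1), ‖e‖ = 1 ∧ ∃ r₁ > 0,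
      ∀ s ∈ Ioo 0 r₁, closedBall (c.psi x 0 + s • e) (s / 8) ⊆ ntCone Ω (c.psi x 0) := by
  have hK := c.one_le_K_real
  set Q := c.psi x 0
  set G : Euc (n + 1) := (InnerProductSpace.toDual ℝ (Euc (n + 1))).symm (fderiv ℝ c.ht Q)
  have hG : ∀ w, fderiv ℝ c.ht Q w = ⟪G, w⟫ := fun w =>
    (InnerProductSpace.toDual_symm_apply (x := w) (y := fderiv ℝ c.ht Q)).symm
  have hGv : ⟪G, c.v⟫ = 1 := by
    rw [← hG]
    have h1 : HasDerivAt (fun t : ℝ => Q + t • c.v) c.v 0 := by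
      simpa using ((hasDerivAt_id (0 : ℝ)).smul_const c.v).const_add Q
    have h2 : HasFDerivAt c.ht (fderiv ℝ c.ht Q) (Q + (0 : ℝ) • c.v) := by
      simpa using hd.hasFDerivAt
    have h3 := h2.comp_hasDerivAt (0 : ℝ) h1
    have h4 : c.ht ∘ (fun t : ℝ => Q + t • c.v) = id := by
      funext t
      simp only [Function.comp_apply, id, Q]
      rw [← c.psi_eq, c.ht_psi]
    rw [h4] at h3
    exact h3.unique (hasDerivAt_id 0)
  have hG1 : 1 ≤ ‖G‖ := by
    have := real_inner_le_norm G c.v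
    rwa [hGv, c.norm_v, mul_one] at this
  have hQ0 : dist Q Q₀ < c.K * r := by
    have := h.dist_psi_center_le x 0
    rw [abs_zero, add_zero] at this
    refine this.trans_lt ?_
    have := mem_ball.1 hx
    gcongr
  have hQht : c.ht Q = 0 := c.ht_psi x 0
  obtain ⟨ε, hε, hball⟩ := Metric.eventually_nhds_iff.1
    (hd.hasFDerivAt.isLittleO.def (show (0 : ℝ) < 1 / 32 by norm_num))
  refine ⟨‖G‖⁻¹ • G, by rw [norm_smul, norm_inv, norm_norm, inv_mul_cancel₀ (by positivity)],
    min ε r / 2, by have := h.r_pos; positivity, fun s hs => ?_⟩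
  set e := ‖G‖⁻¹ • G
  have he : ‖e‖ = 1 := by rw [norm_smul, norm_inv, norm_norm, inv_mul_cancel₀ (by positivity)]
  have hs0 := hs.1
  have hsε : 2 * s < ε := by linarith [hs.2, min_le_left ε r]
  have hsr : 2 * s < r := by linarith [hs.2, min_le_right ε r]
  have hyQ : dist (Q + s • e) Q = s := by
    rw [dist_eq_norm, add_sub_cancel_left, norm_smul, he, mul_one, Real.norm_of_nonneg hs0.le]
  have hpos : ∀ z, dist z (Q + s • e) < 7 / 8 * s →
      0 < c.ht z ∧ z ∈ ball Q₀ (4 * c.K * (c.K + 1) * r) := by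
    intro z hz
    have hzQ : dist z Q ≤ 2 * s := by linarith [dist_triangle z (Q + s • e) Q]
    refine ⟨?_, h.mem_ball_of_le (a := c.K + 1) ?_ (by nlinarith)⟩
    · have h1 := hball (hzQ.trans_lt hsε)
      rw [hQht, sub_zero, hG, Real.norm_eq_abs, ← dist_eq_norm] at h1
      have h2 : z - Q = s • e + (z - (Q + s • e)) := by abel
      have h3 : ⟪G, s • e⟫ = s * ‖G‖ := by
        rw [inner_smul_right, inner_smul_right, real_inner_self_eq_norm_sq]
        field_simp
      have h4 := abs_le.1 (abs_real_inner_le_norm G (z - (Q + s • e)))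
      rw [← dist_eq_norm] at h4
      have h5 : ‖G‖ * dist z (Q + s • e) ≤ ‖G‖ * (7 / 8 * s) := by gcongr
      rw [h2, inner_add_right, h3] at h1
      have h6 := (abs_le.1 h1).1
      nlinarith [h4.1]
    · linarith [dist_triangle z Q Q₀]
  have hinf : 7 / 8 * s ≤ infDist (Q + s • e) (frontier Ω) := by
    refine (le_infDist ⟨Q₀, h.mem_frontier⟩).2 fun z hz => ?_
    by_contra hlt
    rw [not_le, dist_comm] at hlt
    obtain ⟨h1, h2⟩ := hpos z hlt
    exact h1.ne' ((h.mem_frontier_iff z h2).1 hz)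
  intro y hy
  rw [mem_closedBall] at hy
  obtain ⟨h1, h2⟩ := hpos y (by linarith)
  refine ⟨(h.mem_iff y h2).2 h1, ?_⟩
  have h3 := infDist_le_infDist_add_dist (s := frontier Ω) (x := Q + s • e) (y := y)
  rw [dist_comm] at h3
  linarith [dist_triangle y (Q + s • e) Q]

theorem psi_mem (h : c.Fits Ω Q₀ r) {x : Euc n} (hx : x ∈ closedBall (c.proj Q₀) r) {t : ℝ}
    (ht : t ∈ Ioo 0 r) : c.psi x t ∈ Ω := by
  have hK := c.one_le_K_real
  rw [h.mem_iff, c.ht_psi]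
  · exact ht.1
  · refine h.mem_ball_of_le (a := c.K + 1) ?_ (by nlinarith)
    have := h.dist_psi_center_le x t
    rw [abs_of_pos ht.1] at this
    have h2 := mul_le_mul_of_nonneg_left (mem_closedBall.1 hx) (by positivity : (0 : ℝ) ≤ c.K)
    linarith [ht.2]

theorem enorm_sub_le (h : c.Fits Ω Q₀ r) (hΩ : IsOpen Ω) {w : Euc (n + 1) → ℝ}
    (hw : ContDiffOn ℝ (⊤ : ℕ∞) w Ω) {D : Euc (n + 1) → ℝ≥0∞}
    (hD : ∀ y ∈ Ω, ‖fderiv ℝ w y‖ₑ ≤ D y) {x : Euc n} (hx : x ∈ ball (c.proj Q₀) r)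
    {s t : ℝ} (hs : 0 < s) (hst : s ≤ t) (ht : t < r) :
    ‖w (c.psi x t) - w (c.psi x s)‖ₑ ≤ ∫⁻ τ in Ioo 0 t, D (c.psi x τ) := by
  have hmem : ∀ τ ∈ Icc s t, c.psi x τ ∈ Ω := fun τ hτ =>
    h.psi_mem (ball_subset_closedBall hx) ⟨hs.trans_le hτ.1, hτ.2.trans_lt ht⟩
  have hψ : ∀ τ, HasDerivAt (c.psi x) c.v τ := by
    intro τ
    have h1 : HasDerivAt (fun t : ℝ => c.psi x 0 + t • c.v) c.v τ := by
      simpa using ((hasDerivAt_id τ).smul_const c.v).const_add (c.psi x 0)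
    rwa [← funext (c.psi_eq x)] at h1
  have hψc : ContDiff ℝ 1 (c.psi x) := by
    rw [funext (c.psi_eq x)]
    fun_prop
  have hcd : ContDiffOn ℝ 1 (fun τ => w (c.psi x τ)) (Icc s t) :=
    (hw.of_le (by exact_mod_cast le_top)).comp hψc.contDiffOn hmem
  have hderiv : ∀ τ ∈ Icc s t, deriv (fun τ => w (c.psi x τ)) τ = fderiv ℝ w (c.psi x τ) c.v := by
    intro τ hτ
    have h1 : DifferentiableAt ℝ w (c.psi x τ) :=
      (hw.contDiffAt (hΩ.mem_nhds (hmem τ hτ))).differentiableAt (by simp)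
    exact (h1.hasFDerivAt.comp_hasDerivAt τ (hψ τ)).deriv
  refine (enorm_sub_le_lintegral_deriv_of_contDiffOn_Icc hcd hst).trans ?_
  calc ∫⁻ τ in Icc s t, ‖deriv (fun τ => w (c.psi x τ)) τ‖ₑ
      ≤ ∫⁻ τ in Icc s t, D (c.psi x τ) := by
        refine setLIntegral_mono' measurableSet_Icc fun τ hτ => ?_
        rw [hderiv τ hτ]
        refine (ContinuousLinearMap.le_opENorm _ _).trans ?_
        rw [show ‖c.v‖ₑ = 1 by rw [← ofReal_norm, c.norm_v, ENNReal.ofReal_one], mul_one]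
        exact hD _ (hmem τ hτ)
    _ ≤ ∫⁻ τ in Ioc 0 t, D (c.psi x τ) :=
        lintegral_mono_set fun τ hτ => ⟨hs.trans_le hτ.1, hτ.2⟩
    _ = _ := by rw [restrict_Ioo_eq_restrict_Ioc]

theorem ae_enorm_slice_le (h : c.Fits Ω Q₀ r) (hΩ : IsOpen Ω) {w : Euc (n + 1) → ℝ}
    (hw : ContDiffOn ℝ (⊤ : ℕ∞) w Ω)
    (hnt : ∀ᵐ x ∂volume.restrict (ball (c.proj Q₀) r), NTLim Ω w (c.psi x 0) 0)
    {D : Euc (n + 1) → ℝ≥0∞} (hDm : Measurable D)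
    (hD : ∀ y ∈ Ω, ‖fderiv ℝ w y‖ₑ ≤ D y) {t : ℝ} (ht : t ∈ Ioo 0 r)
    (hfin : ∫⁻ y in c.box (c.proj Q₀) r t, D y ≠ ⊤) :
    ∀ᵐ x ∂volume.restrict (ball (c.proj Q₀) r),
      ‖w (c.psi x t)‖ₑ ≤ ∫⁻ τ in Ioo 0 t, D (c.psi x τ) := by
  have hK := c.one_le_K_real
  set B := ball (c.proj Q₀) r
  set g : Euc n → ℝ≥0∞ := fun x => ∫⁻ τ in Ioo 0 t, D (c.psi x τ)
  have hDψ : Measurable (Function.uncurry fun (x : Euc n) (τ : ℝ) => D (c.psi x τ)) :=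
    hDm.comp c.continuous_psi.measurable
  have hgm : Measurable g := hDψ.lintegral_prod_right'
  have hgfin : ∫⁻ x in B, g x ≠ ⊤ := by
    rw [c.setLIntegral_box hDm] at hfin
    rwa [lintegral_lintegral_swap hDψ.aemeasurable]
  have hgae : ∀ᵐ x ∂volume, x ∈ B → g x < ⊤ :=
    (ae_restrict_iff' measurableSet_ball).1 (ae_lt_top hgm hgfin)
  set f : Euc n → ℝ := B.indicator fun x => ‖w (c.psi x t)‖ - (g x).toReal
  have hfi : Integrable f := by
    refine (integrable_indicator_iff measurableSet_ball).2 (Integrable.sub ?_ ?_)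
    · have hc : ContinuousOn (fun x => ‖w (c.psi x t)‖) (closedBall (c.proj Q₀) r) := by
        refine (hw.continuousOn.comp ?_ fun x hx => h.psi_mem hx ht).norm
        exact (c.continuous_psi.comp (by fun_prop : Continuous fun x : Euc n => (x, t))).continuousOn
      exact (hc.integrableOn_compact (isCompact_closedBall _ _)).mono_set ball_subset_closedBall
    · exact integrable_toReal_of_lintegral_ne_top hgm.aemeasurable hgfin
  have hleb := IsUnifLocDoublingMeasure.ae_tendsto_average (μ := volume)
    hfi.locallyIntegrable (8 * c.K)
  refine (ae_restrict_iff' measurableSet_ball).2 ?_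
  filter_upwards [hleb, c.ae_differentiableAt, (ae_restrict_iff' measurableSet_ball).1 hnt]
    with x hx hdiff hntx hxB
  obtain ⟨e, he, r₁, hr₁, hcone⟩ := h.exists_cone hxB hdiff
  set Q := c.psi x 0
  set X : ℝ → Euc n := fun s => c.proj (Q + s • e)
  have hXx : ∀ s : ℝ, 0 ≤ s → dist x (X s) ≤ s := by
    intro s hs
    have := c.dist_proj_le Q (Q + s • e)
    rw [c.proj_psi, dist_eq_norm Q, sub_add_cancel_left, norm_neg, norm_smul, he, mul_one,
      Real.norm_of_nonneg hs] at this
    exact this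
  have hlim := hx (l := 𝓝[>] (0 : ℝ)) X (fun s => s / (8 * c.K)) (by
      refine tendsto_nhdsWithin_iff.2 ⟨?_, ?_⟩
      · have : Tendsto (fun s : ℝ => s / (8 * c.K)) (𝓝 0) (𝓝 (0 / (8 * c.K))) :=
          tendsto_id.div_const _
        rw [zero_div] at this
        exact this.mono_left nhdsWithin_le_nhds
      · filter_upwards [self_mem_nhdsWithin] with s hs
        exact div_pos (mem_Ioi.1 hs) (by positivity)) (by
      filter_upwards [self_mem_nhdsWithin] with s hs
      rw [mem_closedBall, mul_div_cancel₀ _ (by positivity)]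
      exact hXx s (le_of_lt hs))
  have hle : f x ≤ 0 := by
    refine le_of_forall_pos_le_add fun ε hε => ?_
    rw [zero_add]
    refine le_of_tendsto hlim ?_
    obtain ⟨η, hη, hηw⟩ := Metric.tendsto_nhdsWithin_nhds.1 (hntx hxB) ε hε
    obtain ⟨ρ, hρ, hρB⟩ := Metric.isOpen_iff.1 isOpen_ball x hxB
    have hs₀ : 0 < min (min r₁ (η / 2)) (min (ρ / 2) (t / c.K)) := by
      have := ht.1
      positivity
    filter_upwards [Ioo_mem_nhdsGT hs₀] with s hs
    have hs0 := hs.1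
    have hsr₁ : s < r₁ := hs.2.trans_le ((min_le_left _ _).trans (min_le_left _ _))
    have hsη : s < η / 2 := hs.2.trans_le ((min_le_left _ _).trans (min_le_right _ _))
    have hsρ : s < ρ / 2 := hs.2.trans_le ((min_le_right _ _).trans (min_le_left _ _))
    have hst : s < t / c.K := hs.2.trans_le ((min_le_right _ _).trans (min_le_right _ _))
    have hδ : s / (8 * c.K) ≤ s / 8 :=
      div_le_div_of_nonneg_left hs0.le (by norm_num) (by linarith)
    have hsub : closedBall (X s) (s / (8 * c.K)) ⊆ B := by
      refine fun z hz => hρB (mem_ball.2 ?_)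
      have h1 := dist_triangle z (X s) x
      have h2 := hXx s hs0.le
      rw [dist_comm] at h2
      linarith [mem_closedBall.1 hz]
    set τ := c.ht (Q + s • e)
    have hyeq : c.psi (X s) τ = Q + s • e := c.psi_proj_ht _
    have hseQ : dist (Q + s • e) Q = s := by
      rw [dist_eq_norm, add_sub_cancel_left, norm_smul, he, mul_one, Real.norm_of_nonneg hs0.le]
    have hτt : τ ≤ t := by
      have h1 := c.abs_ht_sub_le (Q + s • e) Q
      rw [c.ht_psi, sub_zero, hseQ] at h1
      rw [lt_div_iff₀ (by positivity)] at hst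
      linarith [le_abs_self τ]
    have hnear : ∀ z ∈ closedBall (X s) (s / (8 * c.K)), c.psi z τ ∈ ntCone Ω Q ∧
        dist (c.psi z τ) Q < η := by
      intro z hz
      have h1 : dist (c.psi z τ) (Q + s • e) ≤ s / 8 := by
        rw [← hyeq]
        refine (c.dist_psi_le _ _ _ _).trans ?_
        rw [sub_self, abs_zero, add_zero]
        calc (c.K : ℝ) * dist z (X s) ≤ c.K * (s / (8 * c.K)) := by
              gcongr
              exact mem_closedBall.1 hz
          _ = s / 8 := by field_simp
      refine ⟨hcone s ⟨hs0, hsr₁⟩ (mem_closedBall.2 h1), ?_⟩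
      linarith [dist_triangle (c.psi z τ) (Q + s • e) Q]
    have hτ0 : 0 < τ := by
      have h1 : Q + s • e ∈ Ω := (hcone s ⟨hs0, hsr₁⟩ (mem_closedBall_self (by positivity))).1
      rwa [h.mem_iff] at h1
      refine h.mem_ball_of_le (a := c.K * 2) ?_ (by nlinarith)
      have h2 : dist (Q + s • e) Q₀ ≤ dist (Q + s • e) Q + dist Q Q₀ := dist_triangle _ _ _
      have h3 := h.dist_psi_center_le x 0
      rw [abs_zero, add_zero] at h3
      have h4 : (c.K : ℝ) * dist x (c.proj Q₀) < c.K * r := by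
        have := mem_ball.1 hxB
        gcongr
      have h5 : t / c.K ≤ r := (div_le_self ht.1.le hK).trans ht.2.le
      nlinarith [h.r_pos]
    have hbound : ∀ᵐ z ∂volume.restrict (closedBall (X s) (s / (8 * c.K))), f z ≤ ε := by
      refine (ae_restrict_iff' measurableSet_closedBall).2 ?_
      filter_upwards [hgae] with z hgz hz
      have hzB := hsub hz
      simp only [f, indicator_of_mem hzB]
      have h1 := h.enorm_sub_le hΩ hw hD hzB hτ0 hτt ht.2
      have h2 : ‖w (c.psi z t) - w (c.psi z τ)‖ ≤ (g z).toReal := by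
        have := ENNReal.toReal_mono (hgz hzB).ne h1
        rwa [toReal_enorm] at this
      have h3 := hηw (hnear z hz).1 (hnear z hz).2
      rw [dist_zero_right] at h3
      have h4 := norm_le_norm_add_norm_sub' (w (c.psi z t)) (w (c.psi z τ))
      linarith
    rw [setAverage_eq, smul_eq_mul]
    have hvp : 0 < volume.real (closedBall (X s) (s / (8 * c.K))) :=
      ENNReal.toReal_pos (measure_closedBall_pos volume _ (by positivity)).ne'
        measure_closedBall_lt_top.ne
    rw [inv_mul_le_iff₀ hvp]
    calc ∫ z in closedBall (X s) (s / (8 * c.K)), f z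
        ≤ ∫ _ in closedBall (X s) (s / (8 * c.K)), ε :=
          setIntegral_mono_ae_restrict hfi.integrableOn
            (integrableOn_const measure_closedBall_lt_top.ne) hbound
      _ = _ := by rw [setIntegral_const, smul_eq_mul]
  have hfx : f x = ‖w (c.psi x t)‖ - (g x).toReal := indicator_of_mem hxB _
  rw [hfx, sub_nonpos] at hle
  rw [← ofReal_norm]
  exact ENNReal.ofReal_le_of_le_toReal hle

theorem setLIntegral_box_enorm_rpow_le (h : c.Fits Ω Q₀ r) (hΩ : IsOpen Ω)
    {w : Euc (n + 1) → ℝ} (hw : ContDiffOn ℝ (⊤ : ℕ∞) w Ω)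
    (hnt : ∀ᵐ x ∂volume.restrict (ball (c.proj Q₀) r), NTLim Ω w (c.psi x 0) 0)
    {D : Euc (n + 1) → ℝ≥0∞} (hDm : Measurable D) (hD : ∀ y ∈ Ω, ‖fderiv ℝ w y‖ₑ ≤ D y)
    {p q : ℝ} (hpq : p.HolderConjugate q) {τ : ℝ} (hτ0 : 0 < τ) (hτ : τ ≤ r) :
    ∫⁻ y in c.box (c.proj Q₀) r τ, ‖w y‖ₑ ^ p ≤
      ENNReal.ofReal τ ^ p * ∫⁻ y in c.box (c.proj Q₀) r τ, D y ^ p := by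
  set B := ball (c.proj Q₀) r
  have hboxm := fun τ => (c.isOpen_box (c.proj Q₀) r τ).measurableSet
  by_cases htop : ∫⁻ y in c.box (c.proj Q₀) r τ, D y ^ p = ⊤
  · rw [htop, ENNReal.mul_top]
    · exact le_top
    · exact (ENNReal.rpow_pos (ENNReal.ofReal_pos.2 hτ0) ENNReal.ofReal_ne_top).ne'
  have hvol : volume (c.box (c.proj Q₀) r τ) ≠ ⊤ := by
    have := c.setLIntegral_box (measurable_const (a := (1 : ℝ≥0∞))) (c.proj Q₀) r τ
    simp only [setLIntegral_const, one_mul] at this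
    rw [this]
    exact ENNReal.mul_ne_top measure_ball_lt_top.ne (by simp)
  have hDfin : ∫⁻ y in c.box (c.proj Q₀) r τ, D y ≠ ⊤ := by
    have h1 := rpow_setLIntegral_le (μ := volume) hpq hDm (c.box (c.proj Q₀) r τ)
    have h2 : volume (c.box (c.proj Q₀) r τ) ^ (p - 1) *
        ∫⁻ y in c.box (c.proj Q₀) r τ, D y ^ p ≠ ⊤ :=
      ENNReal.mul_ne_top (ENNReal.rpow_ne_top_of_nonneg hpq.sub_one_pos.le hvol) htop
    intro h3
    rw [h3, ENNReal.top_rpow_of_pos hpq.pos] at h1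
    exact h2 (top_le_iff.1 h1)
  have hmono : ∀ t, t < τ → c.box (c.proj Q₀) r t ⊆ c.box (c.proj Q₀) r τ :=
    fun t ht y hy => ⟨hy.1, hy.2.1, hy.2.2.trans ht⟩
  have hDpm : Measurable fun y => D y ^ p := hDm.pow_const p
  have hslice : ∀ t ∈ Ioo 0 τ, ∫⁻ x in B, ‖w (c.psi x t)‖ₑ ^ p ≤
      ENNReal.ofReal τ ^ (p - 1) * ∫⁻ y in c.box (c.proj Q₀) r τ, D y ^ p := by
    intro t ht
    have h1 := h.ae_enorm_slice_le hΩ hw hnt hDm hD ⟨ht.1, ht.2.trans_le hτ⟩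
      (ne_top_of_le_ne_top hDfin (lintegral_mono_set (hmono t ht.2)))
    have hψm : Measurable (Function.uncurry fun (x : Euc n) (τ : ℝ) => D (c.psi x τ) ^ p) :=
      hDpm.comp c.continuous_psi.measurable
    calc ∫⁻ x in B, ‖w (c.psi x t)‖ₑ ^ p
        ≤ ∫⁻ x in B, ENNReal.ofReal τ ^ (p - 1) * ∫⁻ s in Ioo 0 τ, D (c.psi x s) ^ p := by
          refine lintegral_mono_ae ?_
          filter_upwards [h1] with x hx
          have hm : Measurable fun s => D (c.psi x s) :=
            hDm.comp (c.continuous_psi.comp (by fun_prop : Continuous fun s : ℝ => (x, s))).measurable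
          refine (ENNReal.rpow_le_rpow hx hpq.nonneg).trans
            ((rpow_setLIntegral_le hpq hm _).trans ?_)
          rw [Real.volume_Ioo, sub_zero]
          gcongr
          · exact hpq.sub_one_pos.le
          · exact ht.2.le
          · exact ht.2.le
      _ = _ := by
          rw [lintegral_const_mul' _ _
            (ENNReal.rpow_ne_top_of_nonneg hpq.sub_one_pos.le ENNReal.ofReal_ne_top),
            c.setLIntegral_box hDpm, lintegral_lintegral_swap hψm.aemeasurable]
  set F : Euc (n + 1) → ℝ≥0∞ := Ω.indicator fun y => ‖w y‖ₑ ^ p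
  have hFm : Measurable F := by
    have hcont : ContinuousOn (fun y => ‖w y‖ₑ ^ p) Ω :=
      (ENNReal.continuous_rpow_const.comp continuous_enorm).comp_continuousOn hw.continuousOn
    exact measurable_indicator_of_continuousOn hΩ hcont
  calc ∫⁻ y in c.box (c.proj Q₀) r τ, ‖w y‖ₑ ^ p
      = ∫⁻ y in c.box (c.proj Q₀) r τ, F y := by
        refine setLIntegral_congr_fun (hboxm τ) fun y hy => ?_
        have : y ∈ Ω := h.mem_of_mem_box ⟨hy.1, hy.2.1, hy.2.2.trans_le hτ⟩
        simp only [F, indicator_of_mem this]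
    _ = ∫⁻ t in Ioo 0 τ, ∫⁻ x in B, F (c.psi x t) := c.setLIntegral_box hFm _ _ _
    _ ≤ ∫⁻ _ in Ioo 0 τ, ENNReal.ofReal τ ^ (p - 1) *
          ∫⁻ y in c.box (c.proj Q₀) r τ, D y ^ p := by
        refine setLIntegral_mono' measurableSet_Ioo fun t ht => ?_
        refine le_trans (lintegral_mono fun x => ?_) (hslice t ht)
        exact indicator_le_self' (fun _ _ => zero_le) _
    _ = _ := by
        rw [setLIntegral_const, Real.volume_Ioo, sub_zero, mul_right_comm]
        congr 1
        have h0 : ENNReal.ofReal τ ≠ 0 := (ENNReal.ofReal_pos.2 hτ0).ne'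
        conv_lhs => rw [← ENNReal.rpow_one (ENNReal.ofReal τ), ← ENNReal.rpow_mul, one_mul]
        rw [← ENNReal.rpow_add _ _ h0 ENNReal.ofReal_ne_top, sub_add_cancel]

end GraphChart.Fits

/-! ### Estimates in thin boundary layers -/

/-- The points of `Ω` at distance less than `s` from the boundary. -/
def boundaryLayer (Ω : Set (Euc d)) (s : ℝ) : Set (Euc d) :=
  {y | y ∈ Ω ∧ infDist y (frontier Ω) < s}

theorem isOpen_boundaryLayer {Ω : Set (Euc d)} (hΩ : IsOpen Ω) (s : ℝ) :
    IsOpen (boundaryLayer Ω s) :=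
  hΩ.inter (isOpen_lt (continuous_infDist_pt _) continuous_const)

namespace GraphChart.Fits

variable {n : ℕ} {c : GraphChart n} {Ω : Set (Euc (n + 1))} {Q₀ : Euc (n + 1)} {r : ℝ}

theorem box_subset_boundaryLayer (h : c.Fits Ω Q₀ r) {τ : ℝ} (hτ : τ ≤ r) :
    c.box (c.proj Q₀) r τ ⊆ boundaryLayer Ω τ := by
  intro y hy
  have hy' : y ∈ c.box (c.proj Q₀) r r := ⟨hy.1, hy.2.1, hy.2.2.trans_le hτ⟩
  exact ⟨h.mem_of_mem_box hy', (h.infDist_le_ht hy').trans_lt hy.2.2⟩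

theorem mem_box (h : c.Fits Ω Q₀ r) {y P : Euc (n + 1)} (hy : y ∈ Ω)
    (hP : P ∈ ball Q₀ (r / 2)) (hyP : infDist y (frontier Ω) = dist y P) {s K : ℝ}
    (hK : c.K ≤ K) (hs : infDist y (frontier Ω) < s) (hs₀ : s ≤ r / 2) :
    y ∈ c.box (c.proj Q₀) r (K * s) := by
  have hr := h.r_pos
  have hK₁ := c.one_le_K_real
  have hd : dist y Q₀ < r := by
    have := dist_triangle y P Q₀
    rw [mem_ball] at hP
    linarith
  have h1 : dist y Q₀ < (c.K + 1) * r := by nlinarith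
  refine ⟨mem_ball.2 ((c.dist_proj_le _ _).trans_lt hd), ?_, ?_⟩
  · exact (h.mem_iff y (h.mem_ball_of_le h1 (by nlinarith))).1 hy
  · have h2 := (h.ht_le h1).1
    have h3 : (c.K : ℝ) * infDist y (frontier Ω) < c.K * s := by gcongr
    have h4 : (c.K : ℝ) * s ≤ K * s :=
      mul_le_mul_of_nonneg_right hK (infDist_nonneg.trans hs.le)
    linarith [le_abs_self (c.ht y)]

theorem ae_of_ae_sMeasure (h : c.Fits Ω Q₀ r) {P : Euc (n + 1) → Prop}
    (hP : ∀ᵐ Q ∂sMeasure Ω, P Q) :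
    ∀ᵐ x ∂volume.restrict (ball (c.proj Q₀) r), P (c.psi x 0) := by
  obtain ⟨C, -, hC⟩ := h.graphMeasure_le
  have h1 : ∀ᵐ Q ∂c.graphMeasure (c.proj Q₀) (3 * r), P Q :=
    (Measure.absolutelyContinuous_of_le_smul hC).ae_le hP
  have h2 := ae_of_ae_map c.lip_psi.continuous.measurable.aemeasurable h1
  exact ae_mono (Measure.restrict_mono (ball_subset_ball (by linarith [h.r_pos])) le_rfl) h2

end GraphChart.Fits

theorem setLIntegral_biUnion_finset_le {α ι : Type*} [MeasurableSpace α] {μ : Measure α}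
    (t : Finset ι) (s : ι → Set α) (f : α → ℝ≥0∞) :
    ∫⁻ a in ⋃ i ∈ t, s i, f a ∂μ ≤ ∑ i ∈ t, ∫⁻ a in s i, f a ∂μ := by
  classical
  induction t using Finset.induction_on with
  | empty => simp
  | insert i t hi ih =>
    rw [Finset.set_biUnion_insert, Finset.sum_insert hi]
    exact (lintegral_union_le _ _ _).trans (by gcongr)

theorem IsLipschitzDomain.exists_layer_estimates {n : ℕ} {Ω : Set (Euc (n + 1))}
    (hΩ : IsLipschitzDomain Ω) :
    ∃ (ν : Measure (Euc (n + 1))) (C C' : ℝ≥0∞) (K : ℝ), IsFiniteMeasure ν ∧ C ≠ ⊤ ∧ C' ≠ ⊤ ∧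
      1 ≤ K ∧ ν ≤ C' • sMeasure Ω ∧ ∀ᶠ s in 𝓝[>] (0 : ℝ),
      (∀ F N : Euc (n + 1) → ℝ≥0∞, Measurable F → Measurable N →
        (∀ y ∈ Ω, infDist y (frontier Ω) < K * s → ∀ Q ∈ frontier Ω,
          dist y Q < 2 * infDist y (frontier Ω) → F y ≤ N Q) →
        ∫⁻ y in boundaryLayer Ω s, F y ≤ ENNReal.ofReal (K * s) * (C * ∫⁻ Q, N Q ∂ν)) ∧
      (∀ (w : Euc (n + 1) → ℝ) (D : Euc (n + 1) → ℝ≥0∞) (p q : ℝ), p.HolderConjugate q →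
        ContDiffOn ℝ (⊤ : ℕ∞) w Ω → (∀ᵐ Q ∂sMeasure Ω, NTLim Ω w Q 0) → Measurable D →
        (∀ y ∈ Ω, ‖fderiv ℝ w y‖ₑ ≤ D y) →
        ∫⁻ y in boundaryLayer Ω s, ‖w y‖ₑ ^ p ≤
          C * (ENNReal.ofReal (K * s) ^ p * ∫⁻ y in boundaryLayer Ω (K * s), D y ^ p)) := by
  have hopen := hΩ.1
  have hcpt : IsCompact (frontier Ω) :=
    Metric.isCompact_of_isClosed_isBounded isClosed_frontier
      (hΩ.2.1.closure.subset frontier_subset_closure)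
  have hne : (frontier Ω).Nonempty := by
    refine nonempty_frontier_iff.2 ⟨hΩ.2.2.1.nonempty, fun h => ?_⟩
    exact NormedSpace.unbounded_univ ℝ (Euc (n + 1)) (h ▸ hΩ.2.1)
  choose c r hfit using fun Q : frontier Ω => hΩ.exists_fits Q.2
  choose C' hC'top hC' using fun Q => (hfit Q).graphMeasure_le
  obtain ⟨t, ht⟩ := hcpt.elim_finite_subcover (fun Q : frontier Ω => ball (Q : Euc (n + 1)) (r Q / 2))
    (fun _ => isOpen_ball) fun Q hQ =>
      mem_iUnion.2 ⟨⟨Q, hQ⟩, mem_ball_self (half_pos (hfit ⟨Q, hQ⟩).r_pos)⟩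
  set K : ℝ := 1 + ∑ Q ∈ t, ((c Q).K : ℝ)
  have hKQ : ∀ Q ∈ t, ((c Q).K : ℝ) ≤ K := fun Q hQ => by
    have := Finset.single_le_sum (f := fun Q => ((c Q).K : ℝ)) (fun _ _ => NNReal.coe_nonneg _) hQ
    linarith
  have hK1 : 1 ≤ K := le_add_of_nonneg_right (Finset.sum_nonneg fun _ _ => NNReal.coe_nonneg _)
  set A : frontier Ω → ℝ≥0∞ := fun Q => ENNReal.ofReal ((2 * (c Q).K ^ 2) ^ n)
  set ν : Measure (Euc (n + 1)) := ∑ Q ∈ t, (c Q).graphMeasure ((c Q).proj Q) (3 * r Q)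
  refine ⟨ν, ∑ Q ∈ t, (A Q + 1), ∑ Q ∈ t, C' Q, K, ?_, ?_, ?_, hK1, ?_, ?_⟩
  · refine ⟨?_⟩
    rw [Measure.finsetSum_apply]
    exact ENNReal.sum_lt_top.2 fun Q _ => measure_lt_top _ _
  · exact ENNReal.sum_ne_top.2 fun Q _ =>
      ENNReal.add_ne_top.2 ⟨ENNReal.ofReal_ne_top, ENNReal.one_ne_top⟩
  · exact ENNReal.sum_ne_top.2 fun Q _ => hC'top Q
  · rw [Finset.sum_smul]
    exact Finset.sum_le_sum fun Q _ => hC' Q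
  have hsmall : ∀ᶠ s in 𝓝[>] (0 : ℝ), ∀ Q ∈ t, K * s < r Q / 2 := by
    refine (Filter.eventually_all_finset t).2 fun Q _ => ?_
    have : Tendsto (fun s : ℝ => K * s) (𝓝[>] 0) (𝓝 (K * 0)) :=
      (tendsto_id.const_mul K).mono_left nhdsWithin_le_nhds
    rw [mul_zero] at this
    exact this.eventually_lt_const (half_pos (hfit Q).r_pos)
  filter_upwards [hsmall, self_mem_nhdsWithin] with s hs hs0
  rw [mem_Ioi] at hs0
  have hsK : s ≤ K * s := le_mul_of_one_le_left hs0.le hK1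
  have hKr : ∀ Q ∈ t, K * s ≤ r Q := fun Q hQ => by linarith [hs Q hQ, (hfit Q).r_pos]
  have hcover : boundaryLayer Ω s ⊆ ⋃ Q ∈ t, (c Q).box ((c Q).proj Q) (r Q) (K * s) := by
    rintro y ⟨hy, hys⟩
    obtain ⟨P, hP, hd⟩ := isClosed_frontier.exists_infDist_eq_dist hne y
    obtain ⟨Q, hQ, hPQ⟩ := mem_iUnion₂.1 (ht hP)
    exact mem_iUnion₂.2 ⟨Q, hQ, (hfit Q).mem_box hy hPQ hd (hKQ Q hQ) hys
      (hsK.trans (hs Q hQ).le)⟩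
  have hsum : ∀ f : Euc (n + 1) → ℝ≥0∞, ∫⁻ y in boundaryLayer Ω s, f y ≤
      ∑ Q ∈ t, ∫⁻ y in (c Q).box ((c Q).proj Q) (r Q) (K * s), f y := fun f =>
    (lintegral_mono_set hcover).trans (setLIntegral_biUnion_finset_le t _ f)
  refine ⟨fun F N hF hN hFN => ?_, fun w D p q hpq hw hnt hDm hD => ?_⟩
  · refine (hsum F).trans ?_
    rw [Finset.sum_mul, Finset.mul_sum]
    refine Finset.sum_le_sum fun Q hQ => ?_
    refine ((hfit Q).setLIntegral_box_le hF hN (hKr Q hQ) hFN).trans ?_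
    rw [← GraphChart.Fits.lintegral_graphMeasure hN]
    gcongr
    · exact le_self_add
    · exact Finset.single_le_sum (f := fun Q => (c Q).graphMeasure ((c Q).proj Q) (3 * r Q))
        (fun _ _ => Measure.zero_le _) hQ
  · refine (hsum _).trans ?_
    rw [Finset.sum_mul]
    refine Finset.sum_le_sum fun Q hQ => ?_
    refine ((hfit Q).setLIntegral_box_enorm_rpow_le hopen hw ((hfit Q).ae_of_ae_sMeasure hnt)
      hDm hD hpq (hs0.trans_le hsK) (hKr Q hQ)).trans ?_
    refine le_trans ?_ (le_mul_of_one_le_left' le_add_self)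
    gcongr
    exact (hfit Q).box_subset_boundaryLayer (hKr Q hQ)

/-! ### Rates of decay at the boundary -/

/-- The `p`-th power integral of `f` over the boundary layer of width `s` is at most
`s ^ m * o s` for small `s`. -/
def LayerBound (Ω : Set (Euc d)) (p m : ℝ) (f : Euc d → ℝ) (o : ℝ → ℝ≥0∞) : Prop :=
  ∀ᶠ s in 𝓝[>] (0 : ℝ), ∫⁻ y in boundaryLayer Ω s, ‖f y‖ₑ ^ p ≤ ENNReal.ofReal s ^ m * o s

theorem norm_fderiv_le_sum_pder (w : Euc d → ℝ) (y : Euc d) :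
    ‖fderiv ℝ w y‖ₑ ≤ ∑ i, ‖pder i w y‖ₑ := by
  have h : ‖fderiv ℝ w y‖ ≤ ∑ i, ‖pder i w y‖ := by
    refine ContinuousLinearMap.opNorm_le_bound _ (Finset.sum_nonneg fun _ _ => norm_nonneg _)
      fun v => ?_
    have hv : v = ∑ i, v i • EuclideanSpace.single i (1 : ℝ) := by
      ext j
      simp [Finset.sum_apply, Pi.single_apply]
    conv_lhs => rw [hv]
    rw [map_sum, Finset.sum_mul]
    refine (norm_sum_le _ _).trans (Finset.sum_le_sum fun i _ => ?_)
    rw [map_smul, smul_eq_mul, norm_mul, mul_comm]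
    exact mul_le_mul_of_nonneg_left (PiLp.norm_apply_le v i) (norm_nonneg _)
  calc ‖fderiv ℝ w y‖ₑ = ENNReal.ofReal ‖fderiv ℝ w y‖ := (ofReal_norm _).symm
    _ ≤ ENNReal.ofReal (∑ i, ‖pder i w y‖) := ENNReal.ofReal_le_ofReal h
    _ = _ := by
      rw [ENNReal.ofReal_sum_of_nonneg fun _ _ => norm_nonneg _]
      simp only [ofReal_norm]

theorem tendsto_const_mul_nhdsGT_zero {K : ℝ} (hK : 0 < K) :
    Tendsto (fun s : ℝ => K * s) (𝓝[>] 0) (𝓝[>] 0) := by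
  refine tendsto_nhdsWithin_iff.2 ⟨?_, ?_⟩
  · have : Tendsto (fun s : ℝ => K * s) (𝓝[>] 0) (𝓝 (K * 0)) :=
      (tendsto_id.const_mul K).mono_left nhdsWithin_le_nhds
    rwa [mul_zero] at this
  · filter_upwards [self_mem_nhdsWithin] with s hs
    exact mul_pos hK hs

/-- **Hardy's inequality**: a function with vanishing nontangential boundary values decays one
order faster than its gradient. -/
theorem IsLipschitzDomain.exists_layerBound_of_pder {n : ℕ} {Ω : Set (Euc (n + 1))}
    (hΩ : IsLipschitzDomain Ω) {p q : ℝ} (hpq : p.HolderConjugate q) (m : ℝ) :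
    ∃ (A : ℝ≥0∞) (K : ℝ), A ≠ ⊤ ∧ 0 < K ∧ ∀ (w : Euc (n + 1) → ℝ) (o : ℝ → ℝ≥0∞),
      ContDiffOn ℝ (⊤ : ℕ∞) w Ω → (∀ᵐ Q ∂sMeasure Ω, NTLim Ω w Q 0) →
      (∀ i, LayerBound Ω p m (pder i w) o) →
      LayerBound Ω p (m + p) w fun s => A * o (K * s) := by
  obtain ⟨ν, C, C', K, -, hC, -, hK, -, hlay⟩ := hΩ.exists_layer_estimates
  have hK0 : 0 < K := one_pos.trans_le hK
  have hK' : ENNReal.ofReal K ≠ 0 := (ENNReal.ofReal_pos.2 hK0).ne'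
  set B : ℝ≥0∞ := (((n + 1 : ℝ≥0) ^ (p - 1) : ℝ≥0) : ℝ≥0∞)
  refine ⟨C * (B * (n + 1)) * ENNReal.ofReal K ^ (m + p), K, ?_, hK0, fun w o hw hnt hb => ?_⟩
  · exact ENNReal.mul_ne_top (ENNReal.mul_ne_top hC (ENNReal.mul_ne_top ENNReal.coe_ne_top
      (by finiteness))) (ENNReal.rpow_ne_top_of_ne_zero hK' ENNReal.ofReal_ne_top)
  set D : Euc (n + 1) → ℝ≥0∞ := Ω.indicator fun y => ∑ i, ‖pder i w y‖ₑ
  have hDm : Measurable D := measurable_indicator_of_continuousOn hΩ.1 <|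
    continuousOn_finsetSum _ fun i _ => (contDiffOn_pder hΩ.1 hw i).continuousOn.enorm
  have hD : ∀ y ∈ Ω, ‖fderiv ℝ w y‖ₑ ≤ D y := fun y hy => by
    simp only [D, indicator_of_mem hy]
    exact norm_fderiv_le_sum_pder w y
  have hev := (tendsto_const_mul_nhdsGT_zero hK0).eventually (eventually_all.2 hb)
  filter_upwards [hlay, hev, self_mem_nhdsWithin] with s hs hbs hs0
  rw [mem_Ioi] at hs0
  refine (hs.2 w D p q hpq hw hnt hDm hD).trans ?_
  have hDp : ∫⁻ y in boundaryLayer Ω (K * s), D y ^ p ≤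
      B * ((n + 1) * (ENNReal.ofReal (K * s) ^ m * o (K * s))) := by
    calc ∫⁻ y in boundaryLayer Ω (K * s), D y ^ p
        ≤ ∫⁻ y in boundaryLayer Ω (K * s), B * ∑ i, ‖pder i w y‖ₑ ^ p := by
          refine setLIntegral_mono' (isOpen_boundaryLayer hΩ.1 _).measurableSet fun y hy => ?_
          simp only [D, indicator_of_mem hy.1]
          have := NNReal.rpow_sum_le_const_mul_sum_rpow Finset.univ
            (fun i : Fin (n + 1) => ‖pder i w y‖₊) hpq.lt.le
          have h2 := ENNReal.coe_le_coe.2 this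
          simpa [ENNReal.coe_rpow_of_nonneg _ hpq.nonneg, B, enorm] using h2
      _ = B * ∑ i, ∫⁻ y in boundaryLayer Ω (K * s), ‖pder i w y‖ₑ ^ p := by
          rw [lintegral_const_mul' _ _ ENNReal.coe_ne_top, lintegral_finsetSum']
          intro i _
          have hc : ContinuousOn (fun y => ‖pder i w y‖ₑ ^ p) (boundaryLayer Ω (K * s)) :=
            ENNReal.continuous_rpow_const.comp_continuousOn
              ((contDiffOn_pder hΩ.1 hw i).continuousOn.enorm.mono fun y hy => hy.1)
          exact hc.aemeasurable (isOpen_boundaryLayer hΩ.1 _).measurableSet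
      _ ≤ B * ∑ _i : Fin (n + 1), (ENNReal.ofReal (K * s) ^ m * o (K * s)) := by
          gcongr with i
          exact hbs i
      _ = _ := by simp
  have hKs : ENNReal.ofReal (K * s) ≠ 0 := (ENNReal.ofReal_pos.2 (by positivity)).ne'
  calc C * (ENNReal.ofReal (K * s) ^ p * ∫⁻ y in boundaryLayer Ω (K * s), D y ^ p)
      ≤ C * (ENNReal.ofReal (K * s) ^ p *
          (B * ((n + 1) * (ENNReal.ofReal (K * s) ^ m * o (K * s))))) := by gcongr
    _ = C * (B * (n + 1)) * ENNReal.ofReal (K * s) ^ (m + p) * o (K * s) := by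
        rw [ENNReal.rpow_add _ _ hKs ENNReal.ofReal_ne_top]
        ring
    _ = _ := by
        rw [ENNReal.ofReal_mul hK0.le, ENNReal.mul_rpow_of_ne_top ENNReal.ofReal_ne_top
          ENNReal.ofReal_ne_top]
        ring

/-- Pairing two decaying functions by Hölder's inequality. -/
theorem LayerBound.tendsto_mul {Ω : Set (Euc d)} (hΩ : IsOpen Ω) {p q : ℝ}
    (hpq : p.HolderConjugate q) {f g : Euc d → ℝ} (hf : ContinuousOn f Ω) (hg : ContinuousOn g Ω)
    {a b : ℝ} {A : ℝ≥0∞} (hA : A ≠ ⊤) {o : ℝ → ℝ≥0∞} (ho : Tendsto o (𝓝[>] 0) (𝓝 0))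
    (hfb : LayerBound Ω p a f fun _ => A) (hgb : LayerBound Ω q b g o) {k : ℕ}
    (hk : a / p + b / q = k) :
    Tendsto (fun s : ℝ => (ENNReal.ofReal s)⁻¹ ^ k *
      ∫⁻ y in boundaryLayer Ω s, ‖f y‖ₑ * ‖g y‖ₑ) (𝓝[>] 0) (𝓝 0) := by
  have hlim : Tendsto (fun s => A ^ (1 / p) * o s ^ (1 / q)) (𝓝[>] 0) (𝓝 0) := by
    have h1 := (ENNReal.continuous_rpow_const (y := 1 / q)).tendsto 0 |>.comp ho
    rw [ENNReal.zero_rpow_of_pos hpq.symm.one_div_pos] at h1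
    have h2 := ENNReal.Tendsto.const_mul (a := A ^ (1 / p)) h1
      (Or.inr (ENNReal.rpow_ne_top_of_nonneg hpq.one_div_nonneg hA))
    rwa [mul_zero] at h2
  refine tendsto_of_tendsto_of_tendsto_of_le_of_le' tendsto_const_nhds hlim
    (Eventually.of_forall fun _ => zero_le) ?_
  filter_upwards [hfb, hgb, self_mem_nhdsWithin] with s hfs hgs hs0
  rw [mem_Ioi] at hs0
  have hS : ENNReal.ofReal s ≠ 0 := (ENNReal.ofReal_pos.2 hs0).ne'
  have hS' : ENNReal.ofReal s ≠ ⊤ := ENNReal.ofReal_ne_top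
  have hm := (isOpen_boundaryLayer hΩ s).measurableSet
  have hsub : boundaryLayer Ω s ⊆ Ω := fun y hy => hy.1
  have h1 := ENNReal.lintegral_mul_le_Lp_mul_Lq (volume.restrict (boundaryLayer Ω s)) hpq
    ((hf.mono hsub).enorm.aemeasurable hm) ((hg.mono hsub).enorm.aemeasurable hm)
  simp only [Pi.mul_apply] at h1
  calc (ENNReal.ofReal s)⁻¹ ^ k * ∫⁻ y in boundaryLayer Ω s, ‖f y‖ₑ * ‖g y‖ₑ
      ≤ (ENNReal.ofReal s)⁻¹ ^ k * ((ENNReal.ofReal s ^ a * A) ^ (1 / p) *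
          (ENNReal.ofReal s ^ b * o s) ^ (1 / q)) := by
        refine mul_le_mul_right (h1.trans ?_) _
        gcongr
        · exact hpq.one_div_nonneg
        · exact hpq.symm.one_div_nonneg
    _ = (ENNReal.ofReal s)⁻¹ ^ k * ENNReal.ofReal s ^ k * (A ^ (1 / p) * o s ^ (1 / q)) := by
        rw [ENNReal.mul_rpow_of_nonneg _ _ hpq.one_div_nonneg,
          ENNReal.mul_rpow_of_nonneg _ _ hpq.symm.one_div_nonneg, ← ENNReal.rpow_mul,
          ← ENNReal.rpow_mul, mul_one_div, mul_one_div,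
          ← ENNReal.rpow_natCast (ENNReal.ofReal s) k, ← hk, ENNReal.rpow_add _ _ hS hS']
        ring
    _ = _ := by
        rw [← mul_pow, ENNReal.inv_mul_cancel hS hS', one_pow, one_mul]

/-! ### Decay from nontangential maximal functions -/

/-- The nontangential maximal function over the part of the cone within distance `s` of the
boundary. -/
def truncMax (Ω : Set (Euc d)) (w : Euc d → ℝ) (s : ℝ) (Q : Euc d) : ℝ≥0∞ :=
  ⨆ x ∈ boundaryLayer Ω s, (ball x (2 * infDist x (frontier Ω))).indicator (fun _ => ‖w x‖ₑ) Q

theorem measurable_truncMax (Ω : Set (Euc d)) (w : Euc d → ℝ) (s : ℝ) :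
    Measurable (truncMax Ω w s) :=
  (lowerSemicontinuous_biSup fun _ _ =>
    isOpen_ball.lowerSemicontinuous_indicator zero_le).measurable

theorem enorm_le_truncMax {Ω : Set (Euc d)} (w : Euc d → ℝ) {s : ℝ} {Q y : Euc d} (hy : y ∈ Ω)
    (hs : infDist y (frontier Ω) < s) (hQ : dist y Q < 2 * infDist y (frontier Ω)) :
    ‖w y‖ₑ ≤ truncMax Ω w s Q := by
  refine le_trans ?_ (le_iSup₂ (f := fun x (_ : x ∈ boundaryLayer Ω s) =>
    (ball x (2 * infDist x (frontier Ω))).indicator (fun _ => ‖w x‖ₑ) Q) y ⟨hy, hs⟩)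
  rw [indicator_of_mem (by rwa [mem_ball, dist_comm])]

theorem truncMax_le {Ω : Set (Euc d)} {w : Euc d → ℝ} {s : ℝ} {Q : Euc d} {a : ℝ≥0∞}
    (h : ∀ y ∈ ntCone Ω Q, infDist y (frontier Ω) < s → ‖w y‖ₑ ≤ a) :
    truncMax Ω w s Q ≤ a := by
  refine iSup₂_le fun x hx => ?_
  by_cases hQ : Q ∈ ball x (2 * infDist x (frontier Ω))
  · rw [indicator_of_mem hQ]
    exact h x ⟨hx.1, by rwa [dist_comm]⟩ hx.2
  · rw [indicator_of_notMem hQ]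
    exact zero_le

theorem enorm_le_ntMax {Ω : Set (Euc d)} (w : Euc d → ℝ) {Q y : Euc d} (hy : y ∈ ntCone Ω Q) :
    ‖w y‖ₑ ≤ ntMax Ω w Q :=
  le_iSup₂ (f := fun x (_ : x ∈ ntCone Ω Q) => (‖w x‖₊ : ℝ≥0∞)) y hy

theorem lintegral_ntMax_lt_top {Ω : Set (Euc d)} {w : Euc d → ℝ} {p : ℝ} (hp : 0 < p)
    (h : ntMaxLp Ω w p < ⊤) : ∫⁻ Q, ntMax Ω w Q ^ p ∂sMeasure Ω < ⊤ :=
  (ENNReal.rpow_lt_top_iff_of_pos (one_div_pos.2 hp)).1 h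

theorem measurable_ntMax (Ω : Set (Euc d)) (w : Euc d → ℝ) : Measurable (ntMax Ω w) := by
  have h : ntMax Ω w = fun Q => ⨆ x ∈ Ω,
      (ball x (2 * infDist x (frontier Ω))).indicator (fun _ => ‖w x‖ₑ) Q := by
    funext Q
    refine le_antisymm (iSup₂_le fun x hx => ?_) (iSup₂_le fun x hx => ?_)
    · refine le_trans ?_ (le_iSup₂ (f := fun x (_ : x ∈ Ω) =>
        (ball x (2 * infDist x (frontier Ω))).indicator (fun _ => ‖w x‖ₑ) Q) x hx.1)
      have hQ : Q ∈ ball x (2 * infDist x (frontier Ω)) := by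
        rw [mem_ball, dist_comm]
        exact hx.2
      rw [indicator_of_mem hQ]
      exact le_rfl
    · by_cases hQ : Q ∈ ball x (2 * infDist x (frontier Ω))
      · rw [indicator_of_mem hQ]
        exact enorm_le_ntMax w ⟨hx, by rwa [dist_comm]⟩
      · rw [indicator_of_notMem hQ]
        exact zero_le
  rw [h]
  exact (lowerSemicontinuous_biSup fun _ _ =>
    isOpen_ball.lowerSemicontinuous_indicator zero_le).measurable

section

variable {n : ℕ} {Ω : Set (Euc (n + 1))}

theorem IsLipschitzDomain.layerBound_of_ntMaxLp (hΩ : IsLipschitzDomain Ω) {p : ℝ} (hp : 1 ≤ p)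
    {f w : Euc (n + 1) → ℝ} (hf : ContinuousOn f Ω) {B : ℝ≥0∞} (hB : B ≠ ⊤)
    (hfw : ∀ y ∈ Ω, ‖f y‖ₑ ≤ ‖w y‖ₑ + B) (hw : ntMaxLp Ω w p < ⊤) :
    ∃ A : ℝ≥0∞, A ≠ ⊤ ∧ LayerBound Ω p 1 f fun _ => A := by
  have hp0 : 0 < p := one_pos.trans_le hp
  obtain ⟨ν, C, C', K, hν, hC, hC', hK, hνσ, hlay⟩ := hΩ.exists_layer_estimates
  set N : Euc (n + 1) → ℝ≥0∞ := fun Q => (ntMax Ω w Q + B) ^ p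
  have hNm : Measurable N := ((measurable_ntMax Ω w).add_const B).pow_const p
  have hfin : ∫⁻ Q, N Q ∂ν ≠ ⊤ := by
    have h1 : ∫⁻ Q, ntMax Ω w Q ^ p ∂ν ≠ ⊤ := by
      refine ne_top_of_le_ne_top ?_ (lintegral_mono' hνσ le_rfl)
      rw [lintegral_smul_measure, smul_eq_mul]
      exact ENNReal.mul_ne_top hC' (lintegral_ntMax_lt_top hp0 hw).ne
    have h2 : ∫⁻ Q, N Q ∂ν ≤
        ∫⁻ Q, (2 : ℝ≥0∞) ^ (p - 1) * (ntMax Ω w Q ^ p + B ^ p) ∂ν :=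
      lintegral_mono fun Q => ENNReal.rpow_add_le_mul_rpow_add_rpow _ _ hp
    refine ne_top_of_le_ne_top ?_ h2
    have h3 : (2 : ℝ≥0∞) ^ (p - 1) ≠ ⊤ :=
      ENNReal.rpow_ne_top_of_nonneg (by linarith) (by finiteness)
    rw [lintegral_const_mul' _ _ h3, lintegral_add_right _ measurable_const, lintegral_const]
    exact ENNReal.mul_ne_top h3 (ENNReal.add_ne_top.2 ⟨h1, ENNReal.mul_ne_top
      (ENNReal.rpow_ne_top_of_nonneg hp0.le hB) (measure_ne_top _ _)⟩)
  refine ⟨ENNReal.ofReal K * (C * ∫⁻ Q, N Q ∂ν),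
    ENNReal.mul_ne_top ENNReal.ofReal_ne_top (ENNReal.mul_ne_top hC hfin), ?_⟩
  filter_upwards [hlay] with s hs
  have hm := (isOpen_boundaryLayer hΩ.1 s).measurableSet
  have h1 := hs.1 (Ω.indicator fun y => ‖f y‖ₑ ^ p) N
    (measurable_indicator_of_continuousOn hΩ.1
      (ENNReal.continuous_rpow_const.comp_continuousOn hf.enorm)) hNm fun y hy _ Q _ hyQ => by
        rw [indicator_of_mem hy]
        exact ENNReal.rpow_le_rpow ((hfw y hy).trans
          (add_le_add (enorm_le_ntMax w ⟨hy, hyQ⟩) le_rfl)) hp0.le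
  rw [setLIntegral_congr_fun hm fun y hy => indicator_of_mem hy.1 _,
    ENNReal.ofReal_mul (by linarith)] at h1
  refine h1.trans_eq ?_
  rw [ENNReal.rpow_one]
  ring

theorem tendsto_truncMax {f : Euc (n + 1) → ℝ} {Q : Euc (n + 1)} (hf : NTLim Ω f Q 0) :
    Tendsto (fun s => truncMax Ω f s Q) (𝓝[>] 0) (𝓝 0) := by
  refine ENNReal.tendsto_nhds_zero.2 fun ε hε => ?_
  have h1 : ∀ᶠ y in 𝓝[ntCone Ω Q] Q, ‖f y‖ₑ < ε := by
    have h2 : Tendsto (fun y => ‖f y‖ₑ) (𝓝[ntCone Ω Q] Q) (𝓝 0) := by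
      have := (continuous_enorm (E := ℝ)).tendsto 0 |>.comp hf
      rwa [enorm_zero] at this
    exact h2.eventually_lt_const hε
  obtain ⟨η, hη, hball⟩ := Metric.mem_nhdsWithin_iff.1 h1
  filter_upwards [Ioo_mem_nhdsGT (half_pos hη)] with s hs
  refine truncMax_le fun y hy hys => le_of_lt (hball ⟨mem_ball.2 ?_, hy⟩)
  linarith [hy.2, hs.2]

theorem IsLipschitzDomain.layerBound_of_ntLim_zero (hΩ : IsLipschitzDomain Ω) {q : ℝ}
    (hq : 0 < q) {f w : Euc (n + 1) → ℝ} (hf : ContinuousOn f Ω)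
    (hfw : ∀ y ∈ Ω, ‖f y‖ₑ ≤ ‖w y‖ₑ) (hw : ntMaxLp Ω w q < ⊤)
    (hnt : ∀ᵐ Q ∂sMeasure Ω, NTLim Ω f Q 0) :
    ∃ o : ℝ → ℝ≥0∞, Tendsto o (𝓝[>] 0) (𝓝 0) ∧ LayerBound Ω q 1 f o := by
  obtain ⟨ν, C, C', K, hν, hC, hC', hK, hνσ, hlay⟩ := hΩ.exists_layer_estimates
  have hK0 : 0 < K := one_pos.trans_le hK
  set N : ℝ → Euc (n + 1) → ℝ≥0∞ := fun s Q => truncMax Ω f (K * s) Q ^ q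
  have hNm : ∀ s, Measurable (N s) := fun s => (measurable_truncMax Ω f _).pow_const q
  have hfin : ∫⁻ Q, ntMax Ω w Q ^ q ∂ν ≠ ⊤ := by
    refine ne_top_of_le_ne_top ?_ (lintegral_mono' hνσ le_rfl)
    rw [lintegral_smul_measure, smul_eq_mul]
    exact ENNReal.mul_ne_top hC' (lintegral_ntMax_lt_top hq hw).ne
  have hlim : Tendsto (fun s => ∫⁻ Q, N s Q ∂ν) (𝓝[>] 0) (𝓝 (∫⁻ _, 0 ∂ν)) := by
    refine tendsto_lintegral_filter_of_dominated_convergence (fun Q => ntMax Ω w Q ^ q)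
      (Eventually.of_forall hNm) (Eventually.of_forall fun s => Eventually.of_forall fun Q => ?_)
      hfin ?_
    · exact ENNReal.rpow_le_rpow (truncMax_le fun y hy _ =>
        (hfw y hy.1).trans (enorm_le_ntMax w hy)) hq.le
    · filter_upwards [(Measure.absolutelyContinuous_of_le_smul hνσ).ae_le hnt] with Q hQ
      have h1 := (ENNReal.continuous_rpow_const (y := q)).tendsto 0 |>.comp
        ((tendsto_truncMax hQ).comp (tendsto_const_mul_nhdsGT_zero hK0))
      rwa [ENNReal.zero_rpow_of_pos hq] at h1
  rw [lintegral_zero] at hlim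
  refine ⟨fun s => ENNReal.ofReal K * C * ∫⁻ Q, N s Q ∂ν, ?_, ?_⟩
  · have := ENNReal.Tendsto.const_mul (a := ENNReal.ofReal K * C) hlim
      (Or.inr (ENNReal.mul_ne_top ENNReal.ofReal_ne_top hC))
    rwa [mul_zero] at this
  filter_upwards [hlay] with s hs
  have hm := (isOpen_boundaryLayer hΩ.1 s).measurableSet
  have h1 := hs.1 (Ω.indicator fun y => ‖f y‖ₑ ^ q) (N s)
    (measurable_indicator_of_continuousOn hΩ.1
      (ENNReal.continuous_rpow_const.comp_continuousOn hf.enorm)) (hNm s)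
      fun y hy hys Q _ hyQ => by
        rw [indicator_of_mem hy]
        exact ENNReal.rpow_le_rpow (enorm_le_truncMax f hy hys hyQ) hq.le
  rw [setLIntegral_congr_fun hm fun y hy => indicator_of_mem hy.1 _,
    ENNReal.ofReal_mul hK0.le] at h1
  refine h1.trans_eq ?_
  rw [ENNReal.rpow_one]
  ring

end

/-! ### The commutator of the cutoff with the bilaplacian -/

/-- The integrand produced by moving the bilaplacian from a truncated function onto the kernel. -/
def commInt (G u φ : Euc d → ℝ) (x : Euc d) : ℝ :=
  lap G x * (2 * (∑ i, pder i u x * pder i φ x) + u x * lap φ x) +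
    ∑ i, pder i (fun y => 2 * (∑ j, pder j G y * pder j φ y) + G y * lap φ y) x * pder i u x

theorem abs_sum_mul_le {ι : Type*} (s : Finset ι) (f g : ι → ℝ) {c : ℝ}
    (hg : ∀ i ∈ s, |g i| ≤ c) : |∑ i ∈ s, f i * g i| ≤ (∑ i ∈ s, |f i|) * c := by
  rw [Finset.sum_mul]
  refine (Finset.abs_sum_le_sum_abs _ _).trans (Finset.sum_le_sum fun i hi => ?_)
  rw [abs_mul]
  exact mul_le_mul_of_nonneg_left (hg i hi) (abs_nonneg _)

theorem abs_lap_le_of_abs_pder_le {f : Euc d → ℝ} {x : Euc d} {c : ℝ}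
    (h : ∀ i j, |pder i (pder j f) x| ≤ c) : |lap f x| ≤ d * c := by
  refine (Finset.abs_sum_le_sum_abs _ _).trans
    ((Finset.sum_le_card_nsmul _ _ c fun i _ => h i i).trans_eq ?_)
  simp

theorem abs_commInt_le {G u φ : Euc d → ℝ} (hG : ContDiff ℝ (⊤ : ℕ∞) G)
    (hφ : ContDiff ℝ (⊤ : ℕ∞) φ) (x : Euc d) {c₁ c₂ c₃ : ℝ}
    (h₁ : ∀ i, |pder i φ x| ≤ c₁) (h₂ : ∀ i j, |pder i (pder j φ) x| ≤ c₂)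
    (h₃ : ∀ i j k, |pder i (pder j (pder k φ)) x| ≤ c₃) :
    |commInt G u φ x| ≤ (d + 4) *
      (c₁ * ((∑ i, ∑ j, |pder i (pder j G) x|) * ∑ k, |pder k u x|) +
        c₂ * ((∑ i, ∑ j, |pder i (pder j G) x|) * |u x|) +
        c₂ * ((∑ j, |pder j G x|) * ∑ k, |pder k u x|) +
        c₃ * (|G x| * ∑ k, |pder k u x|)) := by
  rcases isEmpty_or_nonempty (Fin d) with hd | ⟨⟨i₀⟩⟩
  · simp [commInt, lap]
  have hc₁ := (abs_nonneg _).trans (h₁ i₀)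
  have hc₂ := (abs_nonneg _).trans (h₂ i₀ i₀)
  have hc₃ := (abs_nonneg _).trans (h₃ i₀ i₀ i₀)
  set g₂ := ∑ i, ∑ j, |pder i (pder j G) x|
  set g₁ := ∑ j, |pder j G x|
  set n₁ := ∑ k, |pder k u x|
  have hg₂ : 0 ≤ g₂ := Finset.sum_nonneg fun _ _ => Finset.sum_nonneg fun _ _ => abs_nonneg _
  have hg₁ : 0 ≤ g₁ := Finset.sum_nonneg fun _ _ => abs_nonneg _
  have hn₁ : 0 ≤ n₁ := Finset.sum_nonneg fun _ _ => abs_nonneg _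
  have hrow : ∀ i, ∑ j, |pder i (pder j G) x| ≤ g₂ := fun i =>
    Finset.single_le_sum (f := fun i => ∑ j, |pder i (pder j G) x|)
      (fun _ _ => Finset.sum_nonneg fun _ _ => abs_nonneg _) (Finset.mem_univ i)
  have hlapG : |lap G x| ≤ g₂ := by
    refine (Finset.abs_sum_le_sum_abs _ _).trans (Finset.sum_le_sum fun i _ => ?_)
    exact Finset.single_le_sum (f := fun j => |pder i (pder j G) x|) (fun _ _ => abs_nonneg _)
      (Finset.mem_univ i)
  have hlapφ : |lap φ x| ≤ d * c₂ := abs_lap_le_of_abs_pder_le h₂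
  have hpderlap : ∀ i, |pder i (lap φ) x| ≤ d * c₃ := by
    intro i
    have : pder i (lap φ) x = ∑ k, pder i (pder k (pder k φ)) x :=
      pder_sum _ (fun k _ => differentiable_of_smooth
        (contDiff_pder (contDiff_pder hφ k) k) x) i
    rw [this]
    refine (Finset.abs_sum_le_sum_abs _ _).trans
      ((Finset.sum_le_card_nsmul _ _ c₃ fun k _ => h₃ i k k).trans_eq ?_)
    simp
  have hA : |2 * (∑ i, pder i u x * pder i φ x) + u x * lap φ x| ≤
      2 * (n₁ * c₁) + |u x| * (d * c₂) := by
    refine (abs_add_le _ _).trans (add_le_add ?_ ?_)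
    · rw [abs_mul, abs_two]
      exact mul_le_mul_of_nonneg_left (abs_sum_mul_le _ _ _ fun i _ => h₁ i) zero_le_two
    · rw [abs_mul]
      exact mul_le_mul_of_nonneg_left hlapφ (abs_nonneg _)
  have hB : ∀ i, |pder i (fun y => 2 * (∑ j, pder j G y * pder j φ y) + G y * lap φ y) x| ≤
      2 * (g₂ * c₁ + g₁ * c₂) + (g₁ * (d * c₂) + |G x| * (d * c₃)) := by
    intro i
    have hdG := fun j => differentiable_of_smooth (contDiff_pder hG j) x
    have hdφ := fun j => differentiable_of_smooth (contDiff_pder hφ j) x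
    have hdlap := differentiable_of_smooth (contDiff_lap hφ) x
    have hdG0 := differentiable_of_smooth hG x
    have hds : DifferentiableAt ℝ (fun y => ∑ j, pder j G y * pder j φ y) x :=
      DifferentiableAt.fun_sum fun j _ => (hdG j).fun_mul (hdφ j)
    rw [pder_add (hds.const_mul 2) (hdG0.fun_mul hdlap), pder_const_mul hds,
      pder_sum _ (fun j _ => (hdG j).fun_mul (hdφ j)), pder_mul hdG0 hdlap]
    simp only [pder_mul (hdG _) (hdφ _), Finset.sum_add_distrib]
    refine (abs_add_le _ _).trans (add_le_add ?_ ((abs_add_le _ _).trans (add_le_add ?_ ?_)))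
    · rw [abs_mul, abs_two]
      refine mul_le_mul_of_nonneg_left ((abs_add_le _ _).trans (add_le_add ?_ ?_)) zero_le_two
      · exact (abs_sum_mul_le _ _ _ fun j _ => h₁ j).trans
          (mul_le_mul_of_nonneg_right (hrow i) hc₁)
      · exact abs_sum_mul_le _ _ _ fun j _ => h₂ i j
    · rw [abs_mul]
      exact mul_le_mul (Finset.single_le_sum (f := fun j => |pder j G x|)
        (fun _ _ => abs_nonneg _) (Finset.mem_univ i)) hlapφ (abs_nonneg _) hg₁
    · rw [abs_mul]
      exact mul_le_mul_of_nonneg_left (hpderlap i) (abs_nonneg _)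
  have hC : |∑ i, pder i (fun y => 2 * (∑ j, pder j G y * pder j φ y) + G y * lap φ y) x *
      pder i u x| ≤ n₁ * (2 * (g₂ * c₁ + g₁ * c₂) + (g₁ * (d * c₂) + |G x| * (d * c₃))) := by
    simp only [mul_comm _ (pder _ u x)]
    exact abs_sum_mul_le _ _ _ fun i _ => hB i
  have hD : |lap G x * (2 * (∑ i, pder i u x * pder i φ x) + u x * lap φ x)| ≤
      g₂ * (2 * (n₁ * c₁) + |u x| * (d * c₂)) := by
    rw [abs_mul]
    exact mul_le_mul hlapG hA (abs_nonneg _) hg₂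
  refine ((abs_add_le _ _).trans (add_le_add hD hC)).trans ?_
  have hd0 : (0 : ℝ) ≤ d := Nat.cast_nonneg d
  have e1 : 0 ≤ d * (c₁ * (g₂ * n₁)) := by positivity
  have e2 : 0 ≤ c₂ * (g₂ * |u x|) := by positivity
  have e3 : 0 ≤ c₂ * (g₁ * n₁) := by positivity
  have e4 : 0 ≤ c₃ * (|G x| * n₁) := by positivity
  linarith

/-! ### The representation formula -/

/-- The `ℓ¹` norm of the gradient. -/
def absGrad (f : Euc d → ℝ) (y : Euc d) : ℝ := ∑ i, |pder i f y|

/-- The `ℓ¹` norm of the Hessian. -/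
def absHess (f : Euc d → ℝ) (y : Euc d) : ℝ := ∑ i, ∑ j, |pder i (pder j f) y|

/-- The fundamental solution can be modified near its pole to a smooth function. -/
theorem exists_smooth_eq_fundSol (hd : 2 ≤ d) {c : ℝ} (hc : c ≠ 0) (x : Euc d) {ρ : ℝ}
    (hρ : 0 < ρ) : ∃ Γ : Euc d → ℝ, ContDiff ℝ (⊤ : ℕ∞) Γ ∧
      ∀ y, ρ ≤ dist y x → Γ y = fundSol d c (y - x) := by
  obtain ⟨s, A, B, -, -, -, -, -, hfs⟩ := fundSol_eq_powLog hd hc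
  let b : ContDiffBump x := ⟨ρ / 2, ρ, by linarith, by linarith⟩
  refine ⟨fun y => (1 - b y) * powLog s A B (‖y - x‖ ^ 2), ?_, fun y hy => ?_⟩
  · refine contDiff_iff_contDiffAt.2 fun y => ?_
    by_cases hy : y = x
    · subst hy
      refine (contDiffAt_const (c := (0 : ℝ))).congr_of_eventuallyEq ?_
      filter_upwards [b.eventuallyEq_one] with z hz
      simp [hz]
    · have h : ContDiffAt ℝ (⊤ : ℕ∞) (fun z : Euc d => ‖z - x‖ ^ 2) y :=
        ((contDiff_id.sub contDiff_const).norm_sq ℝ).contDiffAt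
      have hpos : ‖y - x‖ ^ 2 ≠ 0 := by simpa [sub_eq_zero] using hy
      exact (contDiffAt_const.sub b.contDiffAt).mul ((h.rpow_const_of_ne hpos).mul
        (contDiffAt_const.add (contDiffAt_const.mul (h.log hpos))))
  · have hyx : y - x ≠ 0 := by
      rw [Ne, sub_eq_zero, ← dist_eq_zero]
      linarith
    simp only
    rw [b.zero_of_le_dist hy, hfs _ hyx, sub_zero, one_mul]

theorem contDiff_mul_of_tsupport_subset {Ω : Set (Euc d)} (hΩ : IsOpen Ω) {χ f : Euc d → ℝ}
    (hχ : ContDiff ℝ (⊤ : ℕ∞) χ) (hχΩ : tsupport χ ⊆ Ω) (hf : ContDiffOn ℝ (⊤ : ℕ∞) f Ω) :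
    ContDiff ℝ (⊤ : ℕ∞) (fun y => χ y * f y) := by
  refine contDiff_iff_contDiffAt.2 fun y => ?_
  by_cases hy : y ∈ tsupport χ
  · exact hχ.contDiffAt.mul (hf.contDiffAt (hΩ.mem_nhds (hχΩ hy)))
  · refine (contDiffAt_const (c := (0 : ℝ))).congr_of_eventuallyEq ?_
    filter_upwards [notMem_tsupport_iff_eventuallyEq.1 hy] with z hz
    simp [hz]

theorem Filter.EventuallyEq.one_mul_eventuallyEq {χ : Euc d → ℝ} {y : Euc d}
    (h : χ =ᶠ[𝓝 y] fun _ => 1) (f : Euc d → ℝ) : (fun z => χ z * f z) =ᶠ[𝓝 y] f := by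
  filter_upwards [h] with z hz
  simp [hz]

theorem integral_commInt_eq {Ω : Set (Euc d)} (hΩ : IsOpen Ω) {c c₀ : ℝ} {x : Euc d}
    (hrep : ∀ v : Euc d → ℝ, ContDiff ℝ (⊤ : ℕ∞) v → HasCompactSupport v →
      (bilap v =ᶠ[𝓝 x] fun _ => 0) → ∫ y, fundSol d c (y - x) * bilap v y = c₀ * v x)
    {Γ W u φ χ : Euc d → ℝ} (hΓ : ContDiff ℝ (⊤ : ℕ∞) Γ) (hW : Biharmonic Ω W)
    (hu : Biharmonic Ω u) (hφ : ContDiff ℝ (⊤ : ℕ∞) φ) (hcφ : HasCompactSupport φ)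
    (hφΩ : tsupport φ ⊆ Ω) (hχ : ContDiff ℝ (⊤ : ℕ∞) χ) (hcχ : HasCompactSupport χ)
    (hχΩ : tsupport χ ⊆ Ω) (hχφ : ∀ y ∈ tsupport φ, χ =ᶠ[𝓝 y] fun _ => 1)
    (hx : φ =ᶠ[𝓝 x] fun _ => 1)
    (hΓφ : ∀ y, Γ y ≠ fundSol d c (y - x) → φ =ᶠ[𝓝 y] fun _ => 1) :
    ∫ y, commInt (fun z => χ z * (Γ z - W z)) (fun z => χ z * u z) φ y = c₀ * u x := by
  have hmem : ∀ y, (φ =ᶠ[𝓝 y] fun _ => 1) → y ∈ tsupport φ := fun y hy =>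
    subset_tsupport _ (by simp [hy.eq_of_nhds])
  have hχu := contDiff_mul_of_tsupport_subset hΩ hχ hχΩ hu.1
  have hχW := contDiff_mul_of_tsupport_subset hΩ hχ hχΩ hW.1
  have hG : ContDiff ℝ (⊤ : ℕ∞) (fun z => χ z * (Γ z - W z)) :=
    contDiff_mul_of_tsupport_subset hΩ hχ hχΩ (hΓ.contDiffOn.sub hW.1)
  have hφ0 : ∀ y ∉ tsupport φ, φ y = 0 := fun y hy => image_eq_zero_of_notMem_tsupport hy
  have hcut := integral_mul_bilap_cutoff hG hχu hφ hcφ hcχ.mul_right fun y => by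
    by_cases hy : y ∈ tsupport φ
    · rw [((hχφ y hy).one_mul_eventuallyEq u).bilap.eq_of_nhds, hu.2 y (hφΩ hy), mul_zero]
    · rw [hφ0 y hy, mul_zero, zero_mul]
  refine hcut.symm.trans ?_
  set v : Euc d → ℝ := fun y => (χ y * u y) * φ y with hv
  have hvs : ContDiff ℝ (⊤ : ℕ∞) v := hχu.mul hφ
  have hvc : HasCompactSupport v := hcφ.mul_left
  have hvu : ∀ y, (φ =ᶠ[𝓝 y] fun _ => 1) → v =ᶠ[𝓝 y] u := fun y hy => by
    filter_upwards [hy, hχφ y (hmem y hy)] with z hz hz'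
    simp [hv, hz, hz']
  have hv0 : ∀ y, (φ =ᶠ[𝓝 y] fun _ => 1) → bilap v y = 0 := fun y hy => by
    rw [(hvu y hy).bilap.eq_of_nhds, hu.2 y (hφΩ (hmem y hy))]
  have hbx : bilap v =ᶠ[𝓝 x] fun _ => 0 := by
    filter_upwards [hx.eventually_nhds] with y hy using hv0 y hy
  have hbvs : ContDiff ℝ (⊤ : ℕ∞) (bilap v) := contDiff_lap (contDiff_lap hvs)
  have hbvc : HasCompactSupport (bilap v) := hasCompactSupport_lap (hasCompactSupport_lap hvc)
  have hW0 : ∫ y, χ y * W y * bilap v y = 0 := by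
    rw [integral_mul_bilap hχW hvs hvc]
    refine integral_eq_zero_of_ae (Eventually.of_forall fun y => ?_)
    by_cases hy : y ∈ tsupport φ
    · simp only [((hχφ y hy).one_mul_eventuallyEq W).bilap.eq_of_nhds, hW.2 y (hφΩ hy), zero_mul,
        Pi.zero_apply]
    · simp [hv, hφ0 y hy]
  have hΓ0 : ∀ y, χ y * Γ y * bilap v y = fundSol d c (y - x) * bilap v y := fun y => by
    by_cases hy : y ∈ tsupport φ
    · by_cases hyΓ : Γ y = fundSol d c (y - x)
      · rw [(hχφ y hy).eq_of_nhds, hyΓ, one_mul]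
      · rw [hv0 y (hΓφ y hyΓ), mul_zero, mul_zero]
    · have : v =ᶠ[𝓝 y] fun _ => 0 := by
        filter_upwards [notMem_tsupport_iff_eventuallyEq.1 hy] with z hz
        simp [hv, hz]
      rw [this.bilap.eq_of_nhds, bilap, lap_const, lap_const, mul_zero, mul_zero]
  calc ∫ y, χ y * (Γ y - W y) * bilap v y
      = ∫ y, (χ y * Γ y * bilap v y - χ y * W y * bilap v y) := by
        congr 1 with y
        ring
    _ = ∫ y, χ y * Γ y * bilap v y := by
        rw [integral_sub, hW0, sub_zero]
        · exact integrable_of_smooth ((hχ.mul hΓ).mul hbvs) hbvc.mul_left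
        · exact integrable_of_smooth (hχW.mul hbvs) hbvc.mul_left
    _ = c₀ * v x := by
        simp only [hΓ0]
        exact hrep v hvs hvc hbx
    _ = c₀ * u x := by rw [(hvu x hx).eq_of_nhds]

/-- The commutator integrand is supported in the boundary layer, where it is controlled by
products of derivatives of `G` and `u`. -/
theorem enorm_integral_commInt_le {Ω : Set (Euc d)} (hΩ : IsOpen Ω) {ε C : ℝ} (hε : 0 < ε)
    (hC : 0 ≤ C) {G u φ χ : Euc d → ℝ} (hG : ContDiffOn ℝ (⊤ : ℕ∞) G Ω)
    (hu : ContDiffOn ℝ (⊤ : ℕ∞) u Ω) (hφ : ContDiff ℝ (⊤ : ℕ∞) φ) (hφΩ : tsupport φ ⊆ Ω)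
    (hφ1 : ∀ y ∈ Ω, 2 * ε ≤ infDist y (frontier Ω) → φ =ᶠ[𝓝 y] fun _ => 1)
    (h₁ : ∀ i y, |pder i φ y| ≤ C * ε⁻¹)
    (h₂ : ∀ i j y, |pder i (pder j φ) y| ≤ C * ε⁻¹ ^ 2)
    (h₃ : ∀ i j k y, |pder i (pder j (pder k φ)) y| ≤ C * ε⁻¹ ^ 3)
    (hχ : ContDiff ℝ (⊤ : ℕ∞) χ) (hχΩ : tsupport χ ⊆ Ω)
    (hχφ : ∀ y ∈ tsupport φ, χ =ᶠ[𝓝 y] fun _ => 1) :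
    ‖∫ y, commInt (fun z => χ z * G z) (fun z => χ z * u z) φ y‖ₑ ≤
      ENNReal.ofReal ((d + 4) * C) *
        ((ENNReal.ofReal ε)⁻¹ ^ 1 *
            (∫⁻ y in boundaryLayer Ω (2 * ε), ‖absHess G y‖ₑ * ‖absGrad u y‖ₑ) +
          (ENNReal.ofReal ε)⁻¹ ^ 2 *
            (∫⁻ y in boundaryLayer Ω (2 * ε), ‖absHess G y‖ₑ * ‖u y‖ₑ) +
          (ENNReal.ofReal ε)⁻¹ ^ 2 *
            (∫⁻ y in boundaryLayer Ω (2 * ε), ‖absGrad G y‖ₑ * ‖absGrad u y‖ₑ) +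
          (ENNReal.ofReal ε)⁻¹ ^ 3 *
            ∫⁻ y in boundaryLayer Ω (2 * ε), ‖G y‖ₑ * ‖absGrad u y‖ₑ) := by
  have hχG : ContDiff ℝ (⊤ : ℕ∞) (fun z => χ z * G z) :=
    contDiff_mul_of_tsupport_subset hΩ hχ hχΩ hG
  set F := commInt (fun z => χ z * G z) (fun z => χ z * u z) φ with hF
  set t := (ENNReal.ofReal ε)⁻¹ with ht
  have ht' : t = ENNReal.ofReal ε⁻¹ := (ENNReal.ofReal_inv_of_pos hε).symm
  have htop : ∀ k, t ^ k ≠ ⊤ := fun k => by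
    rw [ht']
    exact ENNReal.pow_ne_top ENNReal.ofReal_ne_top
  have hF0 : ∀ (a : ℝ) y, (φ =ᶠ[𝓝 y] fun _ => a) → F y = 0 := fun a y hy => by
    have e1 : ∀ i, pder i φ =ᶠ[𝓝 y] fun _ => 0 := fun i => by
      simpa only [pder_const] using hy.pder i
    have e2 : ∀ i j, pder j (pder i φ) =ᶠ[𝓝 y] fun _ => 0 := fun i j => by
      simpa only [pder_const] using (e1 i).pder j
    have e3 : ∀ i j k, pder k (pder j (pder i φ)) =ᶠ[𝓝 y] fun _ => 0 := fun i j k => by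
      simpa only [pder_const] using (e2 i j).pder k
    have h := abs_commInt_le hχG hφ y (u := fun z => χ z * u z) (c₁ := 0) (c₂ := 0) (c₃ := 0)
      (fun i => by simp [(e1 i).eq_of_nhds]) (fun i j => by simp [(e2 j i).eq_of_nhds])
      (fun i j k => by simp [(e3 k j i).eq_of_nhds])
    simpa using h
  have hnn : ∀ (f : Euc d → ℝ) y, 0 ≤ absGrad f y ∧ 0 ≤ absHess f y := fun f y =>
    ⟨Finset.sum_nonneg fun _ _ => abs_nonneg _,
      Finset.sum_nonneg fun _ _ => Finset.sum_nonneg fun _ _ => abs_nonneg _⟩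
  have hpt : ∀ y, ‖F y‖ₑ ≤ (boundaryLayer Ω (2 * ε)).indicator (fun y =>
      ENNReal.ofReal ((d + 4) * C) * (t ^ 1 * (‖absHess G y‖ₑ * ‖absGrad u y‖ₑ) +
        t ^ 2 * (‖absHess G y‖ₑ * ‖u y‖ₑ) + t ^ 2 * (‖absGrad G y‖ₑ * ‖absGrad u y‖ₑ) +
        t ^ 3 * (‖G y‖ₑ * ‖absGrad u y‖ₑ))) y := by
    intro y
    by_cases hyφ : y ∈ tsupport φ
    swap
    · rw [hF0 0 y (notMem_tsupport_iff_eventuallyEq.1 hyφ), enorm_zero]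
      exact zero_le
    by_cases hyl : y ∈ boundaryLayer Ω (2 * ε)
    swap
    · have : 2 * ε ≤ infDist y (frontier Ω) := by
        by_contra hlt
        exact hyl ⟨hφΩ hyφ, not_le.1 hlt⟩
      rw [hF0 1 y (hφ1 y (hφΩ hyφ) this), enorm_zero]
      exact zero_le
    rw [indicator_of_mem hyl]
    have eG := (hχφ y hyφ).one_mul_eventuallyEq G
    have eu := (hχφ y hyφ).one_mul_eventuallyEq u
    have h := abs_commInt_le hχG hφ y (u := fun z => χ z * u z) (fun i => h₁ i y)
      (fun i j => h₂ i j y) (fun i j k => h₃ i j k y)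
    simp only [eG.eq_of_nhds, eu.eq_of_nhds, (eG.pder _).eq_of_nhds, (eu.pder _).eq_of_nhds,
      ((eG.pder _).pder _).eq_of_nhds] at h
    have hF' : |F y| ≤ ((d + 4) * C) * (ε⁻¹ ^ 1 * (|absHess G y| * |absGrad u y|) +
        ε⁻¹ ^ 2 * (|absHess G y| * |u y|) + ε⁻¹ ^ 2 * (|absGrad G y| * |absGrad u y|) +
        ε⁻¹ ^ 3 * (|G y| * |absGrad u y|)) := by
      rw [abs_of_nonneg (hnn G y).1, abs_of_nonneg (hnn G y).2, abs_of_nonneg (hnn u y).1]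
      refine h.trans_eq ?_
      simp only [absGrad, absHess]
      ring
    have hε' : 0 ≤ ε⁻¹ := by positivity
    rw [← ofReal_norm, Real.norm_eq_abs]
    refine (ENNReal.ofReal_le_ofReal hF').trans_eq ?_
    rw [ENNReal.ofReal_mul (by positivity), ENNReal.ofReal_add (by positivity) (by positivity),
      ENNReal.ofReal_add (by positivity) (by positivity),
      ENNReal.ofReal_add (by positivity) (by positivity)]
    simp only [ENNReal.ofReal_mul (pow_nonneg hε' _), ENNReal.ofReal_mul (norm_nonneg _),
      ENNReal.ofReal_pow hε', ← ht', ← Real.norm_eq_abs, ofReal_norm]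
  have hlm := (isOpen_boundaryLayer hΩ (2 * ε)).measurableSet
  have hsub : boundaryLayer Ω (2 * ε) ⊆ Ω := fun y hy => hy.1
  have hcg : ∀ {f : Euc d → ℝ}, ContDiffOn ℝ (⊤ : ℕ∞) f Ω → ContinuousOn (absGrad f) Ω :=
    fun hf => continuousOn_finsetSum _ fun i _ => (contDiffOn_pder hΩ hf i).continuousOn.abs
  have hch : ContinuousOn (absHess G) Ω := continuousOn_finsetSum _ fun i _ =>
    continuousOn_finsetSum _ fun j _ =>
      (contDiffOn_pder hΩ (contDiffOn_pder hΩ hG j) i).continuousOn.abs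
  have hme : ∀ {f g : Euc d → ℝ} (k : ℕ), ContinuousOn f Ω → ContinuousOn g Ω →
      AEMeasurable (fun y => t ^ k * (‖f y‖ₑ * ‖g y‖ₑ))
        (volume.restrict (boundaryLayer Ω (2 * ε))) := fun k hf hg =>
    (((hf.mono hsub).enorm.aemeasurable hlm).mul
      ((hg.mono hsub).enorm.aemeasurable hlm)).const_mul _
  calc ‖∫ y, F y‖ₑ ≤ ∫⁻ y, ‖F y‖ₑ := enorm_integral_le_lintegral_enorm _
    _ ≤ _ := lintegral_mono hpt
    _ = _ := by
      rw [lintegral_indicator hlm, lintegral_const_mul' _ _ ENNReal.ofReal_ne_top,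
        lintegral_add_right' _ (hme 3 hG.continuousOn (hcg hu)),
        lintegral_add_right' _ (hme 2 (hcg hG) (hcg hu)),
        lintegral_add_right' _ (hme 2 hch hu.continuousOn),
        lintegral_const_mul' _ _ (htop 1), lintegral_const_mul' _ _ (htop 2),
        lintegral_const_mul' _ _ (htop 2), lintegral_const_mul' _ _ (htop 3)]

/-! ### Uniqueness -/

theorem LayerBound.mono_right {Ω : Set (Euc d)} {p m : ℝ} {f : Euc d → ℝ} {o o' : ℝ → ℝ≥0∞}
    (h : LayerBound Ω p m f o) (ho : ∀ s, o s ≤ o' s) : LayerBound Ω p m f o' := by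
  filter_upwards [h] with s hs
  exact hs.trans (mul_le_mul_right (ho s) _)

theorem LayerBound.sum_abs {ι : Type*} [Fintype ι] {Ω : Set (Euc d)} (hΩ : IsOpen Ω) {p m : ℝ}
    (hp : 1 ≤ p) {f : ι → Euc d → ℝ} {o : ℝ → ℝ≥0∞} (hf : ∀ i, ContinuousOn (f i) Ω)
    (h : ∀ i, LayerBound Ω p m (f i) o) :
    LayerBound Ω p m (fun y => ∑ i, |f i y|)
      fun s => (Fintype.card ι : ℝ≥0∞) ^ (p - 1) * Fintype.card ι * o s := by
  have hcard : (Fintype.card ι : ℝ≥0∞) ^ (p - 1) ≠ ⊤ :=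
    ENNReal.rpow_ne_top_of_nonneg (by linarith) (ENNReal.natCast_ne_top _)
  filter_upwards [eventually_all.2 h] with s hs
  have hm := (isOpen_boundaryLayer hΩ s).measurableSet
  have hsub : boundaryLayer Ω s ⊆ Ω := fun y hy => hy.1
  calc ∫⁻ y in boundaryLayer Ω s, ‖∑ i, |f i y|‖ₑ ^ p
      ≤ ∫⁻ y in boundaryLayer Ω s,
          (Fintype.card ι : ℝ≥0∞) ^ (p - 1) * ∑ i, ‖f i y‖ₑ ^ p := by
        refine lintegral_mono fun y => ?_
        refine le_trans (ENNReal.rpow_le_rpow ((enorm_sum_le _ _).trans_eq ?_) (by linarith))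
          (ENNReal.rpow_sum_le_const_mul_sum_rpow Finset.univ (fun i => ‖f i y‖ₑ) hp)
        simp
    _ = (Fintype.card ι : ℝ≥0∞) ^ (p - 1) * ∑ i, ∫⁻ y in boundaryLayer Ω s, ‖f i y‖ₑ ^ p := by
        rw [lintegral_const_mul' _ _ hcard, lintegral_finsetSum' _ fun i _ =>
          (((hf i).mono hsub).enorm.aemeasurable hm).pow_const p]
    _ ≤ (Fintype.card ι : ℝ≥0∞) ^ (p - 1) * ∑ _i : ι, ENNReal.ofReal s ^ m * o s :=
        mul_le_mul_right (Finset.sum_le_sum fun i _ => hs i) _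
    _ = _ := by
        rw [Finset.sum_const, Finset.card_univ, nsmul_eq_mul]
        ring

theorem tendsto_inv_pow_mul_comp_two_mul {I : ℝ → ℝ≥0∞} {k : ℕ}
    (h : Tendsto (fun s : ℝ => (ENNReal.ofReal s)⁻¹ ^ k * I s) (𝓝[>] 0) (𝓝 0)) :
    Tendsto (fun ε : ℝ => (ENNReal.ofReal ε)⁻¹ ^ k * I (2 * ε)) (𝓝[>] 0) (𝓝 0) := by
  have h1 := ENNReal.Tendsto.const_mul (a := (2 : ℝ≥0∞) ^ k)
    (h.comp (tendsto_const_mul_nhdsGT_zero two_pos)) (Or.inr (ENNReal.pow_ne_top (by simp)))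
  rw [mul_zero] at h1
  refine h1.congr' ?_
  filter_upwards [self_mem_nhdsWithin] with ε hε
  simp only [Function.comp_apply]
  rw [ENNReal.ofReal_mul zero_le_two, ENNReal.ofReal_ofNat,
    ENNReal.mul_inv (by simp) (by simp), mul_pow, ← mul_assoc, ← mul_assoc, ← mul_pow,
    ENNReal.mul_inv_cancel (by simp) (by simp), one_pow, one_mul]

theorem abs_pder_le_gnorm1 (u : Euc d → ℝ) (i : Fin d) (y : Euc d) :
    |pder i u y| ≤ gnorm1 u y :=
  Real.abs_le_sqrt (Finset.single_le_sum (f := fun i => pder i u y ^ 2) (fun _ _ => sq_nonneg _)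
    (Finset.mem_univ i))

theorem abs_pder_pder_le_gnorm2 (u : Euc d → ℝ) (i j : Fin d) (y : Euc d) :
    |pder i (pder j u) y| ≤ gnorm2 u y :=
  Real.abs_le_sqrt ((Finset.single_le_sum (f := fun j => pder i (pder j u) y ^ 2)
    (fun _ _ => sq_nonneg _) (Finset.mem_univ j)).trans
    (Finset.single_le_sum (f := fun i => ∑ j, pder i (pder j u) y ^ 2)
      (fun _ _ => Finset.sum_nonneg fun _ _ => sq_nonneg _) (Finset.mem_univ i)))

theorem enorm_le_enorm_of_abs_le {a b : ℝ} (h : |a| ≤ b) : ‖a‖ₑ ≤ ‖b‖ₑ := by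
  rw [enorm_le_iff_norm_le, Real.norm_eq_abs, Real.norm_eq_abs]
  exact h.trans (le_abs_self b)

section Decay

variable {n : ℕ} {Ω : Set (Euc (n + 1))} {p q : ℝ}

/-- Decay at the boundary of a function whose data vanish and whose gradient has an `L^q`
nontangential maximal function. -/
theorem IsLipschitzDomain.exists_layerBound_dirichlet (hΩ : IsLipschitzDomain Ω)
    (hqp : q.HolderConjugate p) {u : Euc (n + 1) → ℝ} (hu : ContDiffOn ℝ (⊤ : ℕ∞) u Ω)
    (hmax : ntMaxLp Ω (gnorm1 u) q < ⊤)
    (hnt : ∀ᵐ Q ∂sMeasure Ω, NTLim Ω u Q 0 ∧ ∀ i, NTLim Ω (pder i u) Q 0) :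
    ∃ o o' : ℝ → ℝ≥0∞, Tendsto o (𝓝[>] 0) (𝓝 0) ∧ Tendsto o' (𝓝[>] 0) (𝓝 0) ∧
      LayerBound Ω q 1 (absGrad u) o ∧ LayerBound Ω q (1 + q) u o' := by
  have hc : ∀ i, ContinuousOn (pder i u) Ω := fun i => (contDiffOn_pder hΩ.1 hu i).continuousOn
  have h : ∀ i, ∃ o : ℝ → ℝ≥0∞, Tendsto o (𝓝[>] 0) (𝓝 0) ∧ LayerBound Ω q 1 (pder i u) o :=
    fun i => hΩ.layerBound_of_ntLim_zero hqp.pos (hc i)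
      (fun y _ => enorm_le_enorm_of_abs_le (abs_pder_le_gnorm1 u i y)) hmax
      (hnt.mono fun Q hQ => hQ.2 i)
  choose o ho hob using h
  set O : ℝ → ℝ≥0∞ := fun s => ∑ i, o i s
  have hO : Tendsto O (𝓝[>] 0) (𝓝 0) := by
    simpa using tendsto_finsetSum Finset.univ fun i _ => ho i
  have hOb : ∀ i, LayerBound Ω q 1 (pder i u) O := fun i => (hob i).mono_right fun s =>
    Finset.single_le_sum (f := fun i => o i s) (fun _ _ => zero_le) (Finset.mem_univ i)
  obtain ⟨A, K, hA, hK, hardy⟩ := hΩ.exists_layerBound_of_pder hqp 1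
  refine ⟨_, _, ?_, ?_, LayerBound.sum_abs hΩ.1 hqp.lt.le hc hOb,
    hardy u O hu (hnt.mono fun Q hQ => hQ.1) hOb⟩
  · have := ENNReal.Tendsto.const_mul
      (a := (Fintype.card (Fin (n + 1)) : ℝ≥0∞) ^ (q - 1) * Fintype.card (Fin (n + 1))) hO
      (Or.inr (ENNReal.mul_ne_top (ENNReal.rpow_ne_top_of_nonneg (by linarith [hqp.lt])
        (ENNReal.natCast_ne_top _)) (ENNReal.natCast_ne_top _)))
    rwa [mul_zero] at this
  · have := ENNReal.Tendsto.const_mul (a := A) (hO.comp (tendsto_const_mul_nhdsGT_zero hK))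
      (Or.inr hA)
    rwa [mul_zero] at this

/-- Growth at the boundary of the difference of a smooth function `Γ` and a function `W` with
the same data, whose Hessian has an `L^p` nontangential maximal function. -/
theorem IsLipschitzDomain.exists_layerBound_regularity (hΩ : IsLipschitzDomain Ω)
    (hpq : p.HolderConjugate q) {Γ W : Euc (n + 1) → ℝ} (hΓ : ContDiff ℝ (⊤ : ℕ∞) Γ)
    (hW : ContDiffOn ℝ (⊤ : ℕ∞) W Ω) (hmax : ntMaxLp Ω (gnorm2 W) p < ⊤)
    (hnt : HasBVals1 Ω W Γ) :
    ∃ A : ℝ≥0∞, A ≠ ⊤ ∧ LayerBound Ω p 1 (absHess fun y => Γ y - W y) (fun _ => A) ∧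
      LayerBound Ω p (1 + p) (absGrad fun y => Γ y - W y) (fun _ => A) ∧
      LayerBound Ω p (1 + p + p) (fun y => Γ y - W y) (fun _ => A) := by
  set G : Euc (n + 1) → ℝ := fun y => Γ y - W y with hGdef
  have hG : ContDiffOn ℝ (⊤ : ℕ∞) G Ω := hΓ.contDiffOn.sub hW
  have hG1 : ∀ i, ContDiffOn ℝ (⊤ : ℕ∞) (pder i G) Ω := contDiffOn_pder hΩ.1 hG
  have hG2 : ∀ i j, ContinuousOn (pder i (pder j G)) Ω := fun i j =>
    (contDiffOn_pder hΩ.1 (hG1 j) i).continuousOn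
  have hdiff : ∀ {f : Euc (n + 1) → ℝ}, ContDiffOn ℝ (⊤ : ℕ∞) f Ω → ∀ y ∈ Ω,
      DifferentiableAt ℝ f y := fun hf y hy =>
    (hf.contDiffAt (hΩ.1.mem_nhds hy)).differentiableAt (by simp)
  have e1 : ∀ i, ∀ y ∈ Ω, pder i G y = pder i Γ y - pder i W y := fun i y hy =>
    pder_sub (differentiable_of_smooth hΓ y) (hdiff hW y hy) i
  have e2 : ∀ i j, ∀ y ∈ Ω, pder i (pder j G) y = pder i (pder j Γ) y - pder i (pder j W) y := by
    intro i j y hy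
    have : pder j G =ᶠ[𝓝 y] fun z => pder j Γ z - pder j W z := by
      filter_upwards [hΩ.1.mem_nhds hy] with z hz using e1 j z hz
    rw [(this.pder i).eq_of_nhds]
    exact pder_sub (differentiable_of_smooth (contDiff_pder hΓ j) y)
      (hdiff (contDiffOn_pder hΩ.1 hW j) y hy) i
  have hcone : ∀ {f g : Euc (n + 1) → ℝ} {Q : Euc (n + 1)}, Continuous f → NTLim Ω g Q (f Q) →
      NTLim Ω (fun y => f y - g y) Q 0 := fun {f g Q} hf hg => by
    have := (hf.tendsto Q |>.mono_left nhdsWithin_le_nhds).sub hg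
    rwa [sub_self] at this
  have hnt0 : ∀ᵐ Q ∂sMeasure Ω, NTLim Ω G Q 0 :=
    hnt.mono fun Q hQ => hcone hΓ.continuous hQ.1
  have hnt1 : ∀ i, ∀ᵐ Q ∂sMeasure Ω, NTLim Ω (pder i G) Q 0 := fun i => hnt.mono fun Q hQ => by
    refine (hcone (contDiff_pder hΓ i).continuous (hQ.2 i)).congr' ?_
    filter_upwards [self_mem_nhdsWithin] with y hy
    exact (e1 i y hy.1).symm
  have hcpt : IsCompact (closure Ω) := hΩ.2.1.isCompact_closure
  have h : ∀ i j, ∃ A : ℝ≥0∞, A ≠ ⊤ ∧ LayerBound Ω p 1 (pder i (pder j G)) fun _ => A := by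
    intro i j
    obtain ⟨B, hB⟩ := hcpt.exists_bound_of_continuousOn
      (contDiff_pder (contDiff_pder hΓ j) i).continuous.continuousOn
    refine hΩ.layerBound_of_ntMaxLp hpq.lt.le (hG2 i j) (B := ENNReal.ofReal B)
      ENNReal.ofReal_ne_top (fun y hy => ?_) hmax
    rw [e2 i j y hy, add_comm ‖gnorm2 W y‖ₑ]
    refine (enorm_sub_le).trans (add_le_add ?_
      (enorm_le_enorm_of_abs_le (abs_pder_pder_le_gnorm2 W i j y)))
    rw [← ofReal_norm]
    exact ENNReal.ofReal_le_ofReal (hB y (subset_closure hy))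
  choose A hA hAb using h
  set A₀ : ℝ≥0∞ := ∑ i, ∑ j, A i j
  have hA₀ : A₀ ≠ ⊤ := ENNReal.sum_ne_top.2 fun i _ => ENNReal.sum_ne_top.2 fun j _ => hA i j
  have hAb' : ∀ i j, LayerBound Ω p 1 (pder i (pder j G)) fun _ => A₀ := fun i j =>
    (hAb i j).mono_right fun _ => (Finset.single_le_sum (f := fun j => A i j)
      (fun _ _ => zero_le) (Finset.mem_univ j)).trans
      (Finset.single_le_sum (f := fun i => ∑ j, A i j) (fun _ _ => zero_le) (Finset.mem_univ i))
  obtain ⟨A₁, K₁, hA₁, -, hardy₁⟩ := hΩ.exists_layerBound_of_pder hpq 1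
  obtain ⟨A₂, K₂, hA₂, -, hardy₂⟩ := hΩ.exists_layerBound_of_pder hpq (1 + p)
  have hb1 : ∀ j, LayerBound Ω p (1 + p) (pder j G) fun _ => A₁ * A₀ := fun j =>
    hardy₁ (pder j G) _ (hG1 j) (hnt1 j) fun i => hAb' i j
  have hb0 : LayerBound Ω p (1 + p + p) G fun _ => A₂ * (A₁ * A₀) := hardy₂ G _ hG hnt0 hb1
  have hs2 := LayerBound.sum_abs (ι := Fin (n + 1) × Fin (n + 1)) hΩ.1 hpq.lt.le
    (f := fun ij => pder ij.1 (pder ij.2 G)) (fun ij => hG2 ij.1 ij.2) fun ij => hAb' ij.1 ij.2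
  have hs1 := LayerBound.sum_abs hΩ.1 hpq.lt.le (fun j => (hG1 j).continuousOn) hb1
  have hcard : ∀ N : ℕ, ((N : ℝ≥0∞) ^ (p - 1) * N) ≠ ⊤ := fun N =>
    ENNReal.mul_ne_top (ENNReal.rpow_ne_top_of_nonneg (by linarith [hpq.lt])
      (ENNReal.natCast_ne_top _)) (ENNReal.natCast_ne_top _)
  simp only [Fintype.sum_prod_type] at hs2
  set S₂ : ℝ≥0∞ := (Fintype.card (Fin (n + 1) × Fin (n + 1)) : ℝ≥0∞) ^ (p - 1) *
    (Fintype.card (Fin (n + 1) × Fin (n + 1)) : ℕ) * A₀ with hS₂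
  set S₁ : ℝ≥0∞ := (Fintype.card (Fin (n + 1)) : ℝ≥0∞) ^ (p - 1) *
    (Fintype.card (Fin (n + 1)) : ℕ) * (A₁ * A₀) with hS₁
  have hA₁₀ := ENNReal.mul_ne_top hA₁ hA₀
  refine ⟨S₂ + (S₁ + A₂ * (A₁ * A₀)), ?_, hs2.mono_right fun _ => le_self_add,
    hs1.mono_right fun _ => le_self_add.trans le_add_self,
    hb0.mono_right fun _ => le_add_self.trans le_add_self⟩
  exact ENNReal.add_ne_top.2 ⟨ENNReal.mul_ne_top (hcard _) hA₀, ENNReal.add_ne_top.2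
    ⟨ENNReal.mul_ne_top (hcard _) hA₁₀, ENNReal.mul_ne_top hA₂ hA₁₀⟩⟩

end Decay

theorem IsLipschitzDomain.infDist_frontier_pos {n : ℕ} {Ω : Set (Euc (n + 1))}
    (hΩ : IsLipschitzDomain Ω) {x : Euc (n + 1)} (hx : x ∈ Ω) : 0 < infDist x (frontier Ω) := by
  have hne : (frontier Ω).Nonempty := nonempty_frontier_iff.2 ⟨⟨x, hx⟩, fun h =>
    NormedSpace.unbounded_univ ℝ (Euc (n + 1)) (h ▸ hΩ.2.1)⟩
  refine (isClosed_frontier.notMem_iff_infDist_pos hne).1 fun h => ?_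
  rw [hΩ.1.frontier_eq] at h
  exact h.2 hx

/-- A function with the boundary data of the fundamental solution also has the data of any smooth
function agreeing with it away from the pole. -/
theorem HasBVals1.congr_fundSol {Ω : Set (Euc d)} {c : ℝ} {x : Euc d} {W Γ : Euc d → ℝ}
    (h : HasBVals1 Ω W fun y => fundSol d c (y - x)) (hx : 0 < infDist x (frontier Ω))
    (hΓ : ∀ y, infDist x (frontier Ω) / 2 ≤ dist y x → Γ y = fundSol d c (y - x)) :
    HasBVals1 Ω W Γ := by
  filter_upwards [h, ae_restrict_mem isClosed_frontier.measurableSet] with Q hQ hQΩ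
  have hd : infDist x (frontier Ω) / 2 < dist Q x := by
    have := infDist_le_dist_of_mem (x := x) hQΩ
    rw [dist_comm] at this
    linarith
  have heq : (fun y => fundSol d c (y - x)) =ᶠ[𝓝 Q] Γ := by
    filter_upwards [(continuous_id.dist continuous_const).continuousAt.eventually
      (lt_mem_nhds hd)] with y hy
    exact (hΓ y (le_of_lt hy)).symm
  refine ⟨heq.eq_of_nhds ▸ hQ.1, fun i => ?_⟩
  rw [← (heq.pder i).eq_of_nhds]
  exact hQ.2 i

/-- Theorem 3.2: if for each pole `x ∈ Ω` the `L^p` regularity problem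
with boundary data `D^α Γ^x`, `|α| ≤ 1`, has a solution, then solutions of the `L^q`
Dirichlet problem are unique. -/
theorem dirichlet_uniqueness
    (d : ℕ) (hd : 2 ≤ d) (Ω : Set (Euc d)) (hΩ : IsLipschitzDomain Ω)
    (p q : ℝ) (hp : 1 < p) (hpq : 1 / p + 1 / q = 1) (c : ℝ) (hc : c ≠ 0)
    (hW : ∀ x ∈ Ω, ∃ W : Euc d → ℝ, Biharmonic Ω W ∧ ntMaxLp Ω (gnorm2 W) p < ⊤ ∧
      HasBVals1 Ω W (fun y => fundSol d c (y - x))) :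
    ∀ u : Euc d → ℝ, Biharmonic Ω u → ntMaxLp Ω (gnorm1 u) q < ⊤ →
      HasBVals1 Ω u (fun _ => 0) → ∀ y ∈ Ω, u y = 0 := by
  intro u hu hmax hbv x hx
  obtain ⟨n, rfl⟩ : ∃ n, d = n + 1 := ⟨d - 1, by omega⟩
  have hpq' : p.HolderConjugate q := Real.holderConjugate_iff.2 ⟨hp, by simpa using hpq⟩
  obtain ⟨W, hWb, hWmax, hWbv⟩ := hW x hx
  obtain ⟨c₀, hc₀, hrep⟩ := integral_fundSol_mul_bilap hd hc
  have hδ := hΩ.infDist_frontier_pos hx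
  set δ := infDist x (frontier Ω) with hδdef
  obtain ⟨Γ, hΓ, hΓeq⟩ := exists_smooth_eq_fundSol hd hc x (half_pos hδ)
  obtain ⟨A, hA, hG2, hG1, hG0⟩ := hΩ.exists_layerBound_regularity hpq' hΓ hWb.1 hWmax
    (hWbv.congr_fundSol hδ hΓeq)
  simp only [HasBVals1, pder_const] at hbv
  obtain ⟨o, o', ho, ho', hu1, hu0⟩ := hΩ.exists_layerBound_dirichlet hpq'.symm hu.1 hmax hbv
  set G : Euc (n + 1) → ℝ := fun y => Γ y - W y with hGdef
  have hG : ContDiffOn ℝ (⊤ : ℕ∞) G Ω := hΓ.contDiffOn.sub hWb.1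
  have hcg : ∀ {f : Euc (n + 1) → ℝ}, ContDiffOn ℝ (⊤ : ℕ∞) f Ω → ContinuousOn (absGrad f) Ω :=
    fun hf => continuousOn_finsetSum _ fun i _ => (contDiffOn_pder hΩ.1 hf i).continuousOn.abs
  have hch : ContinuousOn (absHess G) Ω := continuousOn_finsetSum _ fun i _ =>
    continuousOn_finsetSum _ fun j _ =>
      (contDiffOn_pder hΩ.1 (contDiffOn_pder hΩ.1 hG j) i).continuousOn.abs
  have hpne := hpq'.ne_zero
  have hqne := hpq'.symm.ne_zero
  have t₁ := tendsto_inv_pow_mul_comp_two_mul (LayerBound.tendsto_mul hΩ.1 hpq' hch (hcg hu.1)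
    hA ho hG2 hu1 (k := 1) (by simpa using hpq))
  have t₂ := tendsto_inv_pow_mul_comp_two_mul (LayerBound.tendsto_mul hΩ.1 hpq' hch
    hu.1.continuousOn hA ho' hG2 hu0 (k := 2)
    (by rw [add_div, div_self hqne]; push_cast; linarith))
  have t₃ := tendsto_inv_pow_mul_comp_two_mul (LayerBound.tendsto_mul hΩ.1 hpq' (hcg hG)
    (hcg hu.1) hA ho hG1 hu1 (k := 2)
    (by rw [add_div, div_self hpne]; push_cast; linarith))
  have t₄ := tendsto_inv_pow_mul_comp_two_mul (LayerBound.tendsto_mul hΩ.1 hpq' hG.continuousOn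
    (hcg hu.1) hA ho hG0 hu1 (k := 3)
    (by rw [add_div, add_div, div_self hpne]; push_cast; linarith))
  obtain ⟨C, hC, hcut⟩ := exists_cutoff (n + 1)
  have hlim := ENNReal.Tendsto.const_mul (a := ENNReal.ofReal (((n + 1 : ℕ) + 4) * C))
    (((t₁.add t₂).add t₃).add t₄) (Or.inr ENNReal.ofReal_ne_top)
  simp only [add_zero, mul_zero] at hlim
  have hle : ‖c₀ * u x‖ₑ ≤ 0 := by
    refine ge_of_tendsto hlim ?_
    filter_upwards [Ioo_mem_nhdsGT (by positivity : 0 < δ / 4)] with ε hε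
    obtain ⟨φ, hφ, hcφ, hsφ, hφ1, h₁, h₂, h₃⟩ := hcut Ω hΩ.1 hΩ.2.1 ε hε.1
    obtain ⟨χ, hχ, hcχ, hsχ, hχ1, -⟩ := hcut Ω hΩ.1 hΩ.2.1 (ε / 2) (half_pos hε.1)
    have hφΩ : tsupport φ ⊆ Ω := fun y hy => (hsφ hy).1
    have hχΩ : tsupport χ ⊆ Ω := fun y hy => (hsχ hy).1
    have hχφ : ∀ y ∈ tsupport φ, χ =ᶠ[𝓝 y] fun _ => 1 := fun y hy =>
      hχ1 y (hφΩ hy) (by rw [mul_div_cancel₀ _ two_ne_zero]; exact (hsφ hy).2)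
    have hball : ∀ y, dist y x < δ / 2 → φ =ᶠ[𝓝 y] fun _ => 1 := fun y hy => by
      refine hφ1 y (mem_of_dist_lt_infDist_frontier hΩ.1 hx (by linarith)) ?_
      have := infDist_le_infDist_add_dist (s := frontier Ω) (x := x) (y := y)
      rw [dist_comm] at this
      linarith [hε.2]
    rw [← integral_commInt_eq hΩ.1 (hrep x) hΓ hWb hu hφ hcφ hφΩ hχ hcχ hχΩ hχφ
      (hball x (by rw [dist_self]; positivity))
      fun y hy => hball y (not_le.1 fun h => hy (hΓeq y h))]
    exact enorm_integral_commInt_le hΩ.1 hε.1 hC hG hu.1 hφ hφΩ hφ1 h₁ h₂ h₃ hχ hχΩ hχφ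
  have : c₀ * u x = 0 := by simpa using hle
  exact (mul_eq_zero.1 this).resolve_left hc₀

end
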